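/- arXiv:1310.6711 — 2 statements merged into one kernel-verified Lean document; each statement's English description precedes it below -/
import Mathlib

section
/- Let n ≥ 2, let σ ∈ (−∞, 1/2) ∪ (1, +∞), and let Ω = ℝⁿ \ Ḡ, where G is a convex domain in ℝⁿ. Let u be a solution of the Lamé system Δu + (1−2σ)^{−1} grad div u = 0 in Ω of class C²(Ω) ∩ C_b(Ω̄). Then for every point x ∈ Ω, |div u(x)| ≤ ((1−2σ) E_n / ((3−4σ) d_x)) · sup_Ω |u|, where E_n = (4 ω_{n−1} / ω_n) ∫₀^{π/2} [1 + n(n−2) cos²θ]^{1/2} sin^{n−2}θ dθ. -/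
open MeasureTheory Real Filter Metric
open scoped Real RealInnerProductSpace

noncomputable section

/-- `Eu n` is the Euclidean space `ℝⁿ`. -/
abbrev Eu (n : ℕ) := EuclideanSpace ℝ (Fin n)

/-- `ω_n`: the surface area of the unit sphere `S^{n-1}` in `ℝⁿ`,
given by the classical formula `2 π^{n/2} / Γ(n/2)`. -/
def sphereArea (n : ℕ) : ℝ := 2 * π ^ ((n : ℝ) / 2) / Real.Gamma ((n : ℝ) / 2)

/-- The divergence `div u(x) = ∑ⱼ ∂uⱼ/∂xⱼ (x)` of a vector field `u : ℝⁿ → ℝⁿ`. -/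
def divg {n : ℕ} (u : Eu n → Eu n) (x : Eu n) : ℝ :=
  ∑ j, fderiv ℝ (fun y => u y j) x (EuclideanSpace.single j 1)

/-- The Laplacian of a scalar function at a point: the sum of the pure second
partial derivatives in the coordinate directions. -/
def lapl {n : ℕ} (u : Eu n → ℝ) (x : Eu n) : ℝ :=
  ∑ i, fderiv ℝ (fun y => fderiv ℝ u y (EuclideanSpace.single i 1)) x
    (EuclideanSpace.single i 1)

/-- The constant `E_n = (4 ω_{n-1}/ω_n) ∫₀^{π/2} (1 + n(n-2) cos²θ)^{1/2} sin^{n-2}θ dθ`. -/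
def Econst (n : ℕ) : ℝ :=
  (4 * sphereArea (n - 1) / sphereArea n) *
    ∫ θ in (0:ℝ)..(π / 2),
      Real.sqrt (1 + (n : ℝ) * ((n : ℝ) - 2) * Real.cos θ ^ 2) * Real.sin θ ^ (n - 2)

/-- partial derivative -/
def pd {n : ℕ} (i : Fin n) (f : Eu n → ℝ) (y : Eu n) : ℝ :=
  fderiv ℝ f y (EuclideanSpace.single i 1)

theorem pd_add {n : ℕ} (i : Fin n) {f g : Eu n → ℝ} {y : Eu n}
    (hf : DifferentiableAt ℝ f y) (hg : DifferentiableAt ℝ g y) :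
    pd i (fun z => f z + g z) y = pd i f y + pd i g y := by
  simp [pd, fderiv_fun_add hf hg]

theorem pd_sub {n : ℕ} (i : Fin n) {f g : Eu n → ℝ} {y : Eu n}
    (hf : DifferentiableAt ℝ f y) (hg : DifferentiableAt ℝ g y) :
    pd i (fun z => f z - g z) y = pd i f y - pd i g y := by
  simp [pd, fderiv_fun_sub hf hg]

theorem pd_mul {n : ℕ} (i : Fin n) {f g : Eu n → ℝ} {y : Eu n}
    (hf : DifferentiableAt ℝ f y) (hg : DifferentiableAt ℝ g y) :
    pd i (fun z => f z * g z) y = pd i f y * g y + f y * pd i g y := by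
  simp [pd, fderiv_fun_mul hf hg]; ring

theorem pd_const_mul {n : ℕ} (i : Fin n) (c : ℝ) {f : Eu n → ℝ} {y : Eu n}
    (hf : DifferentiableAt ℝ f y) :
    pd i (fun z => c * f z) y = c * pd i f y := by
  simp [pd, fderiv_const_mul hf]

theorem pd_sum {n : ℕ} {ι : Type*} (s : Finset ι) (i : Fin n) {f : ι → Eu n → ℝ} {y : Eu n}
    (hf : ∀ j ∈ s, DifferentiableAt ℝ (f j) y) :
    pd i (fun z => ∑ j ∈ s, f j z) y = ∑ j ∈ s, pd i (f j) y := by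
  simp [pd, fderiv_fun_sum hf]

theorem pd_congr {n : ℕ} (i : Fin n) {f g : Eu n → ℝ} {y : Eu n}
    (h : f =ᶠ[nhds y] g) : pd i f y = pd i g y := by
  simp [pd, h.fderiv_eq]

theorem pd_congr_ev {n : ℕ} (i : Fin n) {f g : Eu n → ℝ} {y : Eu n}
    (h : f =ᶠ[nhds y] g) : pd i f =ᶠ[nhds y] pd i g := by
  filter_upwards [h.eventuallyEq_nhds] with z hz using pd_congr i hz

theorem contDiff_pd {n : ℕ} (i : Fin n) {f : Eu n → ℝ} {a b : WithTop ℕ∞}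
    (hf : ContDiff ℝ b f) (hab : a + 1 ≤ b) : ContDiff ℝ a (pd i f) :=
  (hf.fderiv_right hab).clm_apply contDiff_const

theorem contDiffAt_pd {n : ℕ} (i : Fin n) {f : Eu n → ℝ} {a b : WithTop ℕ∞} {y : Eu n}
    (hf : ContDiffAt ℝ b f y) (hab : a + 1 ≤ b) : ContDiffAt ℝ a (pd i f) y :=
  (hf.fderiv_right hab).clm_apply contDiffAt_const

theorem pd_comm {n : ℕ} (i j : Fin n) {f : Eu n → ℝ} {y : Eu n}
    (hf : ContDiffAt ℝ 2 f y) : pd i (pd j f) y = pd j (pd i f) y := by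
  have hd : DifferentiableAt ℝ (fderiv ℝ f) y :=
    (hf.fderiv_right (m := 1) (by norm_num)).differentiableAt (by norm_num)
  have h : ∀ a b : Fin n, pd a (pd b f) y =
      fderiv ℝ (fderiv ℝ f) y (EuclideanSpace.single a 1) (EuclideanSpace.single b 1) := by
    intro a b
    unfold pd
    rw [fderiv_clm_apply hd (differentiableAt_const _)]
    simp
  rw [h, h]
  exact (hf.isSymmSndFDerivAt (by simp)).eq _ _

theorem pd_shift {n : ℕ} (i : Fin n) (f : Eu n → ℝ) (a y : Eu n) :
    pd i (fun z => f (z + a)) y = pd i f (y + a) := by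
  simp [pd, fderiv_comp_add_right]

theorem pd_coord {n : ℕ} (i j : Fin n) (y : Eu n) :
    pd i (fun z => z j) y = if i = j then 1 else 0 := by
  have : (fun z : Eu n => z j) = (EuclideanSpace.proj j : Eu n →L[ℝ] ℝ) := rfl
  unfold pd
  rw [this, ContinuousLinearMap.fderiv]
  simp [eq_comm]

theorem lapl_eq {n : ℕ} (f : Eu n → ℝ) (y : Eu n) : lapl f y = ∑ i, pd i (pd i f) y := rfl

theorem divg_eq {n : ℕ} (u : Eu n → Eu n) (y : Eu n) :
    divg u y = ∑ i, pd i (fun z => u z i) y := rfl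



/-- boundary point -/
def bd {N : ℕ} (y : Fin N → ℝ) : Eu (N + 1) := WithLp.toLp 2 (Fin.cons 0 y : Fin (N + 1) → ℝ)

theorem abs_coord_le {n : ℕ} (y : Eu n) (i : Fin n) : |y i| ≤ ‖y‖ := by
  simpa using PiLp.norm_apply_le y i

/-- closed half space -/
def HS (N : ℕ) : Set (Eu (N + 1)) := {y | 0 ≤ y 0}

theorem measurableSet_HS (N : ℕ) : MeasurableSet (HS N) := by
  apply IsClosed.measurableSet
  apply isClosed_le continuous_const
  fun_prop

theorem pd_eq_zero_of_ge {n : ℕ} {f : Eu n → ℝ} {R : ℝ} (h0 : ∀ y, R ≤ ‖y‖ → f y = 0)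
    (i : Fin n) {y : Eu n} (hy : R < ‖y‖) : pd i f y = 0 := by
  have : f =ᶠ[nhds y] fun _ => 0 := by
    have : ∀ᶠ z in nhds y, R < ‖z‖ := continuous_norm.continuousAt.eventually (lt_mem_nhds hy)
    filter_upwards [this] with z hz using h0 z hz.le
  rw [pd_congr i this]
  simp [pd]

theorem div_half {N : ℕ} (F : Fin (N + 1) → Eu (N + 1) → ℝ) (hF : ∀ i, ContDiff ℝ 1 (F i))
    (R : ℝ) (hR : 0 < R) (h0 : ∀ i y, R ≤ ‖y‖ → F i y = 0) :
    ∫ y in HS N, ∑ i, pd i (F i) y = - ∫ y' : Fin N → ℝ, F 0 (bd y') := by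
  let a : Fin (N + 1) → ℝ := Fin.cons 0 (fun _ => -R)
  let b : Fin (N + 1) → ℝ := fun _ => R
  have ha0 : a 0 = 0 := rfl
  have ha : ∀ i, a i = 0 ∧ i = 0 ∨ a i = -R := by
    intro i
    refine Fin.cases ?_ ?_ i
    · left; simp [a]
    · intro j; right; simp [a]
  have hle : a ≤ b := by
    intro i
    rcases ha i with h | h
    · rw [h.1]; exact hR.le
    · rw [h]; simp only [b]; linarith
  let eL := (PiLp.continuousLinearEquiv 2 ℝ (fun _ : Fin (N + 1) => ℝ)).symm
  have heL : ∀ z, eL z = WithLp.toLp 2 z := fun z => rfl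
  have key := integral_divergence_of_hasFDerivAt_off_countable' a b hle
    (fun i z => F i (WithLp.toLp 2 z))
    (fun i z => (fderiv ℝ (F i) (WithLp.toLp 2 z)).comp (eL : (Fin (N + 1) → ℝ) →L[ℝ] _))
    ∅ Set.countable_empty
    (fun i => ((hF i).continuous.comp (PiLp.continuous_toLp 2 _)).continuousOn)
    (by
      intro z _ i
      have h1 : HasFDerivAt (F i) (fderiv ℝ (F i) (eL z)) (eL z) :=
        ((hF i).differentiable (by norm_num) _).hasFDerivAt
      exact h1.comp z eL.hasFDerivAt)
    (by
      apply ContinuousOn.integrableOn_compact isCompact_Icc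
      apply Continuous.continuousOn
      apply continuous_finsetSum
      intro i _
      have h1 : Continuous (fun z : Fin (N + 1) → ℝ => fderiv ℝ (F i) (eL z)) :=
        ((hF i).continuous_fderiv (by norm_num)).comp eL.continuous
      exact h1.clm_apply continuous_const)
  have hl : (∫ y in HS N, ∑ i, pd i (F i) y) =
      ∫ x in Set.Icc a b, ∑ i, ((fderiv ℝ (F i) (WithLp.toLp 2 x)).comp
        (eL : (Fin (N + 1) → ℝ) →L[ℝ] _)) (Pi.single i 1) := by
    rw [← (PiLp.volume_preserving_toLp (Fin (N + 1))).setIntegral_preimage_emb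
      (MeasurableEquiv.toLp 2 (Fin (N + 1) → ℝ)).measurableEmbedding]
    rw [← setIntegral_eq_of_subset_of_forall_sdiff_eq_zero
      (s := Set.Icc a b) (t := WithLp.toLp 2 ⁻¹' (HS N))]
    · rfl
    · exact (PiLp.volume_preserving_toLp (Fin (N + 1))).measurable (measurableSet_HS N)
    · intro z hz
      have := hz.1 0
      rw [ha0] at this
      exact this
    · intro z hz
      have hz1 : 0 ≤ z 0 := hz.1
      have : R < ‖(WithLp.toLp 2 z : Eu (N + 1))‖ := by
        by_contra hcon
        push Not at hcon
        apply hz.2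
        have h1 : ∀ i, |z i| ≤ R := fun i =>
          (abs_coord_le (WithLp.toLp 2 z : Eu (N + 1)) i).trans hcon
        constructor
        · intro i
          rcases ha i with h | h
          · rw [h.1, h.2]; exact hz1
          · rw [h]; exact (abs_le.1 (h1 i)).1
        · intro i
          exact (abs_le.1 (h1 i)).2
      apply Finset.sum_eq_zero
      intro i _
      exact pd_eq_zero_of_ge (h0 i) i this
  rw [hl, key, Finset.sum_eq_single 0]
  · have h1 : ∀ x : Fin N → ℝ, F 0 (WithLp.toLp 2 (Fin.insertNth 0 (b 0) x)) = 0 := by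
      intro x
      apply h0
      have := abs_coord_le (WithLp.toLp 2 (Fin.insertNth 0 (b 0) x) : Eu (N + 1)) 0
      simp only [Fin.insertNth_apply_same] at this
      exact (le_abs_self _).trans this
    simp only [h1, integral_zero, zero_sub]
    congr 1
    rw [setIntegral_eq_integral_of_forall_compl_eq_zero]
    · apply integral_congr_ae
      filter_upwards with x
      simp [bd, ha0]
    · intro x hx
      apply h0
      by_contra hcon
      push Not at hcon
      apply hx
      have h2 : ∀ i : Fin N, |x i| ≤ R := by
        intro i
        have := (abs_coord_le (WithLp.toLp 2 (Fin.insertNth 0 (a 0) x) : Eu (N + 1)) i.succ).trans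
          hcon.le
        simpa using this
      constructor
      · intro i
        simpa [a] using (abs_le.1 (h2 i)).1
      · intro i
        simpa [b] using (abs_le.1 (h2 i)).2
  · intro i _ hi
    have hai : a i = -R := by
      rcases ha i with h | h
      · exact absurd h.2 hi
      · exact h
    have h1 : ∀ x : Fin N → ℝ, F i (WithLp.toLp 2 (Fin.insertNth i (b i) x)) = 0 := by
      intro x
      apply h0
      have := abs_coord_le (WithLp.toLp 2 (Fin.insertNth i (b i) x) : Eu (N + 1)) i
      simp only [Fin.insertNth_apply_same] at this
      exact (le_abs_self _).trans this
    have h2 : ∀ x : Fin N → ℝ, F i (WithLp.toLp 2 (Fin.insertNth i (a i) x)) = 0 := by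
      intro x
      apply h0
      have := abs_coord_le (WithLp.toLp 2 (Fin.insertNth i (a i) x) : Eu (N + 1)) i
      simp only [Fin.insertNth_apply_same, hai, abs_neg] at this
      rw [hai]
      exact (le_abs_self _).trans this
    simp only [h1, h2, integral_zero, sub_self]
  · simp



/-- divergence of a family -/
def dvg {n : ℕ} (g : Fin n → Eu n → ℝ) (y : Eu n) : ℝ := ∑ j, pd j (g j) y

/-- Lame operator on a family -/
def Lop {n : ℕ} (k : ℝ) (g : Fin n → Eu n → ℝ) (i : Fin n) (y : Eu n) : ℝ :=
  lapl (g i) y + k * pd i (dvg g) y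

theorem contDiff_dvg {n : ℕ} {g : Fin n → Eu n → ℝ} {a b : WithTop ℕ∞}
    (hg : ∀ i, ContDiff ℝ b (g i)) (hab : a + 1 ≤ b) : ContDiff ℝ a (dvg g) :=
  ContDiff.sum fun j _ => contDiff_pd j (hg j) hab

theorem green {N : ℕ} (k : ℝ) (u g : Fin (N + 1) → Eu (N + 1) → ℝ)
    (hu : ∀ i, ContDiff ℝ 2 (u i)) (hg : ∀ i, ContDiff ℝ 2 (g i))
    (R : ℝ) (hR : 0 < R) (h0 : ∀ i y, R ≤ ‖y‖ → g i y = 0)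
    (hb : ∀ i y', g i (bd y') = 0) :
    ∫ y in HS N, ∑ i, (g i y * Lop k u i y - u i y * Lop k g i y) =
      ∫ y' : Fin N → ℝ, (∑ i, u i (bd y') * pd 0 (g i) (bd y')
        + k * (u 0 (bd y') * dvg g (bd y'))) := by
  have e2 : (1 : WithTop ℕ∞) + 1 ≤ 2 := by norm_num
  have hu1 : ∀ i, ContDiff ℝ 1 (u i) := fun i => (hu i).of_le (by norm_num)
  have hg1 : ∀ i, ContDiff ℝ 1 (g i) := fun i => (hg i).of_le (by norm_num)
  have hpu : ∀ i j, ContDiff ℝ 1 (pd i (u j)) := fun i j => contDiff_pd i (hu j) e2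
  have hpg : ∀ i j, ContDiff ℝ 1 (pd i (g j)) := fun i j => contDiff_pd i (hg j) e2
  have hdu : ContDiff ℝ 1 (dvg u) := contDiff_dvg hu e2
  have hdg : ContDiff ℝ 1 (dvg g) := contDiff_dvg hg e2
  have dd : ∀ {f : Eu (N + 1) → ℝ}, ContDiff ℝ 1 f → ∀ y, DifferentiableAt ℝ f y :=
    fun h y => (h.differentiable (by norm_num)) y
  have key := div_half (N := N)
    (fun i y => ∑ j, (g j y * pd i (u j) y - u j y * pd i (g j) y)
      + k * (g i y * dvg u y - u i y * dvg g y))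
    (by
      intro i
      apply ContDiff.add
      · apply ContDiff.sum
        intro j _
        exact ((hg1 j).mul (hpu i j)).sub ((hu1 j).mul (hpg i j))
      · exact contDiff_const.mul (((hg1 i).mul hdu).sub ((hu1 i).mul hdg)))
    (R + 1) (by linarith)
    (by
      intro i y hy
      have hy1 : R ≤ ‖y‖ := by linarith
      have hp : ∀ a b, pd a (g b) y = 0 := fun a b =>
        pd_eq_zero_of_ge (h0 b) a (by linarith)
      simp [h0 _ y hy1, hp, dvg])
  have hL : ∀ y, ∑ i, pd i (fun y => ∑ j, (g j y * pd i (u j) y - u j y * pd i (g j) y)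
      + k * (g i y * dvg u y - u i y * dvg g y)) y
      = ∑ i, (g i y * Lop k u i y - u i y * Lop k g i y) := by
    intro y
    have h1 : ∀ i, pd i (fun y => ∑ j, (g j y * pd i (u j) y - u j y * pd i (g j) y)
        + k * (g i y * dvg u y - u i y * dvg g y)) y =
        ∑ j, (g j y * pd i (pd i (u j)) y - u j y * pd i (pd i (g j)) y) +
        k * (pd i (g i) y * dvg u y + g i y * pd i (dvg u) y
          - pd i (u i) y * dvg g y - u i y * pd i (dvg g) y) := by
      intro i
      have hs : ∀ j, ContDiff ℝ 1 (fun y => g j y * pd i (u j) y - u j y * pd i (g j) y) :=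
        fun j => ((hg1 j).mul (hpu i j)).sub ((hu1 j).mul (hpg i j))
      rw [pd_add i (dd (ContDiff.sum fun j _ => hs j) y)
        (dd (contDiff_const.mul (((hg1 i).mul hdu).sub ((hu1 i).mul hdg))) y),
        pd_sum _ _ (fun j _ => dd (hs j) y),
        pd_const_mul i k (dd (((hg1 i).mul hdu).sub ((hu1 i).mul hdg)) y),
        pd_sub i (dd ((hg1 i).mul hdu) y) (dd ((hu1 i).mul hdg) y),
        pd_mul i (dd (hg1 i) y) (dd hdu y), pd_mul i (dd (hu1 i) y) (dd hdg y)]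
      congr 1
      · apply Finset.sum_congr rfl
        intro j _
        rw [pd_sub i (dd ((hg1 j).mul (hpu i j)) y) (dd ((hu1 j).mul (hpg i j)) y),
          pd_mul i (dd (hg1 j) y) (dd (hpu i j) y), pd_mul i (dd (hu1 j) y) (dd (hpg i j) y)]
        ring
      · ring
    simp only [h1]
    rw [Finset.sum_add_distrib, Finset.sum_comm]
    have h3 : ∀ i, g i y * Lop k u i y - u i y * Lop k g i y =
        ∑ j, (g i y * pd j (pd j (u i)) y - u i y * pd j (pd j (g i)) y) +
        k * (g i y * pd i (dvg u) y - u i y * pd i (dvg g) y) := by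
      intro i
      rw [Finset.sum_sub_distrib, ← Finset.mul_sum, ← Finset.mul_sum, ← lapl_eq, ← lapl_eq]
      unfold Lop
      ring
    simp only [h3]
    rw [Finset.sum_add_distrib]
    congr 1
    rw [← Finset.mul_sum, ← Finset.mul_sum]
    congr 1
    have h4 : ∑ i, pd i (g i) y * dvg u y = dvg g y * dvg u y := by
      rw [← Finset.sum_mul]; rfl
    have h5 : ∑ i, pd i (u i) y * dvg g y = dvg u y * dvg g y := by
      rw [← Finset.sum_mul]; rfl
    simp only [Finset.sum_sub_distrib, Finset.sum_add_distrib, h4, h5]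
    ring
  simp only [hL] at key
  rw [key, ← integral_neg]
  congr 1
  ext y'
  simp only [hb]
  simp
  ring



/-- reflection sign -/
def rs {N : ℕ} (i : Fin (N + 1)) : ℝ := if i = 0 then -1 else 1

/-- the test field -/
def Wf {N : ℕ} (k : ℝ) (P S : Fin (N + 1) → Eu (N + 1) → ℝ) (i : Fin (N + 1))
    (y : Eu (N + 1)) : ℝ :=
  (2 + k) * (P i y - rs i * S i y) - 2 * k * (y 0 * pd i (S 0) y)

theorem lapl_of_symm {n : ℕ} {P : Fin n → Eu n → ℝ} (hP : ∀ i, ContDiff ℝ 2 (P i))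
    (hs : ∀ i j, pd i (P j) = pd j (P i)) (i : Fin n) (y : Eu n) :
    lapl (P i) y = pd i (dvg P) y := by
  rw [lapl_eq]
  unfold dvg
  rw [pd_sum]
  · apply Finset.sum_congr rfl
    intro j _
    rw [hs j i, pd_comm j i (hP j).contDiffAt]
  · intro j _
    exact (contDiff_pd j (hP j) (a := 1) (by norm_num)).differentiable (by norm_num) y

theorem contDiff_coord {n : ℕ} {a : WithTop ℕ∞} (j : Fin n) :
    ContDiff ℝ a (fun y : Eu n => y j) :=
  (EuclideanSpace.proj j : Eu n →L[ℝ] ℝ).contDiff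

theorem contDiff_Wf {N : ℕ} (k : ℝ) {P S : Fin (N + 1) → Eu (N + 1) → ℝ}
    (hP : ∀ i, ContDiff ℝ 4 (P i)) (hS : ∀ i, ContDiff ℝ 4 (S i)) (i : Fin (N + 1)) :
    ContDiff ℝ 3 (Wf k P S i) := by
  have hP3 : ContDiff ℝ 3 (P i) := (hP i).of_le (by norm_num)
  have hS3 : ContDiff ℝ 3 (S i) := (hS i).of_le (by norm_num)
  have hm : ContDiff ℝ 3 (pd i (S 0)) := contDiff_pd i (hS 0) (by norm_num)
  exact (contDiff_const.mul (hP3.sub (contDiff_const.mul hS3))).sub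
    (contDiff_const.mul ((contDiff_coord 0).mul hm))

theorem pd_Wf {N : ℕ} (k : ℝ) {P S : Fin (N + 1) → Eu (N + 1) → ℝ}
    (hP : ∀ i, ContDiff ℝ 4 (P i)) (hS : ∀ i, ContDiff ℝ 4 (S i)) (i j : Fin (N + 1))
    (y : Eu (N + 1)) :
    pd j (Wf k P S i) y = (2 + k) * (pd j (P i) y - rs i * pd j (S i) y)
      - 2 * k * ((if j = 0 then 1 else 0) * pd i (S 0) y + y 0 * pd j (pd i (S 0)) y) := by
  have dd : ∀ {f : Eu (N + 1) → ℝ}, ContDiff ℝ 3 f → DifferentiableAt ℝ f y :=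
    fun h => (h.differentiable (by norm_num)) y
  have hP3 : ContDiff ℝ 3 (P i) := (hP i).of_le (by norm_num)
  have hS3 : ContDiff ℝ 3 (S i) := (hS i).of_le (by norm_num)
  have hm : ContDiff ℝ 3 (pd i (S 0)) := contDiff_pd i (hS 0) (by norm_num)
  have hc : ContDiff ℝ 3 (fun y : Eu (N + 1) => y 0) := contDiff_coord 0
  unfold Wf
  rw [pd_sub j (dd (contDiff_const.mul (hP3.sub (contDiff_const.mul hS3))))
    (dd (contDiff_const.mul (hc.mul hm))),
    pd_const_mul j _ (dd (hP3.sub (contDiff_const.mul hS3))),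
    pd_sub j (dd hP3) (dd (contDiff_const.mul hS3)), pd_const_mul j _ (dd hS3),
    pd_const_mul j _ (dd (hc.mul hm)), pd_mul j (dd hc) (dd hm), pd_coord]

theorem dvg_Wf {N : ℕ} (k : ℝ) {P S : Fin (N + 1) → Eu (N + 1) → ℝ}
    (hP : ∀ i, ContDiff ℝ 4 (P i)) (hS : ∀ i, ContDiff ℝ 4 (S i))
    (hSs : ∀ i j, pd i (S j) = pd j (S i))
    (y : Eu (N + 1)) (hy : ∀ᶠ z in nhds y, dvg S z = 0) :
    dvg (Wf k P S) y = (2 + k) * dvg P y + 4 * pd 0 (S 0) y := by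
  have hl : lapl (S 0) y = 0 := by
    rw [lapl_of_symm (fun i => (hS i).of_le (by norm_num)) hSs]
    rw [pd_congr (g := fun _ => 0) 0 hy]
    simp [pd]
  have h1 : ∑ j, rs j * pd j (S j) y = - 2 * pd 0 (S 0) y := by
    have : ∀ j : Fin (N + 1), rs j * pd j (S j) y =
        pd j (S j) y - (if j = 0 then 2 * pd 0 (S 0) y else 0) := by
      intro j
      unfold rs
      split_ifs with h
      · subst h; ring
      · ring
    simp only [this]
    rw [Finset.sum_sub_distrib]
    have h2 : ∑ j, pd j (S j) y = 0 := hy.self_of_nhds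
    rw [h2]
    simp
  have h3 : dvg (Wf k P S) y = (2 + k) * (∑ j, pd j (P j) y - ∑ j, rs j * pd j (S j) y)
      - 2 * k * (∑ j : Fin (N + 1), (if j = 0 then 1 else 0) * pd j (S 0) y
        + y 0 * ∑ j, pd j (pd j (S 0)) y) := by
    unfold dvg
    simp only [pd_Wf k hP hS]
    rw [Finset.sum_sub_distrib, ← Finset.mul_sum, ← Finset.mul_sum, Finset.sum_sub_distrib,
      Finset.sum_add_distrib, ← Finset.mul_sum]
  rw [h3, h1, ← lapl_eq, hl]
  simp only [ite_mul, one_mul, zero_mul, Finset.sum_ite_eq', Finset.mem_univ, if_true]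
  unfold dvg
  ring

theorem Lop_Wf {N : ℕ} (k : ℝ) {P S : Fin (N + 1) → Eu (N + 1) → ℝ}
    (hP : ∀ i, ContDiff ℝ 4 (P i)) (hS : ∀ i, ContDiff ℝ 4 (S i))
    (hPs : ∀ i j, pd i (P j) = pd j (P i)) (hSs : ∀ i j, pd i (S j) = pd j (S i))
    (y : Eu (N + 1)) (hy : ∀ᶠ z in nhds y, dvg S z = 0) (i : Fin (N + 1)) :
    Lop k (Wf k P S) i y = (1 + k) * (2 + k) * pd i (dvg P) y := by
  have hP2 : ∀ i, ContDiff ℝ 2 (P i) := fun i => (hP i).of_le (by norm_num)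
  have hS2 : ∀ i, ContDiff ℝ 2 (S i) := fun i => (hS i).of_le (by norm_num)
  have hm : ∀ i, ContDiff ℝ 3 (pd i (S 0)) := fun i => contDiff_pd i (hS 0) (by norm_num)
  have hmm : ∀ i j, ContDiff ℝ 2 (pd j (pd i (S 0))) := fun i j =>
    contDiff_pd j (hm i) (by norm_num)
  have hpP : ∀ i j, ContDiff ℝ 3 (pd j (P i)) := fun i j => contDiff_pd j (hP i) (by norm_num)
  have hpS : ∀ i j, ContDiff ℝ 3 (pd j (S i)) := fun i j => contDiff_pd j (hS i) (by norm_num)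
  have d3 : ∀ {f : Eu (N + 1) → ℝ}, ContDiff ℝ 3 f → ∀ y, DifferentiableAt ℝ f y :=
    fun h y => (h.differentiable (by norm_num)) y
  have d2 : ∀ {f : Eu (N + 1) → ℝ}, ContDiff ℝ 2 f → ∀ y, DifferentiableAt ℝ f y :=
    fun h y => (h.differentiable (by norm_num)) y
  have hc : ContDiff ℝ 2 (fun y : Eu (N + 1) => y 0) := contDiff_coord 0
  have hlS : ∀ i, ∀ᶠ z in nhds y, lapl (S i) z = 0 := by
    intro i
    filter_upwards [eventually_eventually_nhds.2 hy] with z hz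
    rw [lapl_of_symm hS2 hSs, pd_congr (g := fun _ => 0) i hz]
    simp [pd]
  -- divergence part
  have hdiv : pd i (dvg (Wf k P S)) y =
      (2 + k) * pd i (dvg P) y + 4 * pd i (pd 0 (S 0)) y := by
    have : dvg (Wf k P S) =ᶠ[nhds y] fun z => (2 + k) * dvg P z + 4 * pd 0 (S 0) z := by
      filter_upwards [eventually_eventually_nhds.2 hy] with z hz using dvg_Wf k hP hS hSs z hz
    have hdP : ContDiff ℝ 3 (dvg P) := contDiff_dvg hP (by norm_num)
    rw [pd_congr i this, pd_add i (d3 (contDiff_const.mul hdP) y)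
      (d3 (contDiff_const.mul (hm 0)) y), pd_const_mul i _ (d3 hdP y),
      pd_const_mul i _ (d3 (hm 0) y)]
  -- laplacian part
  have hlm : lapl (pd i (S 0)) y = 0 := by
    have h1 : lapl (pd i (S 0)) y = pd i (lapl (S 0)) y := by
      have : lapl (S 0) = fun z => ∑ j, pd j (pd j (S 0)) z := rfl
      rw [lapl_eq, this, pd_sum _ _ (fun j _ => d2 (hmm j j) y)]
      apply Finset.sum_congr rfl
      intro j _
      have e1 : pd j (pd i (S 0)) = pd i (pd j (S 0)) := by
        ext z; exact pd_comm j i (hS2 0).contDiffAt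
      rw [e1, pd_comm j i ((hm j).of_le (by norm_num)).contDiffAt]
    rw [h1, pd_congr (g := fun _ => 0) i (hlS 0)]
    simp [pd]
  have hlap : lapl (Wf k P S i) y = (2 + k) * pd i (dvg P) y - 4 * k * pd 0 (pd i (S 0)) y := by
    have h1 : ∀ j, pd j (pd j (Wf k P S i)) y =
        (2 + k) * (pd j (pd j (P i)) y - rs i * pd j (pd j (S i)) y)
        - 2 * k * (2 * ((if j = 0 then 1 else 0) * pd j (pd i (S 0)) y)
          + y 0 * pd j (pd j (pd i (S 0))) y) := by
      intro j
      have e0 : pd j (Wf k P S i) = fun y => (2 + k) * (pd j (P i) y - rs i * pd j (S i) y)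
          - 2 * k * ((if j = 0 then 1 else 0) * pd i (S 0) y + y 0 * pd j (pd i (S 0)) y) := by
        ext z; exact pd_Wf k hP hS i j z
      rw [e0]
      have c1 : ContDiff ℝ 2 (fun y : Eu (N + 1) => pd j (P i) y) := (hpP i j).of_le (by norm_num)
      have c2 : ContDiff ℝ 2 (fun y : Eu (N + 1) => pd j (S i) y) := (hpS i j).of_le (by norm_num)
      have c3 : ContDiff ℝ 2 (fun y : Eu (N + 1) => pd i (S 0) y) := (hm i).of_le (by norm_num)
      have c4 : ContDiff ℝ 2 (fun y : Eu (N + 1) => pd j (pd i (S 0)) y) := hmm i j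
      rw [pd_sub j (d2 (contDiff_const.mul (c1.sub (contDiff_const.mul c2))) y)
        (d2 (contDiff_const.mul ((contDiff_const.mul c3).add (hc.mul c4))) y),
        pd_const_mul j _ (d2 (c1.sub (contDiff_const.mul c2)) y),
        pd_sub j (d2 c1 y) (d2 (contDiff_const.mul c2) y),
        pd_const_mul j _ (d2 c2 y),
        pd_const_mul j _ (d2 ((contDiff_const.mul c3).add (hc.mul c4)) y),
        pd_add j (d2 (contDiff_const.mul c3) y) (d2 (hc.mul c4) y),
        pd_const_mul j _ (d2 c3 y), pd_mul j (d2 hc y) (d2 c4 y), pd_coord]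
      ring
    rw [lapl_eq]
    simp only [h1]
    rw [Finset.sum_sub_distrib, ← Finset.mul_sum, ← Finset.mul_sum, Finset.sum_sub_distrib,
      Finset.sum_add_distrib, ← Finset.mul_sum, ← Finset.mul_sum, ← Finset.mul_sum,
      ← lapl_eq, ← lapl_eq, ← lapl_eq, hlm, (hlS i).self_of_nhds, lapl_of_symm hP2 hPs]
    simp only [ite_mul, one_mul, zero_mul, Finset.sum_ite_eq', Finset.mem_univ, if_true]
    ring
  unfold Lop
  rw [hdiv, hlap, pd_comm i 0 (hS2 0).contDiffAt]
  ring



theorem pd_norm {n : ℕ} (j : Fin n) {z : Eu n} (hz : z ≠ 0) :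
    pd j (fun z => ‖z‖) z = z j / ‖z‖ := by
  have hd : DifferentiableAt ℝ (fun z : Eu n => ‖z‖) z :=
    (contDiffAt_norm ℝ hz (n := 1)).differentiableAt (by norm_num)
  have h1 := pd_mul j hd hd
  have h2 : pd j (fun z : Eu n => ‖z‖ * ‖z‖) z = 2 * z j := by
    have : (fun z : Eu n => ‖z‖ * ‖z‖) = fun z => ‖z‖ ^ 2 := by ext; ring
    rw [this]
    unfold pd
    rw [(hasStrictFDerivAt_norm_sq z).hasFDerivAt.fderiv]
    simp [EuclideanSpace.inner_single_right]
  rw [h2] at h1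
  have : ‖z‖ ≠ 0 := norm_ne_zero_iff.2 hz
  field_simp
  linarith

theorem contDiffAt_hn {n : ℕ} (m : ℕ) {z : Eu n} (hz : z ≠ 0) {a : WithTop ℕ∞} :
    ContDiffAt ℝ a (fun z : Eu n => (‖z‖ ^ m)⁻¹) z :=
  ((contDiffAt_norm ℝ hz).pow m).inv (pow_ne_zero _ (norm_ne_zero_iff.2 hz))

theorem pd_hn {n : ℕ} (m : ℕ) (j : Fin n) {z : Eu n} (hz : z ≠ 0) :
    pd j (fun z => (‖z‖ ^ m)⁻¹) z = - m * z j * (‖z‖ ^ (m + 2))⁻¹ := by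
  have hd : DifferentiableAt ℝ (fun z : Eu n => ‖z‖) z :=
    (contDiffAt_norm ℝ hz (n := 1)).differentiableAt (by norm_num)
  have h0 : ‖z‖ ≠ 0 := norm_ne_zero_iff.2 hz
  have h1 : HasDerivAt (fun t : ℝ => (t ^ m)⁻¹) (-(m * ‖z‖ ^ (m - 1)) / (‖z‖ ^ m) ^ 2) ‖z‖ :=
    (hasDerivAt_pow m ‖z‖).inv (pow_ne_zero _ h0)
  have h2 := h1.comp_hasFDerivAt z hd.hasFDerivAt
  have h3 : pd j (fun z => (‖z‖ ^ m)⁻¹) z =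
      (-(m * ‖z‖ ^ (m - 1)) / (‖z‖ ^ m) ^ 2) * pd j (fun z => ‖z‖) z := by
    unfold pd
    have : fderiv ℝ (fun z : Eu n => (‖z‖ ^ m)⁻¹) z = _ := h2.fderiv
    rw [this]
    simp
  rw [h3, pd_norm j hz]
  rcases m with _ | m
  · simp
  · simp only [Nat.add_sub_cancel]
    field_simp
    ring

/-- radial cutoff vanishing near zero -/
def eta {n : ℕ} (δ : ℝ) (z : Eu n) : ℝ := Real.smoothTransition (2 * ‖z‖ ^ 2 / δ ^ 2 - 1)

theorem contDiff_eta {n : ℕ} (δ : ℝ) {a : ℕ∞} : ContDiff ℝ a (eta (n := n) δ) := by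
  unfold eta
  apply Real.smoothTransition.contDiff.comp
  exact ((contDiff_const.mul (contDiff_norm_sq ℝ)).div_const _).sub contDiff_const

theorem pd_eta {n : ℕ} (δ : ℝ) (j : Fin n) (z : Eu n) :
    pd j (eta δ) z = deriv Real.smoothTransition (2 * ‖z‖ ^ 2 / δ ^ 2 - 1) * (4 / δ ^ 2) * z j := by
  have h1 : HasFDerivAt (fun z : Eu n => 2 * ‖z‖ ^ 2 / δ ^ 2 - 1)
      ((2 / δ ^ 2) • (2 • (innerSL ℝ z))) z := by
    have := ((hasStrictFDerivAt_norm_sq z).hasFDerivAt.const_mul (2 / δ ^ 2)).sub_const 1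
    have e : (fun z : Eu n => 2 * ‖z‖ ^ 2 / δ ^ 2 - 1) = fun x => 2 / δ ^ 2 * ‖x‖ ^ 2 - 1 := by
      ext w; ring
    rw [e]
    exact this
  have hdiff : DifferentiableAt ℝ Real.smoothTransition (2 * ‖z‖ ^ 2 / δ ^ 2 - 1) :=
    (Real.smoothTransition.contDiffAt (n := 1)).differentiableAt (by norm_num)
  have h2 := hdiff.hasDerivAt.comp_hasFDerivAt z h1
  unfold pd
  have h3 : fderiv ℝ (eta δ) z = _ := h2.fderiv
  rw [h3]
  simp [EuclideanSpace.inner_single_right]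
  ring

/-- regularized kernel -/
def Vk {N : ℕ} (δ : ℝ) (i : Fin (N + 1)) (z : Eu (N + 1)) : ℝ :=
  eta δ z * ((‖z‖ ^ (N + 1))⁻¹ * z i)

theorem Vk_near_zero {N : ℕ} {δ : ℝ} (hδ : 0 < δ) (i : Fin (N + 1)) :
    Vk (N := N) δ i =ᶠ[nhds 0] fun _ => 0 := by
  have : ∀ᶠ z : Eu (N + 1) in nhds 0, 2 * ‖z‖ ^ 2 / δ ^ 2 - 1 < 0 := by
    have hc : Continuous fun z : Eu (N + 1) => 2 * ‖z‖ ^ 2 / δ ^ 2 - 1 := by fun_prop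
    have h1 : (fun z : Eu (N + 1) => 2 * ‖z‖ ^ 2 / δ ^ 2 - 1) 0 < 0 := by simp
    exact hc.continuousAt.eventually (gt_mem_nhds h1)
  filter_upwards [this] with z hz
  unfold Vk eta
  rw [Real.smoothTransition.zero_of_nonpos hz.le, zero_mul]

theorem contDiff_Vk {N : ℕ} {δ : ℝ} (hδ : 0 < δ) (i : Fin (N + 1)) :
    ContDiff ℝ 4 (Vk (N := N) δ i) := by
  rw [contDiff_iff_contDiffAt]
  intro z
  by_cases hz : z = 0
  · subst hz
    exact contDiffAt_const.congr_of_eventuallyEq (Vk_near_zero hδ i)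
  · exact ((contDiff_eta δ (a := 4)).contDiffAt).mul ((contDiffAt_hn _ hz).mul
      (contDiff_coord i).contDiffAt)

theorem pd_Vk {N : ℕ} {δ : ℝ} (i j : Fin (N + 1)) {z : Eu (N + 1)}
    (hz : z ≠ 0) :
    pd j (Vk δ i) z = deriv Real.smoothTransition (2 * ‖z‖ ^ 2 / δ ^ 2 - 1) * (4 / δ ^ 2) * z j
      * ((‖z‖ ^ (N + 1))⁻¹ * z i) + eta δ z * ((if j = i then 1 else 0) * (‖z‖ ^ (N + 1))⁻¹ -
        (N + 1) * z j * z i * (‖z‖ ^ (N + 3))⁻¹) := by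
  have d1 : DifferentiableAt ℝ (eta δ) z :=
    (contDiff_eta δ (a := 1)).differentiable (by norm_num) z
  have d2 : DifferentiableAt ℝ (fun z : Eu (N + 1) => (‖z‖ ^ (N + 1))⁻¹) z :=
    (contDiffAt_hn _ hz (a := 1)).differentiableAt (by norm_num)
  have d3 : DifferentiableAt ℝ (fun z : Eu (N + 1) => z i) z :=
    (contDiff_coord i (a := 1)).differentiable (by norm_num) z
  unfold Vk
  rw [pd_mul j d1 (d2.fun_mul d3), pd_mul j d2 d3, pd_eta, pd_hn _ _ hz, pd_coord]
  push_cast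
  ring

theorem Vk_symm {N : ℕ} {δ : ℝ} (hδ : 0 < δ) (i j : Fin (N + 1)) :
    pd i (Vk (N := N) δ j) = pd j (Vk δ i) := by
  ext z
  by_cases hz : z = 0
  · subst hz
    rw [pd_congr i (Vk_near_zero hδ j), pd_congr j (Vk_near_zero hδ i)]
    simp [pd]
  · rw [pd_Vk _ _ hz, pd_Vk _ _ hz]
    simp only [eq_comm (a := i) (b := j)]
    ring

theorem dvg_Vk {N : ℕ} {δ : ℝ} (hδ : 0 < δ) (z : Eu (N + 1)) :
    dvg (Vk (N := N) δ) z = deriv Real.smoothTransition (2 * ‖z‖ ^ 2 / δ ^ 2 - 1) * (4 / δ ^ 2)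
      * (‖z‖ ^ 2 * (‖z‖ ^ (N + 1))⁻¹) := by
  have hs : ∑ j, z j * z j = ‖z‖ ^ 2 := by
    rw [EuclideanSpace.real_norm_sq_eq]
    apply Finset.sum_congr rfl
    intro j _; ring
  by_cases hz : z = 0
  · subst hz
    unfold dvg
    rw [Finset.sum_eq_zero]
    · simp
    · intro j _
      rw [pd_congr j (Vk_near_zero hδ j)]
      simp [pd]
  · have h1 : ∀ j, pd j (Vk δ j) z =
        deriv Real.smoothTransition (2 * ‖z‖ ^ 2 / δ ^ 2 - 1) * (4 / δ ^ 2)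
          * (‖z‖ ^ (N + 1))⁻¹ * (z j * z j) + (eta δ z * (‖z‖ ^ (N + 1))⁻¹ -
        (eta δ z * (N + 1) * (‖z‖ ^ (N + 3))⁻¹) * (z j * z j)) := by
      intro j
      rw [pd_Vk _ _ hz]
      simp
      ring
    unfold dvg
    simp only [h1]
    rw [Finset.sum_add_distrib, Finset.sum_sub_distrib, Finset.sum_const, ← Finset.mul_sum,
      ← Finset.mul_sum, hs]
    simp only [Finset.card_univ, Fintype.card_fin, nsmul_eq_mul]
    push_cast
    generalize deriv smoothTransition (2 * ‖z‖ ^ 2 / δ ^ 2 - 1) = D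
    have : ‖z‖ ≠ 0 := norm_ne_zero_iff.2 hz
    field_simp
    ring

theorem dvg_Vk_nonneg {N : ℕ} {δ : ℝ} (hδ : 0 < δ) (z : Eu (N + 1)) :
    0 ≤ dvg (Vk (N := N) δ) z := by
  rw [dvg_Vk hδ]
  have := Real.smoothTransition.monotone.deriv_nonneg (x := 2 * ‖z‖ ^ 2 / δ ^ 2 - 1)
  positivity

theorem eta_eq_one {n : ℕ} {δ : ℝ} (hδ : 0 < δ) {z : Eu n} (hz : δ < ‖z‖) : eta δ z = 1 := by
  unfold eta
  apply Real.smoothTransition.one_of_one_le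
  have : 1 ≤ ‖z‖ ^ 2 / δ ^ 2 := by
    rw [one_le_div (by positivity)]
    gcongr
  have h2 : 2 * ‖z‖ ^ 2 / δ ^ 2 = 2 * (‖z‖ ^ 2 / δ ^ 2) := by ring
  linarith

theorem Vk_far {N : ℕ} {δ : ℝ} (hδ : 0 < δ) (i : Fin (N + 1)) {z : Eu (N + 1)}
    (hz : δ < ‖z‖) : Vk δ i z = (‖z‖ ^ (N + 1))⁻¹ * z i := by
  unfold Vk; rw [eta_eq_one hδ hz, one_mul]

theorem far_ev {n : ℕ} {δ : ℝ} {z : Eu n} (hz : δ < ‖z‖) : ∀ᶠ w in nhds z, δ < ‖w‖ :=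
  continuous_norm.continuousAt.eventually (lt_mem_nhds hz)

theorem pd_Vk_far {N : ℕ} {δ : ℝ} (hδ : 0 < δ) (i j : Fin (N + 1)) {z : Eu (N + 1)}
    (hz : δ < ‖z‖) : pd j (Vk δ i) z = (if j = i then 1 else 0) * (‖z‖ ^ (N + 1))⁻¹ -
        (N + 1) * z j * z i * (‖z‖ ^ (N + 3))⁻¹ := by
  have hz0 : z ≠ 0 := norm_pos_iff.1 (hδ.trans hz)
  have : Vk δ i =ᶠ[nhds z] fun z => (‖z‖ ^ (N + 1))⁻¹ * z i := by
    filter_upwards [far_ev hz] with w hw using Vk_far hδ i hw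
  have d2 : DifferentiableAt ℝ (fun z : Eu (N + 1) => (‖z‖ ^ (N + 1))⁻¹) z :=
    (contDiffAt_hn _ hz0 (a := 1)).differentiableAt (by norm_num)
  have d3 : DifferentiableAt ℝ (fun z : Eu (N + 1) => z i) z :=
    (contDiff_coord i (a := 1)).differentiable (by norm_num) z
  rw [pd_congr j this, pd_mul j d2 d3, pd_hn _ _ hz0, pd_coord]
  push_cast
  ring

theorem dvg_Vk_far {N : ℕ} {δ : ℝ} (hδ : 0 < δ) {z : Eu (N + 1)}
    (hz : δ < ‖z‖) : dvg (Vk (N := N) δ) z = 0 := by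
  have hz0 : z ≠ 0 := norm_pos_iff.1 (hδ.trans hz)
  have hs : ∑ j, z j * z j = ‖z‖ ^ 2 := by
    rw [EuclideanSpace.real_norm_sq_eq]
    apply Finset.sum_congr rfl
    intro j _; ring
  have h1 : ∀ j, pd j (Vk δ j) z = (‖z‖ ^ (N + 1))⁻¹ -
      (N + 1) * (‖z‖ ^ (N + 3))⁻¹ * (z j * z j) := by
    intro j
    rw [pd_Vk_far hδ _ _ hz]
    simp
    ring
  unfold dvg
  simp only [h1]
  rw [Finset.sum_sub_distrib, ← Finset.mul_sum, hs]
  simp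
  have : ‖z‖ ≠ 0 := norm_ne_zero_iff.2 hz0
  field_simp
  ring

theorem pd_pd_Vk_far {N : ℕ} {δ : ℝ} (hδ : 0 < δ) (i j l : Fin (N + 1)) {z : Eu (N + 1)}
    (hz : δ < ‖z‖) : pd l (pd j (Vk δ i)) z =
      - (if j = i then 1 else 0) * (N + 1) * (z l * (‖z‖ ^ (N + 3))⁻¹)
      - (N + 1) * ((if l = j then 1 else 0) * (z i * (‖z‖ ^ (N + 3))⁻¹)
        + (if l = i then 1 else 0) * (z j * (‖z‖ ^ (N + 3))⁻¹)
        - (N + 3) * (z j * z i * z l * (‖z‖ ^ (N + 5))⁻¹)) := by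
  have hz0 : z ≠ 0 := norm_pos_iff.1 (hδ.trans hz)
  have : pd j (Vk δ i) =ᶠ[nhds z] fun z => (if j = i then 1 else 0) * (‖z‖ ^ (N + 1))⁻¹ -
        (N + 1) * (z j * (z i * (‖z‖ ^ (N + 3))⁻¹)) := by
    filter_upwards [far_ev hz] with w hw
    rw [pd_Vk_far hδ i j hw]; ring
  have d1 : DifferentiableAt ℝ (fun z : Eu (N + 1) => (‖z‖ ^ (N + 1))⁻¹) z :=
    (contDiffAt_hn _ hz0 (a := 1)).differentiableAt (by norm_num)
  have d2 : DifferentiableAt ℝ (fun z : Eu (N + 1) => (‖z‖ ^ (N + 3))⁻¹) z :=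
    (contDiffAt_hn _ hz0 (a := 1)).differentiableAt (by norm_num)
  have d3 : ∀ i, DifferentiableAt ℝ (fun z : Eu (N + 1) => z i) z := fun i =>
    (contDiff_coord i (a := 1)).differentiable (by norm_num) z
  rw [pd_congr l this, pd_sub l (d1.const_mul _) (((d3 j).fun_mul ((d3 i).fun_mul d2)).const_mul _),
    pd_const_mul l _ d1, pd_const_mul l _ ((d3 j).fun_mul ((d3 i).fun_mul d2)),
    pd_mul l (d3 j) ((d3 i).fun_mul d2), pd_mul l (d3 i) d2, pd_hn _ _ hz0, pd_hn _ _ hz0, pd_coord,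
    pd_coord]
  push_cast
  ring

theorem Vk_bd0 {N : ℕ} {δ : ℝ} (hδ : 0 < δ) (i : Fin (N + 1)) {z : Eu (N + 1)}
    (hz : δ < ‖z‖) : |Vk δ i z| ≤ (‖z‖ ^ N)⁻¹ := by
  have h0 : 0 < ‖z‖ := hδ.trans hz
  rw [Vk_far hδ i hz, abs_mul, abs_of_pos (by positivity)]
  calc (‖z‖ ^ (N + 1))⁻¹ * |z i| ≤ (‖z‖ ^ (N + 1))⁻¹ * ‖z‖ := by
        gcongr; exact abs_coord_le z i
    _ = (‖z‖ ^ N)⁻¹ := by field_simp; ring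

theorem ite_abs_le {p : Prop} [Decidable p] : |(if p then (1:ℝ) else 0)| ≤ 1 := by
  split_ifs <;> simp

theorem Vk_bd1 {N : ℕ} {δ : ℝ} (hδ : 0 < δ) (i j : Fin (N + 1)) {z : Eu (N + 1)}
    (hz : δ < ‖z‖) : |pd j (Vk δ i) z| ≤ (N + 2) * (‖z‖ ^ (N + 1))⁻¹ := by
  have h0 : 0 < ‖z‖ := hδ.trans hz
  rw [pd_Vk_far hδ i j hz]
  have h1 : |(if j = i then (1:ℝ) else 0) * (‖z‖ ^ (N + 1))⁻¹| ≤ 1 * (‖z‖ ^ (N + 1))⁻¹ := by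
    rw [abs_mul, abs_of_pos (a := (‖z‖ ^ (N + 1))⁻¹) (by positivity)]
    gcongr; exact ite_abs_le
  have h2 : |(N + 1) * z j * z i * (‖z‖ ^ (N + 3))⁻¹| ≤ (N + 1) * (‖z‖ ^ (N + 1))⁻¹ := by
    rw [abs_mul, abs_mul, abs_mul, abs_of_pos (a := (‖z‖ ^ (N + 3))⁻¹) (by positivity),
      abs_of_pos (a := (N + 1 : ℝ)) (by positivity)]
    calc (N + 1) * |z j| * |z i| * (‖z‖ ^ (N + 3))⁻¹
        ≤ (N + 1) * ‖z‖ * ‖z‖ * (‖z‖ ^ (N + 3))⁻¹ := by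
          gcongr <;> exact abs_coord_le z _
      _ = _ := by field_simp; ring
  calc _ ≤ _ := abs_sub _ _
    _ ≤ _ := add_le_add h1 h2
    _ = _ := by ring

theorem Vk_bd2 {N : ℕ} {δ : ℝ} (hδ : 0 < δ) (i j l : Fin (N + 1)) {z : Eu (N + 1)}
    (hz : δ < ‖z‖) : |pd l (pd j (Vk δ i)) z| ≤ (N + 1) * (N + 6) * (‖z‖ ^ (N + 2))⁻¹ := by
  have h0 : 0 < ‖z‖ := hδ.trans hz
  rw [pd_pd_Vk_far hδ i j l hz]
  have h1 : ∀ a : Fin (N + 1), |z a * (‖z‖ ^ (N + 3))⁻¹| ≤ (‖z‖ ^ (N + 2))⁻¹ := by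
    intro a
    rw [abs_mul, abs_of_pos (a := (‖z‖ ^ (N + 3))⁻¹) (by positivity)]
    calc _ ≤ ‖z‖ * (‖z‖ ^ (N + 3))⁻¹ := by gcongr; exact abs_coord_le z _
      _ = _ := by field_simp; ring
  have h3 : |z j * z i * z l * (‖z‖ ^ (N + 5))⁻¹| ≤ (‖z‖ ^ (N + 2))⁻¹ := by
    rw [abs_mul, abs_mul, abs_mul, abs_of_pos (a := (‖z‖ ^ (N + 5))⁻¹) (by positivity)]
    calc _ ≤ ‖z‖ * ‖z‖ * ‖z‖ * (‖z‖ ^ (N + 5))⁻¹ := by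
          gcongr <;> exact abs_coord_le z _
      _ = _ := by field_simp; ring
  have h4 : ∀ (p : Prop) [Decidable p] (a : Fin (N + 1)),
      |(if p then (1:ℝ) else 0) * (z a * (‖z‖ ^ (N + 3))⁻¹)| ≤ (‖z‖ ^ (N + 2))⁻¹ := by
    intro p _ a
    split_ifs
    · simpa using h1 a
    · simp
  have a1 := abs_le.1 (h4 (j = i) l)
  have a2 := abs_le.1 (h4 (l = j) i)
  have a3 := abs_le.1 (h4 (l = i) j)
  have a4 := abs_le.1 h3
  set X := (if j = i then (1:ℝ) else 0) * (z l * (‖z‖ ^ (N + 3))⁻¹) with hX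
  set X2 := (if l = j then (1:ℝ) else 0) * (z i * (‖z‖ ^ (N + 3))⁻¹)
  set X3 := (if l = i then (1:ℝ) else 0) * (z j * (‖z‖ ^ (N + 3))⁻¹)
  set X4 := z j * z i * z l * (‖z‖ ^ (N + 5))⁻¹
  have e : -(if j = i then (1:ℝ) else 0) * (N + 1) * (z l * (‖z‖ ^ (N + 3))⁻¹) - (N + 1) *
      (X2 + X3 - (N + 3) * X4) = (N + 1) * (- X - X2 - X3 + (N + 3) * X4) := by
    rw [hX]; ring
  rw [e, abs_mul, abs_of_pos (a := (N + 1 : ℝ)) (by positivity), mul_assoc]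
  gcongr
  have hN : (0:ℝ) ≤ N + 3 := by positivity
  have m1 := mul_le_mul_of_nonneg_left a4.1 hN
  have m2 := mul_le_mul_of_nonneg_left a4.2 hN
  rw [abs_le]
  constructor <;> linarith



theorem sphereArea_eq {n : ℕ} (hn : 0 < n) :
    sphereArea n = n * (volume : Measure (Eu n)).real (ball 0 1) := by
  haveI : Nonempty (Fin n) := ⟨⟨0, hn⟩⟩
  have hn' : (0:ℝ) < n := by exact_mod_cast hn
  have hG : 0 < Real.Gamma ((n:ℝ) / 2) := Real.Gamma_pos_of_pos (by positivity)
  rw [measureReal_def, EuclideanSpace.volume_ball]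
  simp only [ENNReal.ofReal_one, one_pow, one_mul, Fintype.card_fin]
  rw [ENNReal.toReal_ofReal (by
    have : 0 < Real.Gamma ((n:ℝ) / 2 + 1) := Real.Gamma_pos_of_pos (by positivity)
    positivity)]
  rw [Real.Gamma_add_one (by positivity)]
  have h1 : √π ^ n = π ^ ((n:ℝ) / 2) := by
    rw [Real.sqrt_eq_rpow, ← Real.rpow_natCast, ← Real.rpow_mul Real.pi_pos.le]
    congr 1; ring
  rw [h1]
  unfold sphereArea
  field_simp

theorem integral_dvg_Vk {N : ℕ} {δ : ℝ} (hδ : 0 < δ) :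
    ∫ z, dvg (Vk (N := N) δ) z = sphereArea (N + 1) := by
  have h1 : ∀ z, dvg (Vk (N := N) δ) z = (fun r : ℝ =>
      deriv Real.smoothTransition (2 * r ^ 2 / δ ^ 2 - 1) * (4 / δ ^ 2)
      * (r ^ 2 * (r ^ (N + 1))⁻¹)) ‖z‖ := fun z => dvg_Vk hδ z
  simp only [h1]
  rw [integral_fun_norm_addHaar volume (fun r : ℝ =>
      deriv Real.smoothTransition (2 * r ^ 2 / δ ^ 2 - 1) * (4 / δ ^ 2)
      * (r ^ 2 * (r ^ (N + 1))⁻¹))]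
  have h2 : ∫ y in Set.Ioi (0:ℝ), y ^ (Module.finrank ℝ (Eu (N + 1)) - 1) •
      (deriv Real.smoothTransition (2 * y ^ 2 / δ ^ 2 - 1) * (4 / δ ^ 2)
      * (y ^ 2 * (y ^ (N + 1))⁻¹)) = 1 := by
    have h3 : ∫ y in Set.Ioi (0:ℝ), y ^ (Module.finrank ℝ (Eu (N + 1)) - 1) •
      (deriv Real.smoothTransition (2 * y ^ 2 / δ ^ 2 - 1) * (4 / δ ^ 2)
      * (y ^ 2 * (y ^ (N + 1))⁻¹)) = ∫ y in Set.Ioi (0:ℝ),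
        deriv Real.smoothTransition (2 * y ^ 2 / δ ^ 2 - 1) * (4 * y / δ ^ 2) := by
      apply setIntegral_congr_fun measurableSet_Ioi
      intro y hy
      have hy0 : y ≠ 0 := ne_of_gt hy
      simp only [finrank_euclideanSpace, Fintype.card_fin, Nat.add_sub_cancel, smul_eq_mul]
      generalize deriv smoothTransition (2 * y ^ 2 / δ ^ 2 - 1) = D
      field_simp
      ring
    rw [h3, integral_Ioi_of_hasDerivAt_of_nonneg'
      (g := fun y => Real.smoothTransition (2 * y ^ 2 / δ ^ 2 - 1)) (l := 1)]
    · rw [Real.smoothTransition.zero_of_nonpos (by simp)]; simp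
    · intro y _
      have hdiff : DifferentiableAt ℝ Real.smoothTransition (2 * y ^ 2 / δ ^ 2 - 1) :=
        (Real.smoothTransition.contDiffAt (n := 1)).differentiableAt (by norm_num)
      have h4 : HasDerivAt (fun y : ℝ => 2 * y ^ 2 / δ ^ 2 - 1) (4 * y / δ ^ 2) y := by
        have := (((hasDerivAt_pow 2 y).const_mul 2).div_const (δ ^ 2)).sub_const 1
        refine this.congr_deriv ?_
        push_cast; ring
      exact hdiff.hasDerivAt.comp y h4
    · intro y hy
      have := Real.smoothTransition.monotone.deriv_nonneg (x := 2 * y ^ 2 / δ ^ 2 - 1)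
      have hy0 : (0:ℝ) < y := hy
      positivity
    · apply tendsto_const_nhds.congr'
      filter_upwards [eventually_ge_atTop δ] with y hy
      symm
      apply Real.smoothTransition.one_of_one_le
      have : 1 ≤ y ^ 2 / δ ^ 2 := by
        rw [one_le_div (by positivity)]
        gcongr
      have h2 : 2 * y ^ 2 / δ ^ 2 = 2 * (y ^ 2 / δ ^ 2) := by ring
      linarith
  rw [h2, sphereArea_eq (Nat.succ_pos N)]
  simp

/-- radial profile of the boundary kernel -/
def fT (N : ℕ) (s : ℝ) : ℝ :=
  (√(1 + s ^ 2) ^ (N + 1))⁻¹ * √(1 + (N + 1) * (N - 1) / (1 + s ^ 2))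

theorem fT_nonneg (N : ℕ) (s : ℝ) : 0 ≤ fT N s := by unfold fT; positivity

theorem integrable_fT {N : ℕ} (hN : 1 ≤ N) :
    Integrable (fun y : Fin N → ℝ => fT N ‖(WithLp.toLp 2 y : Eu N)‖) := by
  have h1 : Integrable (fun y : Eu N => fT N ‖y‖) := by
    have hN1 : (1:ℝ) ≤ N := by exact_mod_cast hN
    have hb : Integrable (fun y : Eu N => √(1 + (N + 1) * (N - 1)) *
        (1 + ‖y‖ ^ 2) ^ (-((N + 1 : ℝ)) / 2)) := by
      apply Integrable.const_mul
      apply integrable_rpow_neg_one_add_norm_sq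
      simp
    apply hb.mono'
    · apply Continuous.aestronglyMeasurable
      unfold fT
      apply Continuous.mul
      · apply Continuous.inv₀
        · fun_prop
        · intro y; positivity
      · apply Continuous.sqrt
        apply Continuous.add continuous_const
        apply Continuous.div continuous_const
        · fun_prop
        · intro y; positivity
    · filter_upwards with y
      rw [Real.norm_of_nonneg (fT_nonneg _ _)]
      unfold fT
      rw [mul_comm]
      apply mul_le_mul
      · apply Real.sqrt_le_sqrt
        have : (N + 1 : ℝ) * (N - 1) / (1 + ‖y‖ ^ 2) ≤ (N + 1 : ℝ) * (N - 1) := by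
          apply div_le_self
          · apply mul_nonneg (by positivity); linarith
          · nlinarith [sq_nonneg ‖y‖]
        linarith
      · apply le_of_eq
        rw [Real.sqrt_eq_rpow, ← Real.rpow_natCast, ← Real.rpow_mul (by positivity),
          ← Real.rpow_neg (by positivity)]
        congr 1
        push_cast; ring
      · positivity
      · positivity
  exact (PiLp.volume_preserving_toLp (Fin N)).integrable_comp_of_integrable h1

theorem integral_fT {N : ℕ} (hN : 1 ≤ N) :
    ∫ y : Fin N → ℝ, fT N ‖(WithLp.toLp 2 y : Eu N)‖ =
      sphereArea N * ∫ θ in (0:ℝ)..(π / 2),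
        √(1 + ((N + 1 : ℕ) : ℝ) * (((N + 1 : ℕ) : ℝ) - 2) * Real.cos θ ^ 2)
          * Real.sin θ ^ (N + 1 - 2) := by
  haveI : Nonempty (Fin N) := ⟨⟨0, hN⟩⟩
  rw [(PiLp.volume_preserving_toLp (Fin N)).integral_comp
    (MeasurableEquiv.toLp 2 (Fin N → ℝ)).measurableEmbedding (fun y : Eu N => fT N ‖y‖)]
  rw [integral_fun_norm_addHaar volume (fT N), sphereArea_eq hN]
  simp only [finrank_euclideanSpace, Fintype.card_fin, smul_eq_mul, nsmul_eq_mul]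
  rw [← mul_assoc]
  congr 1
  have himg : Real.tan '' Set.Ioo 0 (π / 2) = Set.Ioi 0 := by
    ext t
    constructor
    · rintro ⟨θ, hθ, rfl⟩
      exact Real.tan_pos_of_pos_of_lt_pi_div_two hθ.1 hθ.2
    · intro ht
      refine ⟨Real.arctan t, ⟨Real.arctan_pos.2 ht, Real.arctan_lt_pi_div_two t⟩,
        Real.tan_arctan t⟩
  have hcos : ∀ θ ∈ Set.Ioo 0 (π / 2), 0 < Real.cos θ := fun θ hθ =>
    Real.cos_pos_of_mem_Ioo ⟨by linarith [hθ.1, Real.pi_pos], hθ.2⟩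
  rw [← himg, integral_image_eq_integral_abs_deriv_smul measurableSet_Ioo
    (f' := fun θ => 1 / Real.cos θ ^ 2)
    (fun θ hθ => (Real.hasDerivAt_tan (hcos θ hθ).ne').hasDerivWithinAt)
    (Real.injOn_tan.mono (fun θ (hθ : θ ∈ Set.Ioo 0 (π / 2)) =>
      (show θ ∈ Set.Ioo (-(π / 2)) (π / 2) from ⟨by linarith [hθ.1, Real.pi_pos], hθ.2⟩)))]
  rw [intervalIntegral.integral_of_le (by positivity), integral_Ioc_eq_integral_Ioo]
  apply setIntegral_congr_fun measurableSet_Ioo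
  intro θ hθ
  have hc := hcos θ hθ
  have h1 : 1 + Real.tan θ ^ 2 = (Real.cos θ ^ 2)⁻¹ := by
    rw [Real.tan_eq_sin_div_cos]
    field_simp
    linarith [Real.sin_sq_add_cos_sq θ]
  simp only [fT, h1, smul_eq_mul]
  have h2 : √((Real.cos θ ^ 2)⁻¹) = (Real.cos θ)⁻¹ := by
    rw [Real.sqrt_inv, Real.sqrt_sq hc.le]
  rw [h2, abs_of_pos (by positivity), Real.tan_eq_sin_div_cos]
  obtain ⟨m, rfl⟩ : ∃ m, N = m + 1 := ⟨N - 1, by omega⟩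
  have e1 : (((m + 1 : ℕ) : ℝ) + 1) * (((m + 1 : ℕ) : ℝ) - 1) / (Real.cos θ ^ 2)⁻¹ =
      ((m + 1 + 1 : ℕ) : ℝ) * (((m + 1 + 1 : ℕ) : ℝ) - 2) * Real.cos θ ^ 2 := by
    push_cast
    field_simp
    ring
  rw [e1]
  generalize √(1 + ((m + 1 + 1 : ℕ) : ℝ) * (((m + 1 + 1 : ℕ) : ℝ) - 2) * Real.cos θ ^ 2) = Q
  have e2 : m + 1 + 1 - 2 = m := by omega
  have e3 : m + 1 - 1 = m := by omega
  rw [e2, e3]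
  simp only [div_pow, inv_pow, one_div]
  field_simp
  ring



/-- first basis vector -/
def e0 (N : ℕ) : Eu (N + 1) := EuclideanSpace.single 0 1

theorem e0_zero (N : ℕ) : e0 N 0 = 1 := by simp [e0]

theorem e0_ne {N : ℕ} {i : Fin (N + 1)} (hi : i ≠ 0) : e0 N i = 0 := by simp [e0, hi]

theorem norm_e0 (N : ℕ) : ‖e0 N‖ = 1 := by simp [e0]

/-- shifted kernels -/
def PP {N : ℕ} (δ : ℝ) (i : Fin (N + 1)) (y : Eu (N + 1)) : ℝ := Vk δ i (y + (-e0 N))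

/-- shifted kernels, reflected pole -/
def SS {N : ℕ} (δ : ℝ) (i : Fin (N + 1)) (y : Eu (N + 1)) : ℝ := Vk δ i (y + e0 N)

theorem contDiff_shift {n : ℕ} {a : WithTop ℕ∞} {f : Eu n → ℝ} (hf : ContDiff ℝ a f) (v : Eu n) :
    ContDiff ℝ a (fun y => f (y + v)) := hf.comp (contDiff_id.add contDiff_const)

theorem contDiff_PP {N : ℕ} {δ : ℝ} (hδ : 0 < δ) (i : Fin (N + 1)) : ContDiff ℝ 4 (PP (N := N) δ i) :=
  contDiff_shift (contDiff_Vk hδ i) _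

theorem contDiff_SS {N : ℕ} {δ : ℝ} (hδ : 0 < δ) (i : Fin (N + 1)) : ContDiff ℝ 4 (SS (N := N) δ i) :=
  contDiff_shift (contDiff_Vk hδ i) _

theorem pd_PP {N : ℕ} (δ : ℝ) (i j : Fin (N + 1)) (y : Eu (N + 1)) :
    pd j (PP δ i) y = pd j (Vk δ i) (y + (-e0 N)) := pd_shift j (Vk δ i) _ y

theorem pd_SS {N : ℕ} (δ : ℝ) (i j : Fin (N + 1)) (y : Eu (N + 1)) :
    pd j (SS δ i) y = pd j (Vk δ i) (y + e0 N) := pd_shift j (Vk δ i) _ y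

theorem pd_pd_SS {N : ℕ} (δ : ℝ) (i j l : Fin (N + 1)) (y : Eu (N + 1)) :
    pd l (pd j (SS δ i)) y = pd l (pd j (Vk δ i)) (y + e0 N) := by
  have : pd j (SS δ i) = fun y => pd j (Vk (N := N) δ i) (y + e0 N) := funext (pd_SS δ i j)
  rw [this, pd_shift]

theorem PP_symm {N : ℕ} {δ : ℝ} (hδ : 0 < δ) (i j : Fin (N + 1)) :
    pd i (PP (N := N) δ j) = pd j (PP δ i) := by
  ext y; rw [pd_PP, pd_PP, Vk_symm hδ]

theorem SS_symm {N : ℕ} {δ : ℝ} (hδ : 0 < δ) (i j : Fin (N + 1)) :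
    pd i (SS (N := N) δ j) = pd j (SS δ i) := by
  ext y; rw [pd_SS, pd_SS, Vk_symm hδ]

theorem dvg_PP {N : ℕ} (δ : ℝ) (y : Eu (N + 1)) :
    dvg (PP (N := N) δ) y = dvg (Vk δ) (y + (-e0 N)) := by
  simp [dvg, pd_PP]

theorem dvg_SS {N : ℕ} (δ : ℝ) (y : Eu (N + 1)) :
    dvg (SS (N := N) δ) y = dvg (Vk δ) (y + e0 N) := by
  simp [dvg, pd_SS]

theorem far_S {N : ℕ} {δ : ℝ} (hδ2 : δ < 1 / 2) {y : Eu (N + 1)} (hy : 0 ≤ y 0) :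
    δ < ‖y + e0 N‖ := by
  have := abs_coord_le (y + e0 N) 0
  have h2 : (y + e0 N) 0 = y 0 + 1 := by simp [e0]
  rw [h2, abs_of_nonneg (by linarith)] at this
  linarith

theorem dvg_SS_ev {N : ℕ} {δ : ℝ} (hδ : 0 < δ) (hδ2 : δ < 1 / 2) {y : Eu (N + 1)} (hy : 0 ≤ y 0) :
    ∀ᶠ z in nhds y, dvg (SS (N := N) δ) z = 0 := by
  have h1 : ∀ᶠ z in nhds y, δ < ‖z + e0 N‖ := by
    have hc : Continuous fun z : Eu (N + 1) => ‖z + e0 N‖ := by fun_prop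
    exact hc.continuousAt.eventually (lt_mem_nhds (far_S hδ2 hy))
  filter_upwards [h1] with z hz
  rw [dvg_SS, dvg_Vk_far hδ hz]

/-- test field -/
def WW {N : ℕ} (k δ : ℝ) (i : Fin (N + 1)) (y : Eu (N + 1)) : ℝ := Wf k (PP δ) (SS δ) i y

theorem contDiff_WW {N : ℕ} (k : ℝ) {δ : ℝ} (hδ : 0 < δ) (i : Fin (N + 1)) :
    ContDiff ℝ 3 (WW (N := N) k δ i) := contDiff_Wf k (contDiff_PP hδ) (contDiff_SS hδ) i

theorem Lop_WW {N : ℕ} (k : ℝ) {δ : ℝ} (hδ : 0 < δ) (hδ2 : δ < 1 / 2) {y : Eu (N + 1)}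
    (hy : 0 ≤ y 0) (i : Fin (N + 1)) :
    Lop k (WW k δ) i y = (1 + k) * (2 + k) * pd i (dvg (PP δ)) y :=
  Lop_Wf k (contDiff_PP hδ) (contDiff_SS hδ) (PP_symm hδ) (SS_symm hδ) y (dvg_SS_ev hδ hδ2 hy) i

theorem bd_zero {N : ℕ} (y' : Fin N → ℝ) : bd y' 0 = 0 := by simp [bd]

theorem norm_bd_sq {N : ℕ} (y' : Fin N → ℝ) (a : ℝ) :
    ‖bd y' + a • e0 N‖ ^ 2 = a ^ 2 + ‖(WithLp.toLp 2 y' : Eu N)‖ ^ 2 := by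
  rw [EuclideanSpace.real_norm_sq_eq, EuclideanSpace.real_norm_sq_eq, Fin.sum_univ_succ]
  simp [bd, e0]

theorem norm_bd_m {N : ℕ} (y' : Fin N → ℝ) :
    ‖bd y' + (-e0 N)‖ = √(1 + ‖(WithLp.toLp 2 y' : Eu N)‖ ^ 2) := by
  have := norm_bd_sq y' (-1)
  rw [neg_one_smul] at this
  rw [eq_comm, Real.sqrt_eq_iff_mul_self_eq (by positivity) (norm_nonneg _)]
  nlinarith

theorem norm_bd_p {N : ℕ} (y' : Fin N → ℝ) :
    ‖bd y' + e0 N‖ = √(1 + ‖(WithLp.toLp 2 y' : Eu N)‖ ^ 2) := by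
  have := norm_bd_sq y' 1
  rw [one_smul] at this
  rw [eq_comm, Real.sqrt_eq_iff_mul_self_eq (by positivity) (norm_nonneg _)]
  nlinarith

theorem bd_rs {N : ℕ} (y' : Fin N → ℝ) (i : Fin (N + 1)) :
    (bd y' + e0 N) i = rs i * (bd y' + (-e0 N)) i := by
  refine Fin.cases ?_ (fun j => ?_) i
  · simp [bd, e0, rs]
  · simp [bd, e0, rs]

theorem one_le_r (s : ℝ) : 1 ≤ √(1 + s ^ 2) := by
  rw [Real.one_le_sqrt]; nlinarith [sq_nonneg s]

/-- boundary kernel -/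
def Tk {N : ℕ} (δ : ℝ) (i : Fin (N + 1)) (y' : Fin N → ℝ) : ℝ := pd 0 (PP δ i) (bd y')

theorem far_bd_m {N : ℕ} {δ : ℝ} (hδ2 : δ < 1 / 2) (y' : Fin N → ℝ) : δ < ‖bd y' + (-e0 N)‖ := by
  rw [norm_bd_m]; linarith [one_le_r ‖(WithLp.toLp 2 y' : Eu N)‖]

theorem far_bd_p {N : ℕ} {δ : ℝ} (hδ2 : δ < 1 / 2) (y' : Fin N → ℝ) : δ < ‖bd y' + e0 N‖ := by
  rw [norm_bd_p]; linarith [one_le_r ‖(WithLp.toLp 2 y' : Eu N)‖]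

theorem WW_bd {N : ℕ} (k : ℝ) {δ : ℝ} (hδ : 0 < δ) (hδ2 : δ < 1 / 2) (i : Fin (N + 1))
    (y' : Fin N → ℝ) : WW k δ i (bd y') = 0 := by
  unfold WW Wf PP SS
  rw [Vk_far hδ i (far_bd_m hδ2 y'), Vk_far hδ i (far_bd_p hδ2 y'), bd_zero, bd_rs, norm_bd_m,
    norm_bd_p]
  have : rs i * rs i = 1 := by unfold rs; split_ifs <;> norm_num
  linear_combination (-(2 + k) * ((√(1 + ‖(WithLp.toLp 2 y' : Eu N)‖ ^ 2) ^ (N + 1))⁻¹ *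
    (bd y' + (-e0 N)) i)) * this

theorem SS_bd {N : ℕ} {δ : ℝ} (hδ : 0 < δ) (hδ2 : δ < 1 / 2) (i : Fin (N + 1))
    (y' : Fin N → ℝ) : pd 0 (SS δ i) (bd y') = - rs i * Tk δ i y' := by
  unfold Tk
  rw [pd_SS, pd_PP, pd_Vk_far hδ i 0 (far_bd_m hδ2 y'), pd_Vk_far hδ i 0 (far_bd_p hδ2 y'),
    norm_bd_m, norm_bd_p, bd_rs, bd_rs]
  by_cases hi : i = 0
  · subst hi
    simp only [rs, if_true]
    ring
  · simp only [rs, hi, Ne.symm hi, if_true, if_false]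
    ring

theorem ker_bd {N : ℕ} (k : ℝ) {δ : ℝ} (hδ : 0 < δ) (hδ2 : δ < 1 / 2) (i : Fin (N + 1))
    (y' : Fin N → ℝ) : pd 0 (WW k δ i) (bd y') = (4 + 2 * k + 2 * k * rs i) * Tk δ i y' := by
  unfold WW
  have h := pd_Wf k (contDiff_PP (N := N) hδ) (contDiff_SS hδ) i 0 (bd y')
  have e : (fun y => Wf k (PP (N := N) δ) (SS δ) i y) = Wf k (PP δ) (SS δ) i := rfl
  rw [e, h, SS_symm hδ i 0, SS_bd hδ hδ2, bd_zero]
  have : rs i * rs i = 1 := by unfold rs; split_ifs <;> norm_num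
  simp only [if_true]
  change _ * (Tk δ i y' - _) - _ = _
  linear_combination ((2 + k) * Tk δ i y') * this

theorem dvg_WW_bd {N : ℕ} (k : ℝ) {δ : ℝ} (hδ : 0 < δ) (hδ2 : δ < 1 / 2)
    (y' : Fin N → ℝ) : dvg (WW (N := N) k δ) (bd y') = 4 * Tk δ 0 y' := by
  have h := dvg_Wf k (contDiff_PP (N := N) hδ) (contDiff_SS hδ) (SS_symm hδ) (bd y')
    (dvg_SS_ev hδ hδ2 (bd_zero y').ge)
  have e : WW (N := N) k δ = Wf k (PP δ) (SS δ) := rfl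
  rw [e, h, dvg_PP, dvg_Vk_far hδ (far_bd_m hδ2 y'), SS_bd hδ hδ2]
  simp [rs]

theorem Tk_sq {N : ℕ} {δ : ℝ} (hN : 1 ≤ N) (hδ : 0 < δ) (hδ2 : δ < 1 / 2) (y' : Fin N → ℝ) :
    ∑ i, Tk δ i y' ^ 2 = fT N ‖(WithLp.toLp 2 y' : Eu N)‖ ^ 2 := by
  have hN1 : (1:ℝ) ≤ N := by exact_mod_cast hN
  have hT : ∀ i, Tk δ i y' = (if 0 = i then 1 else 0) * (‖bd y' + (-e0 N)‖ ^ (N + 1))⁻¹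
      + (N + 1) * (bd y' + (-e0 N)) i * (‖bd y' + (-e0 N)‖ ^ (N + 3))⁻¹ := by
    intro i
    unfold Tk
    rw [pd_PP, pd_Vk_far hδ i 0 (far_bd_m hδ2 y')]
    have : (bd y' + (-e0 N)) 0 = -1 := by simp [bd, e0]
    rw [this]; ring
  set z := bd y' + (-e0 N) with hz
  have hs : ∑ i, z i ^ 2 = ‖z‖ ^ 2 := (EuclideanSpace.real_norm_sq_eq z).symm
  have hz0 : z 0 = -1 := by simp [hz, bd, e0]
  have hr : 0 < ‖z‖ := hδ.trans (far_bd_m hδ2 y')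
  have hr2 : ‖z‖ ^ 2 = 1 + ‖(WithLp.toLp 2 y' : Eu N)‖ ^ 2 := by
    rw [hz, norm_bd_m, Real.sq_sqrt (by positivity)]
  unfold fT
  rw [← norm_bd_m, ← hz, mul_pow, Real.sq_sqrt (by
    have : 0 ≤ (N + 1 : ℝ) * (N - 1) := mul_nonneg (by positivity) (by linarith)
    positivity), ← hr2]
  set A := (‖z‖ ^ (N + 1))⁻¹
  set B := (‖z‖ ^ (N + 3))⁻¹
  have hB : B = A * (‖z‖ ^ 2)⁻¹ := by
    simp only [A, B]; rw [← mul_inv, ← pow_add]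
  have h1 : ∀ i, Tk δ i y' ^ 2 = (if 0 = i then A ^ 2 + 2 * A * ((N + 1) * z i * B) else 0)
      + (N + 1) ^ 2 * B ^ 2 * z i ^ 2 := by
    intro i
    rw [hT]
    split_ifs <;> ring
  simp only [h1]
  rw [Finset.sum_add_distrib, ← Finset.mul_sum, hs, Finset.sum_ite_eq, if_pos (Finset.mem_univ _),
    hz0, hB]
  field_simp
  ring

theorem coord_shift {N : ℕ} {δ : ℝ} (hδ2 : δ < 1 / 2) {y : Eu (N + 1)} {R : ℝ} (hR : 2 ≤ R) (hy : R ≤ ‖y‖)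
    (v : Eu (N + 1)) (hv : ‖v‖ = 1) : δ < ‖y + v‖ ∧ R / 2 ≤ ‖y + v‖ := by
  have : ‖y‖ ≤ ‖y + v‖ + ‖v‖ := by simpa using norm_sub_le (y + v) v
  constructor <;> linarith

theorem inv_pow_bd {R r : ℝ} (hR : 2 ≤ R) (h : R / 2 ≤ r) (m : ℕ) :
    (r ^ m)⁻¹ ≤ 2 ^ m * (R ^ m)⁻¹ := by
  have h1 : (r ^ m)⁻¹ ≤ ((R / 2) ^ m)⁻¹ := by gcongr
  refine h1.trans (le_of_eq ?_)
  rw [div_pow]; field_simp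

/-- decay of the test field -/
theorem WW_decay {N : ℕ} (k : ℝ) {δ : ℝ} (hδ : 0 < δ) (hδ2 : δ < 1 / 2) :
    ∃ A : ℝ, 0 ≤ A ∧ ∀ R, 2 ≤ R → ∀ y : Eu (N + 1), 0 ≤ y 0 → R ≤ ‖y‖ → ‖y‖ ≤ 2 * R →
      ∀ i j, |WW k δ i y| ≤ A * (R ^ N)⁻¹ ∧ |pd j (WW k δ i) y| ≤ A * (R ^ (N + 1))⁻¹ := by
  have hrs : ∀ i : Fin (N + 1), |rs i| = 1 := by
    intro i; unfold rs; split_ifs <;> simp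
  refine ⟨|2 + k| * (2 * 2 ^ (N + 1) * (N + 2)) + 2 * |k| * ((2 + 2) * (2 ^ (N + 2) * ((N + 1) * (N + 6)))),
    by positivity, ?_⟩
  intro R hR y hy0 hy1 hy2 i j
  obtain ⟨m1, m2⟩ := coord_shift (δ := δ) hδ2 hR hy1 (-e0 N) (by rw [norm_neg, norm_e0])
  obtain ⟨p1, p2⟩ := coord_shift (δ := δ) hδ2 hR hy1 (e0 N) (norm_e0 N)
  have hR0 : 0 < R := by linarith
  have hyc : |y 0| ≤ 2 * R := (abs_coord_le y 0).trans hy2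
  have eN : (0:ℝ) ≤ N := by positivity
  have hNN : (2:ℝ) ^ (N + 1) * (N + 2) ≤ 2 ^ (N + 2) * ((N + 1) * (N + 6)) := by
    rw [pow_succ 2 (N + 1), mul_assoc]
    gcongr
    nlinarith
  have h2N : (2:ℝ) ^ N ≤ 2 ^ (N + 1) * (N + 2) := by
    have : (1:ℝ) ≤ 2 ^ N := one_le_pow₀ (by norm_num)
    rw [pow_succ]; nlinarith
  constructor
  · have a1 : |PP δ i y| ≤ 2 ^ (N + 1) * (N + 2) * (R ^ N)⁻¹ :=
      (Vk_bd0 hδ i m1).trans ((inv_pow_bd hR m2 N).trans (by gcongr))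
    have a2 : |SS δ i y| ≤ 2 ^ (N + 1) * (N + 2) * (R ^ N)⁻¹ :=
      (Vk_bd0 hδ i p1).trans ((inv_pow_bd hR p2 N).trans (by gcongr))
    have a3 : |pd i (SS δ 0) y| ≤ 2 ^ (N + 2) * ((N + 1) * (N + 6)) * (R ^ (N + 1))⁻¹ := by
      rw [pd_SS]
      refine (Vk_bd1 hδ 0 i p1).trans ?_
      calc (N + 2 : ℝ) * (‖y + e0 N‖ ^ (N + 1))⁻¹ ≤ (N + 2) * (2 ^ (N + 1) * (R ^ (N + 1))⁻¹) := by
            gcongr; exact inv_pow_bd hR p2 _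
        _ = (2 ^ (N + 1) * (N + 2)) * (R ^ (N + 1))⁻¹ := by ring
        _ ≤ _ := by gcongr
    have a4 : |y 0 * pd i (SS δ 0) y| ≤ 2 * (2 ^ (N + 2) * ((N + 1) * (N + 6))) * (R ^ N)⁻¹ := by
      rw [abs_mul]
      calc |y 0| * |pd i (SS δ 0) y| ≤ (2 * R) * (2 ^ (N + 2) * ((N + 1) * (N + 6)) * (R ^ (N + 1))⁻¹) := by
            gcongr
        _ = _ := by rw [pow_succ R N]; field_simp
    unfold WW Wf
    calc |(2 + k) * (PP δ i y - rs i * SS δ i y) - 2 * k * (y 0 * pd i (SS δ 0) y)|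
        ≤ |2 + k| * (|PP δ i y| + |SS δ i y|) + 2 * |k| * |y 0 * pd i (SS δ 0) y| := by
          refine (abs_sub _ _).trans ?_
          rw [abs_mul, abs_mul (2 * k), abs_mul 2 k, abs_two]
          gcongr
          refine (abs_sub _ _).trans ?_
          rw [abs_mul, hrs, one_mul]
      _ ≤ |2 + k| * (2 ^ (N + 1) * (N + 2) * (R ^ N)⁻¹ + 2 ^ (N + 1) * (N + 2) * (R ^ N)⁻¹)
          + 2 * |k| * (2 * (2 ^ (N + 2) * ((N + 1) * (N + 6))) * (R ^ N)⁻¹) := by gcongr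
      _ = (|2 + k| * (2 * 2 ^ (N + 1) * (N + 2)) +
            2 * |k| * (2 * (2 ^ (N + 2) * ((N + 1) * (N + 6))))) * (R ^ N)⁻¹ := by ring
      _ ≤ _ := by
          gcongr; norm_num
  · have a1 : |pd j (PP δ i) y| ≤ 2 ^ (N + 1) * (N + 2) * (R ^ (N + 1))⁻¹ := by
      rw [pd_PP]
      refine (Vk_bd1 hδ i j m1).trans ?_
      calc (N + 2 : ℝ) * (‖y + -e0 N‖ ^ (N + 1))⁻¹ ≤ (N + 2) * (2 ^ (N + 1) * (R ^ (N + 1))⁻¹) := by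
            gcongr; exact inv_pow_bd hR m2 _
        _ = (2 ^ (N + 1) * (N + 2)) * (R ^ (N + 1))⁻¹ := by ring
    have a2 : ∀ a b, |pd b (SS δ a) y| ≤ 2 ^ (N + 1) * (N + 2) * (R ^ (N + 1))⁻¹ := by
      intro a b
      rw [pd_SS]
      refine (Vk_bd1 hδ a b p1).trans ?_
      calc (N + 2 : ℝ) * (‖y + e0 N‖ ^ (N + 1))⁻¹ ≤ (N + 2) * (2 ^ (N + 1) * (R ^ (N + 1))⁻¹) := by
            gcongr; exact inv_pow_bd hR p2 _
        _ = (2 ^ (N + 1) * (N + 2)) * (R ^ (N + 1))⁻¹ := by ring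
    have a3 : |pd j (pd i (SS δ 0)) y| ≤ 2 ^ (N + 2) * ((N + 1) * (N + 6)) * (R ^ (N + 2))⁻¹ := by
      rw [pd_pd_SS]
      refine (Vk_bd2 hδ 0 i j p1).trans ?_
      calc (N + 1 : ℝ) * (N + 6) * (‖y + e0 N‖ ^ (N + 2))⁻¹
          ≤ (N + 1) * (N + 6) * (2 ^ (N + 2) * (R ^ (N + 2))⁻¹) := by
            gcongr; exact inv_pow_bd hR p2 _
        _ = _ := by ring
    have a4 : |y 0 * pd j (pd i (SS δ 0)) y| ≤
        2 * (2 ^ (N + 2) * ((N + 1) * (N + 6))) * (R ^ (N + 1))⁻¹ := by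
      rw [abs_mul]
      calc |y 0| * |pd j (pd i (SS δ 0)) y|
          ≤ (2 * R) * (2 ^ (N + 2) * ((N + 1) * (N + 6)) * (R ^ (N + 2))⁻¹) := by
            gcongr
        _ = _ := by rw [pow_succ R (N + 1)]; field_simp
    have a5 : |(if j = 0 then 1 else 0) * pd i (SS δ 0) y| ≤
        2 ^ (N + 2) * ((N + 1) * (N + 6)) * (R ^ (N + 1))⁻¹ := by
      rw [abs_mul]
      calc |(if j = 0 then (1:ℝ) else 0)| * |pd i (SS δ 0) y|
          ≤ 1 * (2 ^ (N + 1) * (N + 2) * (R ^ (N + 1))⁻¹) := by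
            gcongr
            · exact ite_abs_le
            · exact a2 0 i
        _ ≤ _ := by rw [one_mul]; gcongr
    have h := pd_Wf k (contDiff_PP (N := N) hδ) (contDiff_SS hδ) i j y
    have e : (WW (N := N) k δ i) = Wf k (PP δ) (SS δ) i := rfl
    rw [e, h]
    calc |(2 + k) * (pd j (PP δ i) y - rs i * pd j (SS δ i) y) -
          2 * k * ((if j = 0 then 1 else 0) * pd i (SS δ 0) y + y 0 * pd j (pd i (SS δ 0)) y)|
        ≤ |2 + k| * (|pd j (PP δ i) y| + |pd j (SS δ i) y|) + 2 * |k| *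
          (|(if j = 0 then 1 else 0) * pd i (SS δ 0) y| + |y 0 * pd j (pd i (SS δ 0)) y|) := by
          refine (abs_sub _ _).trans ?_
          rw [abs_mul, abs_mul (2 * k), abs_mul 2 k, abs_two]
          gcongr
          · refine (abs_sub _ _).trans ?_
            rw [abs_mul, hrs, one_mul]
          · exact abs_add_le _ _
      _ ≤ |2 + k| * (2 ^ (N + 1) * (N + 2) * (R ^ (N + 1))⁻¹ + 2 ^ (N + 1) * (N + 2) * (R ^ (N + 1))⁻¹)
          + 2 * |k| * (2 ^ (N + 2) * ((N + 1) * (N + 6)) * (R ^ (N + 1))⁻¹ +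
            2 * (2 ^ (N + 2) * ((N + 1) * (N + 6))) * (R ^ (N + 1))⁻¹) := by
          gcongr
          exact a2 _ _
      _ = (|2 + k| * (2 * 2 ^ (N + 1) * (N + 2)) +
            2 * |k| * ((1 + 2) * (2 ^ (N + 2) * ((N + 1) * (N + 6))))) * (R ^ (N + 1))⁻¹ := by ring
      _ ≤ _ := by
          gcongr; norm_num



theorem Lop_mul {n : ℕ} (k : ℝ) {χ : Eu n → ℝ} {W : Fin n → Eu n → ℝ}
    (hχ : ContDiff ℝ 3 χ) (hW : ∀ i, ContDiff ℝ 3 (W i)) (i : Fin n) (y : Eu n) :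
    Lop k (fun i y => χ y * W i y) i y = χ y * Lop k W i y +
      (∑ j, (2 * (pd j χ y * pd j (W i) y) + pd j (pd j χ) y * W i y) +
        k * ∑ j, (pd i χ y * pd j (W j) y + pd i (pd j χ) y * W j y
          + pd j χ y * pd i (W j) y)) := by
  have dd : ∀ {f : Eu n → ℝ}, ContDiff ℝ 2 f → ∀ y, DifferentiableAt ℝ f y :=
    fun h y => (h.differentiable (by norm_num)) y
  have hχ2 : ContDiff ℝ 2 χ := hχ.of_le (by norm_num)
  have hW2 : ∀ i, ContDiff ℝ 2 (W i) := fun i => (hW i).of_le (by norm_num)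
  have hχp : ∀ j, ContDiff ℝ 2 (pd j χ) := fun j => contDiff_pd j hχ (by norm_num)
  have hWp : ∀ i j, ContDiff ℝ 2 (pd j (W i)) := fun i j => contDiff_pd j (hW i) (by norm_num)
  have h1 : ∀ i j, pd j (fun y => χ y * W i y) = fun y => pd j χ y * W i y + χ y * pd j (W i) y :=
    fun i j => funext fun y => pd_mul j (dd hχ2 y) (dd (hW2 i) y)
  have h2 : ∀ i j l, pd l (pd j (fun y => χ y * W i y)) y =
      pd l (pd j χ) y * W i y + pd j χ y * pd l (W i) y + (pd l χ y * pd j (W i) y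
        + χ y * pd l (pd j (W i)) y) := by
    intro i j l
    rw [h1, pd_add l (dd ((hχp j).mul (hW2 i)) y) (dd (hχ2.mul (hWp i j)) y),
      pd_mul l (dd (hχp j) y) (dd (hW2 i) y), pd_mul l (dd hχ2 y) (dd (hWp i j) y)]
  have hd : ∀ (g : Fin n → Eu n → ℝ), (∀ i, ContDiff ℝ 3 (g i)) →
      pd i (dvg g) y = ∑ j, pd i (pd j (g j)) y := by
    intro g hg
    unfold dvg
    rw [pd_sum]
    intro j _
    exact dd (contDiff_pd j (hg j) (by norm_num)) y
  unfold Lop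
  rw [lapl_eq, lapl_eq, hd _ (fun i => hχ.mul (hW i)), hd _ hW]
  simp only [h2, Finset.sum_add_distrib, ← Finset.mul_sum]
  ring

theorem pd_scale {n : ℕ} (i : Fin n) (c : ℝ) {f : Eu n → ℝ} (hf : Differentiable ℝ f) (y : Eu n) :
    pd i (fun z => f (c • z)) y = c * pd i f (c • y) := by
  unfold pd
  have h : HasFDerivAt (fun z : Eu n => c • z) (c • ContinuousLinearMap.id ℝ (Eu n)) y :=
    (hasFDerivAt_id y).const_smul c
  have := ((hf (c • y)).hasFDerivAt.comp y h).fderiv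
  have e : (fun z => f (c • z)) = f ∘ fun z => c • z := rfl
  rw [e, this]
  simp

/-- cutoff functions -/
theorem exists_cutoff (n : ℕ) : ∃ C : ℝ, 0 ≤ C ∧ ∀ R : ℝ, 0 < R → ∃ χ : Eu n → ℝ,
    ContDiff ℝ 3 χ ∧ (∀ y, ‖y‖ ≤ R → χ y = 1) ∧ (∀ y, 2 * R ≤ ‖y‖ → χ y = 0) ∧
    (∀ y, 0 ≤ χ y ∧ χ y ≤ 1) ∧ (∀ i y, |pd i χ y| ≤ C * R⁻¹) ∧
    (∀ i j y, |pd i (pd j χ) y| ≤ C * (R ^ 2)⁻¹) := by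
  let b : ContDiffBump (0 : Eu n) := ⟨1, 2, by norm_num, by norm_num⟩
  have hb : ContDiff ℝ 3 (b : Eu n → ℝ) := b.contDiff
  have hcs : HasCompactSupport (b : Eu n → ℝ) := b.hasCompactSupport
  have hp : ∀ (f : Eu n → ℝ), HasCompactSupport f → ∀ i, HasCompactSupport (pd i f) := by
    intro f hf i
    exact (hf.fderiv ℝ).comp_left (g := fun L : Eu n →L[ℝ] ℝ => L (EuclideanSpace.single i 1)) (by simp)
  have hbd : ∀ (f : Eu n → ℝ), HasCompactSupport f → Continuous f → ∃ C, ∀ y, ‖f y‖ ≤ C :=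
    fun f h1 h2 => h1.exists_bound_of_continuous h2
  have c1 : ∀ i, ∃ C, ∀ y, ‖pd i b y‖ ≤ C := fun i =>
    hbd _ (hp _ hcs i) (contDiff_pd i hb (a := 2) (by norm_num)).continuous
  have c2 : ∀ i j, ∃ C, ∀ y, ‖pd i (pd j b) y‖ ≤ C := fun i j =>
    hbd _ (hp _ (hp _ hcs j) i) (contDiff_pd i (contDiff_pd j hb (a := 2) (by norm_num))
      (a := 1) (by norm_num)).continuous
  choose C1 hC1 using c1
  choose C2 hC2 using c2
  refine ⟨∑ i, |C1 i| + ∑ i, ∑ j, |C2 i j|, by positivity, ?_⟩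
  have b1 : ∀ i y, |pd i b y| ≤ ∑ i, |C1 i| + ∑ i, ∑ j, |C2 i j| := by
    intro i y
    have h1 : |C1 i| ≤ ∑ i, |C1 i| :=
      Finset.single_le_sum (f := fun i => |C1 i|) (fun _ _ => abs_nonneg _) (Finset.mem_univ i)
    have h2 : 0 ≤ ∑ i, ∑ j, |C2 i j| := by positivity
    have h3 := hC1 i y
    rw [Real.norm_eq_abs] at h3
    linarith [le_abs_self (C1 i)]
  have b2 : ∀ i j y, |pd i (pd j b) y| ≤ ∑ i, |C1 i| + ∑ i, ∑ j, |C2 i j| := by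
    intro i j y
    have h1 : |C2 i j| ≤ ∑ j, |C2 i j| :=
      Finset.single_le_sum (f := fun j => |C2 i j|) (fun _ _ => abs_nonneg _) (Finset.mem_univ j)
    have h1' : ∑ j, |C2 i j| ≤ ∑ i, ∑ j, |C2 i j| :=
      Finset.single_le_sum (f := fun i => ∑ j, |C2 i j|) (fun _ _ => by positivity) (Finset.mem_univ i)
    have h2 : 0 ≤ ∑ i, |C1 i| := by positivity
    have h3 := hC2 i j y
    rw [Real.norm_eq_abs] at h3
    linarith [le_abs_self (C2 i j)]
  intro R hR
  have hs : ContDiff ℝ 3 (fun y : Eu n => (b : Eu n → ℝ) (R⁻¹ • y)) :=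
    hb.comp (contDiff_id.const_smul R⁻¹)
  have hn : ∀ y : Eu n, ‖R⁻¹ • y‖ = ‖y‖ / R := by
    intro y; rw [norm_smul, norm_inv, Real.norm_of_nonneg hR.le]; field_simp
  have p1 : ∀ i, pd i (fun y : Eu n => (b : Eu n → ℝ) (R⁻¹ • y)) = fun y => R⁻¹ * pd i b (R⁻¹ • y) :=
    fun i => funext fun y => pd_scale i _ (hb.differentiable (by norm_num)) y
  have dp : ∀ j, Differentiable ℝ (pd j (b : Eu n → ℝ)) := fun j =>
    (contDiff_pd j hb (a := 2) (by norm_num)).differentiable (by norm_num)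
  refine ⟨fun y => b (R⁻¹ • y), hs, ?_, ?_, fun y => ⟨b.nonneg, b.le_one⟩, ?_, ?_⟩
  · intro y hy
    apply b.one_of_mem_closedBall
    rw [mem_closedBall, dist_zero_right, hn]
    exact (div_le_one hR).2 hy
  · intro y hy
    apply b.zero_of_le_dist
    rw [dist_zero_right, hn]
    exact (le_div_iff₀ hR).2 hy
  · intro i y
    rw [p1, abs_mul, abs_of_pos (inv_pos.2 hR), mul_comm]
    gcongr
    exact b1 _ _
  · intro i j y
    rw [p1, pd_const_mul i]
    · rw [pd_scale i _ (dp j), ← mul_assoc, abs_mul, abs_of_pos (by positivity), mul_comm, pow_two, mul_inv]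
      gcongr
      exact b2 _ _ _
    · exact ((dp j) _).comp y (by fun_prop)

theorem integrable_of_zero {n : ℕ} {f : Eu n → ℝ} (hf : Continuous f) (R : ℝ)
    (h0 : ∀ y, R < ‖y‖ → f y = 0) : Integrable f := by
  apply hf.integrable_of_hasCompactSupport
  apply HasCompactSupport.intro (isCompact_closedBall (0 : Eu n) R)
  intro y hy
  apply h0
  simpa using hy



theorem dvg_PP_zero {N : ℕ} {δ : ℝ} (hδ : 0 < δ) (hδ2 : δ < 1 / 2) (y : Eu (N + 1))
    (hy : 3 / 2 ≤ ‖y‖) : dvg (PP (N := N) δ) y = 0 := by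
  rw [dvg_PP, dvg_Vk_far hδ]
  have : ‖y‖ ≤ ‖y + -e0 N‖ + ‖e0 N‖ := by simpa using norm_add_le (y + -e0 N) (e0 N)
  rw [norm_e0] at this
  linarith

theorem Lop_zero {n : ℕ} (k : ℝ) {g : Fin n → Eu n → ℝ} {ρ : ℝ} (h0 : ∀ i y, ρ ≤ ‖y‖ → g i y = 0)
    (i : Fin n) {y : Eu n} (hy : ρ < ‖y‖) : Lop k g i y = 0 := by
  obtain ⟨a, ha, hay⟩ := exists_between hy
  obtain ⟨b, hb, hby⟩ := exists_between hay
  have h1 : ∀ i j y, a ≤ ‖y‖ → pd j (g i) y = 0 := fun i j y hy =>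
    pd_eq_zero_of_ge (h0 i) j (by linarith)
  have h2 : ∀ y, a ≤ ‖y‖ → dvg g y = 0 := by
    intro y hy; simp [dvg, h1 _ _ y hy]
  unfold Lop
  rw [lapl_eq, pd_eq_zero_of_ge h2 i hay]
  simp [pd_eq_zero_of_ge (h1 i _) _ hay]

theorem continuous_Lop {n : ℕ} (k : ℝ) {g : Fin n → Eu n → ℝ} (hg : ∀ i, ContDiff ℝ 3 (g i))
    (i : Fin n) : Continuous (Lop k g i) := by
  unfold Lop
  apply Continuous.add
  · change Continuous (fun y => ∑ j, pd j (pd j (g i)) y)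
    apply continuous_finsetSum
    intro j _
    exact (contDiff_pd j (contDiff_pd j (hg i) (a := 2) (by norm_num)) (a := 1)
      (by norm_num)).continuous
  · exact continuous_const.mul
      (contDiff_pd i (contDiff_dvg hg (a := 2) (by norm_num)) (a := 1) (by norm_num)).continuous

theorem err_bound {N : ℕ} (k : ℝ) {c c2 w w2 : ℝ} (p : Fin (N + 1) → ℝ)
    (q W : Fin (N + 1) → ℝ) (pp D : Fin (N + 1) → Fin (N + 1) → ℝ)
    (h1 : ∀ i, |p i| ≤ c) (h2 : ∀ i j, |pp i j| ≤ c2) (h3 : ∀ i, |W i| ≤ w)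
    (h4 : ∀ i j, |D i j| ≤ w2) (i : Fin (N + 1)) :
    |∑ j, (2 * (p j * D j i) + pp j j * W i) +
        k * ∑ j, (p i * D j j + pp i j * W j + p j * D i j)| ≤
      (N + 1) * (2 * (1 + |k|) * (c * w2) + (1 + |k|) * (c2 * w)) := by
  have hc : 0 ≤ c := (abs_nonneg _).trans (h1 0)
  have hc2 : 0 ≤ c2 := (abs_nonneg _).trans (h2 0 0)
  have m1 : ∀ a b d, |p a * D b d| ≤ c * w2 := by
    intro a b d; rw [abs_mul]; exact mul_le_mul (h1 a) (h4 b d) (abs_nonneg _) hc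
  have m2 : ∀ a b d, |pp a b * W d| ≤ c2 * w := by
    intro a b d; rw [abs_mul]; exact mul_le_mul (h2 a b) (h3 d) (abs_nonneg _) hc2
  have s1 : |∑ j, (2 * (p j * D j i) + pp j j * W i)| ≤ (N + 1) * (2 * (c * w2) + c2 * w) := by
    refine (Finset.abs_sum_le_sum_abs _ _).trans ?_
    refine (Finset.sum_le_card_nsmul _ _ (2 * (c * w2) + c2 * w) ?_).trans
      (le_of_eq (by simp; ring))
    intro j _
    refine (abs_add_le _ _).trans ?_
    rw [abs_mul, abs_two]
    linarith [m1 j j i, m2 j j i]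
  have s2 : |∑ j, (p i * D j j + pp i j * W j + p j * D i j)| ≤ (N + 1) * (2 * (c * w2) + c2 * w) := by
    refine (Finset.abs_sum_le_sum_abs _ _).trans ?_
    refine (Finset.sum_le_card_nsmul _ _ (2 * (c * w2) + c2 * w) ?_).trans
      (le_of_eq (by simp; ring))
    intro j _
    refine (abs_add_three _ _ _).trans ?_
    linarith [m1 i j j, m2 i j j, m1 j i j]
  refine (abs_add_le _ _).trans ?_
  rw [abs_mul]
  have := mul_le_mul_of_nonneg_left s2 (abs_nonneg k)
  nlinarith

theorem cs_bound {n : ℕ} (a b : Fin n → ℝ) {M f : ℝ} (hM : 0 ≤ M) (hf : 0 ≤ f)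
    (ha : ∑ i, a i ^ 2 ≤ M ^ 2) (hb : ∑ i, b i ^ 2 = f ^ 2) : |∑ i, a i * b i| ≤ M * f := by
  apply abs_le_of_sq_le_sq _ (by positivity)
  refine (Finset.sum_mul_sq_le_sq_mul_sq _ _ _).trans ?_
  rw [hb, mul_pow]
  gcongr

theorem half_step1 {N : ℕ} (hN : 1 ≤ N) {k : ℝ} (hk : -1 < k) {u : Fin (N + 1) → Eu (N + 1) → ℝ}
    (hu : ∀ i, ContDiff ℝ 2 (u i)) {M : ℝ} (hM0 : 0 ≤ M)
    (hM : ∀ y ∈ HS N, ∑ i, u i y ^ 2 ≤ M ^ 2) (hL : ∀ y ∈ HS N, ∀ i, Lop k u i y = 0)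
    {δ : ℝ} (hδ : 0 < δ) (hδ2 : δ < 1 / 2) :
    (2 + k) * |∫ y in HS N, ∑ i, u i y * pd i (dvg (PP δ)) y| ≤
      4 * (M * ∫ y : Fin N → ℝ, fT N ‖(WithLp.toLp 2 y : Eu N)‖) := by
  obtain ⟨C, hC0, hC⟩ := exists_cutoff (N + 1)
  obtain ⟨A, hA0, hA⟩ := WW_decay (N := N) k hδ hδ2
  set D := ∫ y in HS N, ∑ i, u i y * pd i (dvg (PP δ)) y with hD
  set I := ∫ y : Fin N → ℝ, fT N ‖(WithLp.toLp 2 y : Eu N)‖ with hI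
  have hum : ∀ y ∈ HS N, ∀ i, |u i y| ≤ M := by
    intro y hy i
    apply abs_le_of_sq_le_sq _ hM0
    refine le_trans ?_ (hM y hy)
    exact Finset.single_le_sum (f := fun i => u i y ^ 2) (fun _ _ => sq_nonneg _) (Finset.mem_univ i)
  set K : ℝ := (N + 1) * (M * ((N + 1) * (3 * (1 + |k|) * (C * A)))) *
    (2 ^ (N + 1) * (volume : Measure (Eu (N + 1))).real (ball 0 1)) with hK
  have main : ∀ R : ℝ, 2 ≤ R → (1 + k) * (2 + k) * |D| ≤ 4 * (1 + k) * (M * I) + K * R⁻¹ := by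
    intro R hR
    have hR0 : 0 < R := by linarith
    obtain ⟨χ, hχ, hχ1, hχ0, hχb, hχp, hχpp⟩ := hC R hR0
    set g : Fin (N + 1) → Eu (N + 1) → ℝ := fun i y => χ y * WW k δ i y with hg
    have hgd : ∀ i, ContDiff ℝ 3 (g i) := fun i => hχ.mul (contDiff_WW k hδ i)
    have hg0 : ∀ i y, 2 * R ≤ ‖y‖ → g i y = 0 := by
      intro i y hy; simp [hg, hχ0 y hy]
    have hgb : ∀ i y', g i (bd y') = 0 := by
      intro i y'; simp [hg, WW_bd k hδ hδ2]
    have gr := green k u g hu (fun i => (hgd i).of_le (by norm_num)) (2 * R) (by linarith) hg0 hgb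
    have hdP : ContDiff ℝ 3 (dvg (PP (N := N) δ)) := contDiff_dvg (contDiff_PP hδ) (by norm_num)
    set Er : Fin (N + 1) → Eu (N + 1) → ℝ := fun i y =>
      Lop k g i y - (1 + k) * (2 + k) * pd i (dvg (PP δ)) y with hEr
    have hpz : ∀ i (y : Eu (N + 1)), 3 / 2 < ‖y‖ → pd i (dvg (PP δ)) y = 0 := fun i y hy =>
      pd_eq_zero_of_ge (dvg_PP_zero hδ hδ2) i hy
    have hErz : ∀ i y, 2 * R < ‖y‖ → Er i y = 0 := by
      intro i y hy
      simp only [hEr]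
      rw [Lop_zero k hg0 i hy, hpz i y (by linarith)]; ring
    have hErc : ∀ i, Continuous (Er i) := by
      intro i
      exact (continuous_Lop k hgd i).sub (continuous_const.mul
        (contDiff_pd i hdP (a := 2) (by norm_num)).continuous)
    have hErf : ∀ i, ∀ y ∈ HS N, Er i y =
        (∑ j, (2 * (pd j χ y * pd j (WW k δ i) y) + pd j (pd j χ) y * WW k δ i y) +
        k * ∑ j, (pd i χ y * pd j (WW k δ j) y + pd i (pd j χ) y * WW k δ j y
          + pd j χ y * pd i (WW k δ j) y)) := by
      intro i y hy
      simp only [hEr]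
      rw [hg, Lop_mul k hχ (contDiff_WW k hδ), Lop_WW k hδ hδ2 hy]
      have : χ y * pd i (dvg (PP δ)) y = pd i (dvg (PP δ)) y := by
        by_cases h : ‖y‖ ≤ R
        · rw [hχ1 y h, one_mul]
        · rw [hpz i y (by linarith), mul_zero]
      linear_combination (1 + k) * (2 + k) * this
    have hErb : ∀ i, ∀ y ∈ HS N, |Er i y| ≤ (N + 1) * (3 * (1 + |k|) * (C * A)) * (R ^ (N + 2))⁻¹ := by
      intro i y hy
      by_cases h1 : ‖y‖ < R
      · have hone : χ =ᶠ[nhds y] fun _ => 1 := by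
          have : ∀ᶠ z in nhds y, ‖z‖ < R := continuous_norm.continuousAt.eventually (gt_mem_nhds h1)
          filter_upwards [this] with z hz using hχ1 z hz.le
        have hp : ∀ j, pd j χ =ᶠ[nhds y] fun _ => 0 := by
          intro j
          refine (pd_congr_ev j hone).trans ?_
          filter_upwards with z
          simp [pd]
        have hp0 : ∀ j, pd j χ y = 0 := fun j => (hp j).eq_of_nhds
        have hpp0 : ∀ l j, pd l (pd j χ) y = 0 := by
          intro l j; rw [pd_congr l (hp j)]; simp [pd]
        rw [hErf i y hy]
        simp only [hp0, hpp0]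
        simp
        positivity
      · by_cases h2 : 2 * R < ‖y‖
        · rw [hErz i y h2]; simp; positivity
        · push Not at h1 h2
          rw [hErf i y hy]
          refine (err_bound k (fun j => pd j χ y) (fun j => pd j χ y) (fun j => WW k δ j y)
            (fun a b => pd a (pd b χ) y) (fun a b => pd a (WW k δ b) y)
            (fun j => hχp j y) (fun a b => hχpp a b y)
            (fun a => (hA R hR y hy h1 h2 a a).1) (fun a b => (hA R hR y hy h1 h2 b a).2) i).trans ?_
          apply le_of_eq
          have e1 : C * R⁻¹ * (A * (R ^ (N + 1))⁻¹) = C * A * (R ^ (N + 2))⁻¹ := by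
            rw [pow_succ R (N + 1), mul_inv]; ring
          have e2 : C * (R ^ 2)⁻¹ * (A * (R ^ N)⁻¹) = C * A * (R ^ (N + 2))⁻¹ := by
            rw [pow_add R N 2, mul_inv]; ring
          rw [e1, e2]; ring
    -- integrability
    have iD : Integrable (fun y => ∑ i, u i y * pd i (dvg (PP δ)) y) := by
      apply integrable_of_zero _ (3 / 2)
      · intro y hy; simp [hpz _ y hy]
      · apply continuous_finsetSum
        intro i _
        exact (hu i).continuous.mul (contDiff_pd i hdP (a := 2) (by norm_num)).continuous
    have iE : Integrable (fun y => ∑ i, u i y * Er i y) := by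
      apply integrable_of_zero _ (2 * R)
      · intro y hy; simp [hErz _ y hy]
      · apply continuous_finsetSum
        intro i _
        exact (hu i).continuous.mul (hErc i)
    have lhs : ∫ y in HS N, ∑ i, (g i y * Lop k u i y - u i y * Lop k g i y) =
        -((1 + k) * (2 + k)) * D - ∫ y in HS N, ∑ i, u i y * Er i y := by
      rw [hD, ← integral_const_mul, ← integral_sub (iD.const_mul _).integrableOn iE.integrableOn]
      apply setIntegral_congr_fun (measurableSet_HS N)
      intro y hy
      simp only []
      rw [Finset.mul_sum, ← Finset.sum_sub_distrib]
      apply Finset.sum_congr rfl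
      intro i _
      rw [hL y hy i]
      simp only [hEr]
      ring
    have bE : |∫ y in HS N, ∑ i, u i y * Er i y| ≤ K * R⁻¹ := by
      have hsub : HS N ∩ closedBall 0 (2 * R) ⊆ HS N := Set.inter_subset_left
      have hms : MeasurableSet (HS N ∩ closedBall 0 (2 * R)) :=
        (measurableSet_HS N).inter measurableSet_closedBall
      have e1 : ∫ y in HS N, ∑ i, u i y * Er i y =
          ∫ y in HS N ∩ closedBall 0 (2 * R), ∑ i, u i y * Er i y := by
        apply setIntegral_eq_of_subset_of_forall_sdiff_eq_zero (measurableSet_HS N) hsub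
        intro y hy
        have : 2 * R < ‖y‖ := by
          by_contra h
          exact hy.2 ⟨hy.1, by simpa using not_lt.1 h⟩
        simp [hErz _ y this]
      have hfin : volume (HS N ∩ closedBall (0 : Eu (N + 1)) (2 * R)) < ⊤ :=
        (measure_mono Set.inter_subset_right).trans_lt measure_closedBall_lt_top
      rw [e1, ← Real.norm_eq_abs]
      refine (norm_setIntegral_le_of_norm_le_const hfin
        (C := (N + 1) * (M * ((N + 1) * (3 * (1 + |k|) * (C * A)) * (R ^ (N + 2))⁻¹))) ?_).trans ?_
      · intro y hy
        rw [Real.norm_eq_abs]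
        refine (Finset.abs_sum_le_sum_abs _ _).trans ?_
        refine (Finset.sum_le_card_nsmul _ _
          (M * ((N + 1) * (3 * (1 + |k|) * (C * A)) * (R ^ (N + 2))⁻¹)) ?_).trans (by simp)
        intro i _
        rw [abs_mul]
        exact mul_le_mul (hum y hy.1 i) (hErb i y hy.1) (abs_nonneg _) hM0
      · have hv : (volume : Measure (Eu (N + 1))).real (HS N ∩ closedBall 0 (2 * R)) ≤
            (2 * R) ^ (N + 1) * (volume : Measure (Eu (N + 1))).real (ball 0 1) := by
          refine (measureReal_mono Set.inter_subset_right measure_closedBall_lt_top.ne).trans ?_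
          apply le_of_eq
          rw [measureReal_def, Measure.addHaar_closedBall _ _ (by linarith), ENNReal.toReal_mul,
            ENNReal.toReal_ofReal (by positivity)]
          simp [measureReal_def]
        refine (mul_le_mul_of_nonneg_left hv (by positivity)).trans (le_of_eq ?_)
        rw [hK, mul_pow, pow_succ R (N + 1)]
        field_simp
    have rhs : |∫ y' : Fin N → ℝ, (∑ i, u i (bd y') * pd 0 (g i) (bd y')
        + k * (u 0 (bd y') * dvg g (bd y')))| ≤ 4 * (1 + k) * (M * I) := by
      have hpw : ∀ y' : Fin N → ℝ, (∑ i, u i (bd y') * pd 0 (g i) (bd y')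
        + k * (u 0 (bd y') * dvg g (bd y'))) =
          χ (bd y') * (4 * (1 + k)) * ∑ i, u i (bd y') * Tk δ i y' := by
        intro y'
        have hpg : ∀ i j, pd j (g i) (bd y') = χ (bd y') * pd j (WW k δ i) (bd y') := by
          intro i j
          rw [hg, pd_mul j (hχ.differentiable (by norm_num) _)
            ((contDiff_WW k hδ i).differentiable (by norm_num) _), WW_bd k hδ hδ2]
          ring
        have hdg : dvg g (bd y') = χ (bd y') * (4 * Tk δ 0 y') := by
          rw [← dvg_WW_bd k hδ hδ2]
          unfold dvg
          simp only [hpg]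
          rw [Finset.mul_sum]
        rw [hdg]
        simp only [hpg, ker_bd k hδ hδ2]
        rw [Fin.sum_univ_succ, Fin.sum_univ_succ]
        have e1 : ∀ i : Fin N, u i.succ (bd y') * (χ (bd y') *
            ((4 + 2 * k + 2 * k * rs i.succ) * Tk δ i.succ y')) =
            χ (bd y') * (4 * (1 + k)) * (u i.succ (bd y') * Tk δ i.succ y') := by
          intro i
          simp only [rs, Fin.succ_ne_zero, if_false]; ring
        simp only [e1]
        rw [← Finset.mul_sum]
        simp only [rs, if_true]
        ring
      simp only [hpw]
      rw [hI, ← integral_const_mul, ← integral_const_mul, ← Real.norm_eq_abs]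
      apply norm_integral_le_of_norm_le (((integrable_fT hN).const_mul M).const_mul (4 * (1 + k)))
      filter_upwards with y'
      rw [Real.norm_eq_abs, abs_mul, abs_of_nonneg (by
        have := (hχb (bd y')).1
        have : 0 < 1 + k := by linarith
        positivity)]
      have hcs := cs_bound (fun i => u i (bd y')) (fun i => Tk δ i y') hM0
        (fT_nonneg N ‖(WithLp.toLp 2 y' : Eu N)‖) (hM _ (bd_zero y').ge) (Tk_sq hN hδ hδ2 y')
      have h1k : 0 < 1 + k := by linarith
      refine mul_le_mul ?_ hcs (abs_nonneg _) (by positivity)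
      have := (hχb (bd y')).2
      nlinarith
    rw [lhs] at gr
    have h2 : (1 + k) * (2 + k) * D = - (∫ y in HS N, ∑ i, u i y * Er i y) -
      ∫ y' : Fin N → ℝ, (∑ i, u i (bd y') * pd 0 (g i) (bd y')
        + k * (u 0 (bd y') * dvg g (bd y'))) := by linarith
    have h3 : (1 + k) * (2 + k) * |D| = |(1 + k) * (2 + k) * D| := by
      rw [abs_mul, abs_of_pos (a := (1 + k) * (2 + k)) (mul_pos (by linarith) (by linarith))]
    rw [h3, h2]
    refine (abs_sub _ _).trans ?_
    rw [abs_neg]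
    linarith
  have lim : (1 + k) * (2 + k) * |D| ≤ 4 * (1 + k) * (M * I) := by
    have t : Tendsto (fun R : ℝ => 4 * (1 + k) * (M * I) + K * R⁻¹) atTop
        (nhds (4 * (1 + k) * (M * I) + K * 0)) :=
      tendsto_const_nhds.add (tendsto_inv_atTop_zero.const_mul K)
    rw [mul_zero, add_zero] at t
    apply ge_of_tendsto t
    filter_upwards [eventually_ge_atTop 2] with R hR using main R hR
  have h1k : 0 < 1 + k := by linarith
  nlinarith



theorem half_space {N : ℕ} (hN : 1 ≤ N) {k : ℝ} (hk : -1 < k) {u : Fin (N + 1) → Eu (N + 1) → ℝ}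
    (hu : ∀ i, ContDiff ℝ 2 (u i)) {M : ℝ} (hM0 : 0 ≤ M)
    (hM : ∀ y ∈ HS N, ∑ i, u i y ^ 2 ≤ M ^ 2) (hL : ∀ y ∈ HS N, ∀ i, Lop k u i y = 0) :
    (2 + k) * (sphereArea (N + 1) * |dvg u (e0 N)|) ≤
      4 * (M * ∫ y : Fin N → ℝ, fT N ‖(WithLp.toLp 2 y : Eu N)‖) := by
  set I := ∫ y : Fin N → ℝ, fT N ‖(WithLp.toLp 2 y : Eu N)‖ with hI
  have hw : 0 ≤ sphereArea (N + 1) := by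
    rw [sphereArea_eq (Nat.succ_pos N)]; positivity
  have hdu : ContDiff ℝ 1 (dvg u) := contDiff_dvg hu (by norm_num)
  have main : ∀ ε > 0, (2 + k) * (sphereArea (N + 1) * |dvg u (e0 N)|) ≤
      4 * (M * I) + (2 + k) * (sphereArea (N + 1) * ε) := by
    intro ε hε
    obtain ⟨δ₁, hδ₁, hδc⟩ := Metric.continuousAt_iff.1 (hdu.continuous.continuousAt (x := e0 N)) ε hε
    obtain ⟨δ, hδ, hδm⟩ := exists_between (lt_min hδ₁ (show (0:ℝ) < 1 / 2 by norm_num))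
    have hδ1 : δ < δ₁ := hδm.trans_le (min_le_left _ _)
    have hδ2 : δ < 1 / 2 := hδm.trans_le (min_le_right _ _)
    have hs := half_step1 hN hk hu hM0 hM hL hδ hδ2
    have hdP : ContDiff ℝ 3 (dvg (PP (N := N) δ)) := contDiff_dvg (contDiff_PP hδ) (by norm_num)
    have hpz : ∀ i (y : Eu (N + 1)), 3 / 2 < ‖y‖ → pd i (dvg (PP δ)) y = 0 := fun i y hy =>
      pd_eq_zero_of_ge (dvg_PP_zero hδ hδ2) i hy
    have iD : Integrable (fun y => ∑ i, u i y * pd i (dvg (PP δ)) y) := by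
      apply integrable_of_zero _ (3 / 2)
      · intro y hy; simp [hpz _ y hy]
      · apply continuous_finsetSum
        intro i _
        exact (hu i).continuous.mul (contDiff_pd i hdP (a := 2) (by norm_num)).continuous
    have iQ : Integrable (fun y => dvg u y * dvg (PP δ) y) := by
      apply integrable_of_zero (hdu.continuous.mul hdP.continuous) (3 / 2)
      intro y hy
      rw [Pi.mul_apply, dvg_PP_zero hδ hδ2 y hy.le, mul_zero]
    have iP : Integrable (fun y : Eu (N + 1) => dvg (PP δ) y) := by
      apply integrable_of_zero hdP.continuous (3 / 2)
      intro y hy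
      rw [dvg_PP_zero hδ hδ2 y hy.le]
    have e1 := div_half (fun i y => u i y * dvg (PP (N := N) δ) y)
      (fun i => ((hu i).of_le (by norm_num)).mul (hdP.of_le (by norm_num))) (3 / 2) (by norm_num)
      (by intro i y hy; rw [dvg_PP_zero hδ hδ2 y hy, mul_zero])
    have hb0 : ∀ y' : Fin N → ℝ, u 0 (bd y') * dvg (PP (N := N) δ) (bd y') = 0 := by
      intro y'
      rw [dvg_PP, dvg_Vk_far hδ (far_bd_m hδ2 y'), mul_zero]
    have e2 : ∀ y, ∑ i, pd i (fun y => u i y * dvg (PP (N := N) δ) y) y =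
        dvg u y * dvg (PP δ) y + ∑ i, u i y * pd i (dvg (PP δ)) y := by
      intro y
      have : dvg u y * dvg (PP (N := N) δ) y = ∑ i, pd i (u i) y * dvg (PP δ) y := by
        rw [← Finset.sum_mul]; rfl
      rw [this, ← Finset.sum_add_distrib]
      apply Finset.sum_congr rfl
      intro i _
      rw [pd_mul i ((hu i).differentiable (by norm_num) _) (hdP.differentiable (by norm_num) _)]
    simp only [hb0, e2] at e1
    rw [integral_add iQ.integrableOn iD.integrableOn] at e1
    simp only [integral_zero, neg_zero] at e1
    have e3 : ∫ y in HS N, dvg u y * dvg (PP (N := N) δ) y = ∫ y, dvg u y * dvg (PP δ) y := by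
      apply setIntegral_eq_integral_of_forall_compl_eq_zero
      intro y hy
      have hy0 : y 0 < 0 := not_le.1 hy
      rw [dvg_PP, dvg_Vk_far hδ, mul_zero]
      have := abs_coord_le (y + -e0 N) 0
      have h2 : (y + -e0 N) 0 = y 0 - 1 := by simp [e0, sub_eq_add_neg]
      rw [h2, abs_of_neg (by linarith)] at this
      linarith
    have e4 : ∫ y, dvg (PP (N := N) δ) y = sphereArea (N + 1) := by
      simp only [dvg_PP]
      rw [integral_add_right_eq_self (fun y => dvg (Vk (N := N) δ) y), integral_dvg_Vk hδ]
    have e5 : |∫ y, (dvg u y - dvg u (e0 N)) * dvg (PP (N := N) δ) y| ≤ ε * sphereArea (N + 1) := by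
      rw [← e4, ← integral_const_mul, ← Real.norm_eq_abs]
      apply norm_integral_le_of_norm_le (iP.const_mul ε)
      filter_upwards with y
      have hP0 : 0 ≤ dvg (PP (N := N) δ) y := by rw [dvg_PP]; exact dvg_Vk_nonneg hδ _
      rw [Real.norm_eq_abs, abs_mul, abs_of_nonneg hP0]
      by_cases h : δ < ‖y + -e0 N‖
      · rw [dvg_PP, dvg_Vk_far hδ h]; simp
      · gcongr
        have := hδc (x := y) (by
          rw [dist_eq_norm, sub_eq_add_neg]; linarith [not_lt.1 h])
        rw [Real.dist_eq] at this
        exact this.le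
    have e6 : ∫ y, (dvg u y - dvg u (e0 N)) * dvg (PP (N := N) δ) y =
        (∫ y, dvg u y * dvg (PP (N := N) δ) y) - dvg u (e0 N) * sphereArea (N + 1) := by
      rw [← e4, ← integral_const_mul, ← integral_sub iQ (iP.const_mul _)]
      congr 1; ext y; ring
    rw [e6] at e5
    rw [e3] at e1
    have e7 : |∫ y, dvg u y * dvg (PP (N := N) δ) y| =
        |∫ y in HS N, ∑ i, u i y * pd i (dvg (PP δ)) y| := by
      rw [eq_neg_of_add_eq_zero_left e1, abs_neg]
    rw [← e7] at hs
    set Q := ∫ y, dvg u y * dvg (PP (N := N) δ) y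
    have e8 : sphereArea (N + 1) * |dvg u (e0 N)| ≤ |Q| + ε * sphereArea (N + 1) := by
      have : sphereArea (N + 1) * |dvg u (e0 N)| = |dvg u (e0 N) * sphereArea (N + 1)| := by
        rw [abs_mul, abs_of_nonneg hw, mul_comm]
      rw [this]
      have := abs_sub_abs_le_abs_sub (dvg u (e0 N) * sphereArea (N + 1)) Q
      rw [abs_sub_comm] at this
      linarith
    have := mul_le_mul_of_nonneg_left e8 (show 0 ≤ 2 + k by linarith)
    linarith
  have t : Tendsto (fun ε : ℝ => 4 * (M * I) + (2 + k) * (sphereArea (N + 1) * ε))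
      (nhdsWithin 0 (Set.Ioi 0)) (nhds (4 * (M * I) + (2 + k) * (sphereArea (N + 1) * 0))) := by
    apply Tendsto.mono_left _ nhdsWithin_le_nhds
    apply Continuous.tendsto (f := fun ε : ℝ => 4 * (M * I) + (2 + k) * (sphereArea (N + 1) * ε))
    fun_prop
  rw [mul_zero, mul_zero, add_zero] at t
  apply ge_of_tendsto t
  filter_upwards [self_mem_nhdsWithin] with ε hε using main ε hε

theorem sphereArea_pos {n : ℕ} (hn : 0 < n) : 0 < sphereArea n := by
  have hn' : (0:ℝ) < n := by exact_mod_cast hn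
  have hG : 0 < Real.Gamma ((n:ℝ) / 2) := Real.Gamma_pos_of_pos (by positivity)
  unfold sphereArea
  positivity

theorem half_space' {N : ℕ} (hN : 1 ≤ N) {k : ℝ} (hk : -1 < k) {u : Fin (N + 1) → Eu (N + 1) → ℝ}
    (hu : ∀ i, ContDiff ℝ 2 (u i)) {M : ℝ} (hM0 : 0 ≤ M)
    (hM : ∀ y ∈ HS N, ∑ i, u i y ^ 2 ≤ M ^ 2) (hL : ∀ y ∈ HS N, ∀ i, Lop k u i y = 0) :
    |dvg u (e0 N)| ≤ Econst (N + 1) / (2 + k) * M := by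
  have h := half_space hN hk hu hM0 hM hL
  rw [integral_fT hN] at h
  have hw : 0 < sphereArea (N + 1) := sphereArea_pos (Nat.succ_pos N)
  have h2k : 0 < 2 + k := by linarith
  unfold Econst
  rw [Nat.add_sub_cancel]
  rw [div_mul_eq_mul_div, le_div_iff₀ h2k, div_mul_eq_mul_div, div_mul_eq_mul_div, le_div_iff₀ hw]
  linarith



/-- similarity map -/
def simB {n : ℕ} (b : OrthonormalBasis (Fin n) ℝ (Eu n)) (q : Eu n) (c : ℝ) (y : Eu n) : Eu n :=
  q + c • b.repr.symm y

theorem hasFDerivAt_simB {n : ℕ} (b : OrthonormalBasis (Fin n) ℝ (Eu n)) (q : Eu n) (c : ℝ)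
    (y : Eu n) : HasFDerivAt (simB b q c)
      (c • (b.repr.symm.toContinuousLinearEquiv : Eu n →L[ℝ] Eu n)) y := by
  have h := (b.repr.symm.toContinuousLinearEquiv : Eu n →L[ℝ] Eu n).hasFDerivAt (x := y)
  exact (h.const_smul c).const_add q

theorem contDiff_simB {n : ℕ} (b : OrthonormalBasis (Fin n) ℝ (Eu n)) (q : Eu n) (c : ℝ)
    {a : WithTop ℕ∞} : ContDiff ℝ a (simB b q c) := by
  have h := (b.repr.symm.toContinuousLinearEquiv : Eu n →L[ℝ] Eu n).contDiff (n := a)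
  exact contDiff_const.add (h.const_smul c)

theorem pd_comp_simB {n : ℕ} (b : OrthonormalBasis (Fin n) ℝ (Eu n)) (q : Eu n) (c : ℝ)
    {f : Eu n → ℝ} {y : Eu n} (hf : DifferentiableAt ℝ f (simB b q c y)) (j : Fin n) :
    pd j (fun z => f (simB b q c z)) y = c * ∑ l, b j l * pd l f (simB b q c y) := by
  have h := (hf.hasFDerivAt.comp y (hasFDerivAt_simB b q c y)).fderiv
  have e : (fun z => f (simB b q c z)) = f ∘ simB b q c := rfl
  unfold pd
  rw [e, h]
  have hb : b j = ∑ l, b j l • (EuclideanSpace.single l (1:ℝ) : Eu n) := by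
    ext i
    simp [Finset.sum_apply, Pi.single_apply]
  have h2 : b.repr.symm (EuclideanSpace.single j (1:ℝ)) = b j := b.repr_symm_single j
  simp only [ContinuousLinearMap.comp_apply, ContinuousLinearMap.smul_apply, map_smul, smul_eq_mul]
  congr 1
  change (fderiv ℝ f (simB b q c y)) (b.repr.symm (EuclideanSpace.single j (1:ℝ))) = _
  rw [h2]
  conv_lhs => rw [hb]
  simp

theorem onb_orth {n : ℕ} (b : OrthonormalBasis (Fin n) ℝ (Eu n)) (l p : Fin n) :
    ∑ i, b i l * b i p = if l = p then 1 else 0 := by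
  have h := b.sum_inner_mul_inner (EuclideanSpace.single l (1:ℝ)) (EuclideanSpace.single p (1:ℝ))
  simp only [EuclideanSpace.inner_single_left, EuclideanSpace.inner_single_right] at h
  simp at h
  rw [h]
  simp [eq_comm]

/-- transformed field -/
def tu {n : ℕ} (b : OrthonormalBasis (Fin n) ℝ (Eu n)) (q : Eu n) (c : ℝ) (u : Eu n → Eu n)
    (i : Fin n) (y : Eu n) : ℝ := ∑ l, b i l * u (simB b q c y) l

theorem tu_sq {n : ℕ} (b : OrthonormalBasis (Fin n) ℝ (Eu n)) (q : Eu n) (c : ℝ) (u : Eu n → Eu n)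
    (y : Eu n) : ∑ i, tu b q c u i y ^ 2 = ‖u (simB b q c y)‖ ^ 2 := by
  have h : ∀ i, tu b q c u i y = b.repr (u (simB b q c y)) i := by
    intro i
    rw [b.repr_apply_apply]
    simp [tu, PiLp.inner_apply, mul_comm]
  rw [← b.repr.norm_map, EuclideanSpace.real_norm_sq_eq]
  simp only [h]

theorem contract {n : ℕ} (b : OrthonormalBasis (Fin n) ℝ (Eu n)) (X : Fin n → Fin n → ℝ) :
    ∑ i, ∑ l, b i l * ∑ p, b i p * X l p = ∑ l, X l l := by
  have : ∀ i, ∑ l, b i l * ∑ p, b i p * X l p = ∑ l, ∑ p, (b i l * b i p) * X l p := by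
    intro i
    apply Finset.sum_congr rfl; intro l _
    rw [Finset.mul_sum]
    apply Finset.sum_congr rfl; intro p _
    ring
  simp only [this]
  rw [Finset.sum_comm]
  apply Finset.sum_congr rfl; intro l _
  rw [Finset.sum_comm]
  have : ∀ p, ∑ i, b i l * b i p * X l p = if l = p then X l p else 0 := by
    intro p
    rw [← Finset.sum_mul, onb_orth]
    split_ifs <;> simp
  simp [this]

section
variable {n : ℕ} (b : OrthonormalBasis (Fin n) ℝ (Eu n)) (q : Eu n) (c : ℝ) {u : Eu n → Eu n}

theorem cd_coord {y : Eu n} (hu : ContDiffAt ℝ 2 u y) (l : Fin n) :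
    ContDiffAt ℝ 2 (fun z => u z l) y :=
  (contDiff_coord l).contDiffAt.comp y hu

theorem contDiffAt_tu {y : Eu n} (hu : ContDiffAt ℝ 2 u (simB b q c y)) (i : Fin n) :
    ContDiffAt ℝ 2 (tu b q c u i) y := by
  unfold tu
  apply ContDiffAt.sum
  intro l _
  exact contDiffAt_const.mul ((cd_coord hu l).comp y (contDiff_simB b q c).contDiffAt)

theorem pd_tu {y : Eu n} (hu : ContDiffAt ℝ 2 u (simB b q c y)) (i j : Fin n) :
    pd j (tu b q c u i) y =
      c * ∑ l, b i l * ∑ p, b j p * pd p (fun z => u z l) (simB b q c y) := by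
  have hd : ∀ l, DifferentiableAt ℝ (fun z => u (simB b q c z) l) y := fun l =>
    ((cd_coord hu l).comp y (contDiff_simB b q c).contDiffAt).differentiableAt (by norm_num)
  unfold tu
  rw [pd_sum _ _ (fun l _ => (hd l).const_mul _), Finset.mul_sum]
  apply Finset.sum_congr rfl
  intro l _
  rw [pd_const_mul j _ (hd l), pd_comp_simB b q c (f := fun z => u z l)
    ((cd_coord hu l).differentiableAt (by norm_num))]
  ring

theorem dvg_tu {y : Eu n} (hu : ContDiffAt ℝ 2 u (simB b q c y)) :
    dvg (tu b q c u) y = c * divg u (simB b q c y) := by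
  unfold dvg
  simp only [pd_tu b q c hu]
  rw [← Finset.mul_sum, contract b (fun l p => pd p (fun z => u z l) (simB b q c y))]
  rfl

theorem ev_cd {y : Eu n} (hu : ContDiffAt ℝ 2 u (simB b q c y)) :
    ∀ᶠ z in nhds y, ContDiffAt ℝ 2 u (simB b q c z) :=
  (contDiff_simB b q c (a := 0)).continuous.continuousAt.eventually (hu.eventually (by simp))

theorem Lop_tu {y : Eu n} (hu : ContDiffAt ℝ 2 u (simB b q c y)) (k : ℝ)
    (hL : ∀ l, lapl (fun z => u z l) (simB b q c y) +
      k * pd l (fun z => divg u z) (simB b q c y) = 0) (i : Fin n) :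
    Lop k (tu b q c u) i y = 0 := by
  have hp : ∀ l p, ContDiffAt ℝ 1 (pd p (fun z => u z l)) (simB b q c y) := fun l p =>
    contDiffAt_pd p (cd_coord hu l) (by norm_num)
  have hdiv : DifferentiableAt ℝ (fun z => divg u z) (simB b q c y) := by
    simp only [divg_eq]
    exact DifferentiableAt.fun_sum fun l _ => (hp l l).differentiableAt (by norm_num)
  have h1 : pd i (dvg (tu b q c u)) y = c ^ 2 * ∑ l, b i l * pd l (fun z => divg u z) (simB b q c y) := by
    have : dvg (tu b q c u) =ᶠ[nhds y] fun z => c * divg u (simB b q c z) := by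
      filter_upwards [ev_cd b q c hu] with z hz using dvg_tu b q c hz
    rw [pd_congr i this, pd_const_mul i c, pd_comp_simB b q c (f := fun z => divg u z) hdiv]
    · ring
    · exact hdiv.comp y ((contDiff_simB b q c (a := 1)).differentiable (by norm_num) y)
  have h2 : lapl (tu b q c u i) y = c ^ 2 * ∑ l, b i l * lapl (fun z => u z l) (simB b q c y) := by
    rw [lapl_eq]
    have hdc : ∀ l p, DifferentiableAt ℝ (fun z => pd p (fun z => u z l) (simB b q c z)) y :=
      fun l p => ((hp l p).differentiableAt (by norm_num)).comp y
        ((contDiff_simB b q c (a := 1)).differentiable (by norm_num) y)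
    have h3 : ∀ j, pd j (pd j (tu b q c u i)) y =
        c ^ 2 * ∑ l, b i l * ∑ p, b j p * ∑ r, b j r *
          pd r (pd p (fun z => u z l)) (simB b q c y) := by
      intro j
      have : pd j (tu b q c u i) =ᶠ[nhds y] fun z => c * ∑ l, b i l * ∑ p, b j p *
          pd p (fun z => u z l) (simB b q c z) := by
        filter_upwards [ev_cd b q c hu] with z hz using pd_tu b q c hz i j
      rw [pd_congr j this, pd_const_mul j c, pd_sum, pow_two, mul_assoc]
      · congr 1
        rw [Finset.mul_sum]
        apply Finset.sum_congr rfl; intro l _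
        rw [pd_const_mul j, pd_sum, mul_left_comm]
        · congr 1
          rw [Finset.mul_sum]
          apply Finset.sum_congr rfl; intro p _
          rw [pd_const_mul j _ (hdc l p), pd_comp_simB b q c (f := pd p (fun z => u z l))
            ((hp l p).differentiableAt (by norm_num))]
          ring
        · exact fun p _ => (hdc l p).const_mul _
        · exact DifferentiableAt.fun_sum fun p _ => (hdc l p).const_mul _
      · exact fun l _ => (DifferentiableAt.fun_sum fun p _ => (hdc l p).const_mul _).const_mul _
      · exact DifferentiableAt.fun_sum fun l _ =>
          (DifferentiableAt.fun_sum fun p _ => (hdc l p).const_mul _).const_mul _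
    simp only [h3]
    rw [← Finset.mul_sum, Finset.sum_comm]
    congr 1
    apply Finset.sum_congr rfl; intro l _
    rw [← Finset.mul_sum, contract b (fun p r => pd r (pd p (fun z => u z l)) (simB b q c y))]
    rfl
  unfold Lop
  rw [h1, h2]
  have : ∑ l, b i l * (lapl (fun z => u z l) (simB b q c y) +
      k * pd l (fun z => divg u z) (simB b q c y)) = 0 :=
    Finset.sum_eq_zero fun l _ => by rw [hL, mul_zero]
  simp only [mul_add, Finset.sum_add_distrib] at this
  have e : ∑ l, b i l * (k * pd l (fun z => divg u z) (simB b q c y)) =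
      k * ∑ l, b i l * pd l (fun z => divg u z) (simB b q c y) := by
    rw [Finset.mul_sum]; apply Finset.sum_congr rfl; intros; ring
  rw [e] at this
  linear_combination c ^ 2 * this

end


theorem geom {n : ℕ} {G Ω : Set (Eu n)} (hGc : Convex ℝ G) (hGne : G.Nonempty)
    (hΩ : Ω = (closure G)ᶜ) {x : Eu n} (hx : x ∈ Ω) :
    ∃ (p ν : Eu n) (d : ℝ), 0 < d ∧ ‖ν‖ = 1 ∧ x = p + d • ν ∧
      (∀ y, 0 < ⟪ν, y - p⟫ → y ∈ Ω) ∧ 0 < infDist x (frontier Ω) ∧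
      infDist x (frontier Ω) ≤ d := by
  obtain ⟨p, hp, hpe⟩ := exists_norm_eq_iInf_of_complete_convex hGne.closure
    isClosed_closure.isComplete hGc.closure x
  have hin := (norm_eq_iInf_iff_real_inner_le_zero hGc.closure hp).1 hpe
  have hopen : IsOpen Ω := by rw [hΩ]; exact isClosed_closure.isOpen_compl
  have hxp : x - p ≠ 0 := by
    intro h
    rw [sub_eq_zero] at h
    rw [hΩ, h] at hx
    exact hx hp
  have hd : 0 < ‖x - p‖ := norm_pos_iff.2 hxp
  set d := ‖x - p‖ with hdd
  set ν : Eu n := d⁻¹ • (x - p) with hν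
  have hxe : x - p = d • ν := by rw [hν, smul_smul, mul_inv_cancel₀ hd.ne', one_smul]
  have hν1 : ‖ν‖ = 1 := by
    rw [hν, norm_smul, norm_inv, Real.norm_of_nonneg hd.le, ← hdd, inv_mul_cancel₀ hd.ne']
  have hside : ∀ y, 0 < ⟪ν, y - p⟫ → y ∈ Ω := by
    intro y hy
    rw [hΩ]
    intro hyG
    have := hin y hyG
    rw [hxe, inner_smul_left] at this
    simp only [conj_trivial] at this
    have := mul_pos hd hy
    linarith
  have hpf : p ∈ frontier Ω := by
    rw [hopen.frontier_eq]
    refine ⟨?_, by rw [hΩ]; exact fun h => h hp⟩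
    have ht : Tendsto (fun s : ℝ => p + s • ν) (nhdsWithin 0 (Set.Ioi 0)) (nhds p) := by
      have : Continuous (fun s : ℝ => p + s • ν) := by fun_prop
      have h := this.tendsto 0
      simp only [zero_smul, add_zero] at h
      exact h.mono_left nhdsWithin_le_nhds
    refine mem_closure_of_tendsto ht ?_
    filter_upwards [self_mem_nhdsWithin] with s hs
    apply hside
    rw [add_sub_cancel_left, inner_smul_right, real_inner_self_eq_norm_sq, hν1]
    simpa using hs
  refine ⟨p, ν, d, hd, hν1, by rw [← hxe]; abel, hside, ?_, ?_⟩
  · rw [← isClosed_frontier.notMem_iff_infDist_pos ⟨p, hpf⟩, hopen.frontier_eq]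
    exact fun h => h.2 hx
  · rw [hdd, ← dist_eq_norm]
    exact infDist_le_dist_of_mem hpf

theorem exists_onb {N : ℕ} {ν : Eu (N + 1)} (hν : ‖ν‖ = 1) :
    ∃ b : OrthonormalBasis (Fin (N + 1)) ℝ (Eu (N + 1)), b 0 = ν := by
  have hv : Orthonormal ℝ (Set.domRestrict ({0} : Set (Fin (N + 1))) (fun _ => ν)) := by
    constructor
    · intro i; simpa using hν
    · intro i j hij
      exact absurd (Subsingleton.elim i j) hij
  obtain ⟨b, hb⟩ := hv.exists_orthonormalBasis_extension_of_card_eq (by simp)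
  exact ⟨b, hb 0 rfl⟩

theorem reduce {N : ℕ} (hN : 1 ≤ N) {k : ℝ} (hk : -1 < k) {Ω : Set (Eu (N + 1))}
    (hopen : IsOpen Ω) {u : Eu (N + 1) → Eu (N + 1)} (hreg : ContDiffOn ℝ 2 u Ω)
    (hl : ∀ y ∈ Ω, ∀ j, lapl (fun z => u z j) y + k * pd j (fun z => divg u z) y = 0)
    {M : ℝ} (hM0 : 0 ≤ M) (hM : ∀ y ∈ Ω, ‖u y‖ ≤ M) {p ν : Eu (N + 1)} {d : ℝ}
    (hν : ‖ν‖ = 1) (hside : ∀ y, 0 < ⟪ν, y - p⟫ → y ∈ Ω) {c : ℝ} (hc : 0 < c) (hcd : c < d) :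
    c * |divg u (p + d • ν)| ≤ Econst (N + 1) / (2 + k) * M := by
  obtain ⟨b, hb⟩ := exists_onb hν
  set q : Eu (N + 1) := p + (d - c) • ν with hq
  set τ : ℝ := (d - c) / c with hτ
  have hτ0 : 0 < τ := div_pos (by linarith) hc
  have hcτ : c * τ = d - c := by rw [hτ]; field_simp
  have he : simB b q c (e0 N) = p + d • ν := by
    have : b.repr.symm (e0 N) = ν := by rw [← hb]; simp [e0]
    rw [simB, this, hq, add_assoc, ← add_smul]; congr 2; ring
  have hmem : ∀ y : Eu (N + 1), -τ < y 0 → simB b q c y ∈ Ω := by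
    intro y hy
    apply hside
    have h1 : ⟪ν, b.repr.symm y⟫ = y 0 := by
      rw [← hb, ← b.repr_apply_apply]; simp
    have : simB b q c y - p = (d - c) • ν + c • b.repr.symm y := by
      rw [simB, hq]; abel
    rw [this, inner_add_right, inner_smul_right, inner_smul_right, h1,
      real_inner_self_eq_norm_sq, hν]
    have := mul_lt_mul_of_pos_left hy hc
    nlinarith
  have hcd' : ∀ y : Eu (N + 1), -τ < y 0 → ContDiffAt ℝ 2 u (simB b q c y) := fun y hy =>
    hreg.contDiffAt (hopen.mem_nhds (hmem y hy))
  set ψ : Eu (N + 1) → ℝ := fun y => smoothTransition ((y 0 + 2 * τ / 3) * (3 / τ)) with hψ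
  have hψc : ContDiff ℝ 2 ψ := by
    have : ContDiff ℝ 2 smoothTransition := smoothTransition.contDiff (n := 2)
    exact this.comp (((contDiff_coord 0).add contDiff_const).mul contDiff_const)
  have hcont0 : Continuous (fun y : Eu (N + 1) => y 0) := (contDiff_coord (a := 0) 0).continuous
  set v : Fin (N + 1) → Eu (N + 1) → ℝ := fun i y => ψ y * tu b q c u i y with hv
  have hvC : ∀ i, ContDiff ℝ 2 (v i) := by
    intro i
    rw [contDiff_iff_contDiffAt]
    intro y
    rcases lt_or_ge (-τ) (y 0) with h | h
    · exact hψc.contDiffAt.mul (contDiffAt_tu b q c (hcd' y h) i)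
    · have : v i =ᶠ[nhds y] fun _ => 0 := by
        have ho : IsOpen {z : Eu (N + 1) | z 0 < -(2 * τ / 3)} :=
          isOpen_lt hcont0 continuous_const
        filter_upwards [ho.mem_nhds (show y 0 < -(2 * τ / 3) by linarith)] with z hz
        have hz' : z 0 < -(2 * τ / 3) := hz
        simp only [hv, hψ]
        rw [smoothTransition.zero_of_nonpos, zero_mul]
        exact mul_nonpos_of_nonpos_of_nonneg (by linarith) (by positivity)
      exact contDiffAt_const.congr_of_eventuallyEq this
  have hev : ∀ y ∈ HS N, ∀ i, v i =ᶠ[nhds y] tu b q c u i := by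
    intro y hy i
    have hy' : 0 ≤ y 0 := hy
    have ho : IsOpen {z : Eu (N + 1) | -(τ / 3) < z 0} := isOpen_lt continuous_const hcont0
    filter_upwards [ho.mem_nhds (show -(τ / 3) < y 0 by linarith)] with z hz
    have hz' : -(τ / 3) < z 0 := hz
    simp only [hv, hψ]
    rw [smoothTransition.one_of_one_le, one_mul]
    have : 1 = (τ / 3) * (3 / τ) := by field_simp
    rw [this]
    exact mul_le_mul_of_nonneg_right (by linarith) (by positivity)
  have hdv : ∀ y ∈ HS N, dvg v =ᶠ[nhds y] dvg (tu b q c u) := by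
    intro y hy
    have : ∀ᶠ z in nhds y, ∀ j, pd j (v j) z = pd j (tu b q c u j) z :=
      eventually_all.2 fun j => pd_congr_ev j (hev y hy j)
    filter_upwards [this] with z hz
    exact Finset.sum_congr rfl fun j _ => hz j
  have hpos : ∀ y ∈ HS N, -τ < y 0 := fun y hy => lt_of_lt_of_le (by linarith) (show 0 ≤ y 0 from hy)
  have key := half_space' hN hk hvC hM0 (by
      intro y hy
      have : ∀ i, v i y = tu b q c u i y := fun i => (hev y hy i).self_of_nhds
      simp only [this]
      rw [tu_sq]
      exact pow_le_pow_left₀ (norm_nonneg _) (hM _ (hmem y (hpos y hy))) 2) (by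
      intro y hy i
      have h1 : Lop k v i y = Lop k (tu b q c u) i y := by
        unfold Lop
        rw [pd_congr i (hdv y hy), lapl_eq, lapl_eq]
        congr 1
        exact Finset.sum_congr rfl fun j _ => pd_congr j (pd_congr_ev j (hev y hy i))
      rw [h1]
      exact Lop_tu b q c (hcd' y (hpos y hy)) k (hl _ (hmem y (hpos y hy))) i)
  have he0 : e0 N ∈ HS N := by
    show (0:ℝ) ≤ e0 N 0
    rw [e0_zero]; norm_num
  rw [(hdv _ he0).self_of_nhds, dvg_tu b q c (hcd' _ (hpos _ he0)), he, abs_mul, abs_of_pos hc] at key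
  exact key

theorem final_bound {N : ℕ} (hN : 1 ≤ N) {σ : ℝ} (hσ : σ < 1 / 2 ∨ 1 < σ)
    {G Ω : Set (Eu (N + 1))} (hGc : Convex ℝ G) (hGne : G.Nonempty)
    (hΩ : Ω = (closure G)ᶜ) {u : Eu (N + 1) → Eu (N + 1)}
    (hreg : ContDiffOn ℝ 2 u Ω)
    (hl : ∀ y ∈ Ω, ∀ j, lapl (fun z => u z j) y +
      (1 - 2 * σ)⁻¹ * pd j (fun z => divg u z) y = 0)
    {M : ℝ} (hM : ∀ y ∈ Ω, ‖u y‖ ≤ M) {x : Eu (N + 1)} (hx : x ∈ Ω) :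
    |divg u x| ≤
      (1 - 2 * σ) * Econst (N + 1) / ((3 - 4 * σ) * Metric.infDist x (frontier Ω)) * M := by
  have hopen : IsOpen Ω := by rw [hΩ]; exact isClosed_closure.isOpen_compl
  have hM0 : 0 ≤ M := (norm_nonneg _).trans (hM x hx)
  have hne : 1 - 2 * σ ≠ 0 := by rcases hσ with h | h <;> intro h' <;> linarith
  have hne' : 3 - 4 * σ ≠ 0 := by rcases hσ with h | h <;> intro h' <;> linarith
  have hk : -1 < (1 - 2 * σ)⁻¹ := by
    rcases hσ with h | h
    · have : 0 < (1 - 2 * σ)⁻¹ := inv_pos.2 (by linarith)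
      linarith
    · have h1 : (2 * σ - 1)⁻¹ < 1 := inv_lt_one_of_one_lt₀ (by linarith)
      have : (1 - 2 * σ)⁻¹ = -(2 * σ - 1)⁻¹ := by rw [← inv_neg]; congr 1; ring
      linarith
  obtain ⟨p, ν, d, hd, hν, hxe, hside, hi0, hid⟩ := geom hGc hGne hΩ hx
  have h1 : ∀ c, 0 < c → c < d → c * |divg u x| ≤ Econst (N + 1) / (2 + (1 - 2 * σ)⁻¹) * M := by
    intro c hc hcd
    rw [hxe]
    exact reduce hN hk hopen hreg hl hM0 hM hν hside hc hcd
  have h2 : d * |divg u x| ≤ Econst (N + 1) / (2 + (1 - 2 * σ)⁻¹) * M := by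
    have ht : Tendsto (fun c : ℝ => c * |divg u x|) (nhdsWithin d (Set.Iio d))
        (nhds (d * |divg u x|)) := by
      have : Continuous (fun c : ℝ => c * |divg u x|) := by fun_prop
      exact (this.tendsto d).mono_left nhdsWithin_le_nhds
    refine le_of_tendsto ht ?_
    filter_upwards [Ioo_mem_nhdsLT hd] with c hc using h1 c hc.1 hc.2
  have h3 : infDist x (frontier Ω) * |divg u x| ≤
      Econst (N + 1) / (2 + (1 - 2 * σ)⁻¹) * M :=
    (mul_le_mul_of_nonneg_right hid (abs_nonneg _)).trans h2
  have h4 : (2 + (1 - 2 * σ)⁻¹) = (3 - 4 * σ) / (1 - 2 * σ) := by field_simp; ring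
  have h5 : (1 - 2 * σ) * Econst (N + 1) / ((3 - 4 * σ) * infDist x (frontier Ω)) * M =
      Econst (N + 1) / (2 + (1 - 2 * σ)⁻¹) * M / infDist x (frontier Ω) := by
    rw [h4]; field_simp
  rw [h5, le_div_iff₀ hi0, mul_comm]
  exact h3


/-- Let `n ≥ 2`, `σ ∈ (-∞, 1/2) ∪ (1, ∞)`, and `Ω = ℝⁿ \ Ḡ` with `G`
a convex domain in `ℝⁿ`. Let `u ∈ C²(Ω) ∩ C_b(Ω̄)` solve the Lamé system
`Δu + (1-2σ)⁻¹ grad div u = 0` in `Ω`, with `|u| ≤ M` on `Ω`. Then for every `x ∈ Ω`,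
`|div u(x)| ≤ ((1-2σ) Eₙ / ((3-4σ) d_x)) · sup_Ω |u| ≤ ((1-2σ) Eₙ / ((3-4σ) d_x)) M`. -/
theorem divergence_bound_lame_complement_convex
    (n : ℕ) (hn : 2 ≤ n) (σ : ℝ) (hσ : σ < 1 / 2 ∨ 1 < σ)
    (G Ω : Set (Eu n))
    (hGo : IsOpen G) (hGc : Convex ℝ G) (hGne : G.Nonempty)
    (hΩ : Ω = (closure G)ᶜ)
    (u : Eu n → Eu n)
    (hreg : ContDiffOn ℝ 2 u Ω) (hcont : ContinuousOn u (closure Ω))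
    (hlame : ∀ y ∈ Ω, ∀ j : Fin n,
      lapl (fun z => u z j) y +
        (1 - 2 * σ)⁻¹ * fderiv ℝ (fun z => divg u z) y (EuclideanSpace.single j 1) = 0)
    (M : ℝ) (hM : ∀ y ∈ Ω, ‖u y‖ ≤ M)
    (x : Eu n) (hx : x ∈ Ω) :
    |divg u x| ≤
      (1 - 2 * σ) * Econst n / ((3 - 4 * σ) * Metric.infDist x (frontier Ω)) * M := by
  obtain ⟨N, rfl⟩ : ∃ N, n = N + 1 := ⟨n - 1, by omega⟩
  exact final_bound (by omega) hσ hGc hGne hΩ hreg hlame hM hx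
end
end

section
/- Let Ω be a domain in ℂ, and let ℜ(Ω) be the set of holomorphic functions f in Ω with sup_Ω |Re f| ≤ 1. Suppose a point ζ ∈ ∂Ω can be touched by an interior disk D ⊂ Ω (an open disk contained in Ω with ζ on its boundary). Then for every integer s ≥ 1, limsup_{z→ζ} sup_{f∈ℜ(Ω)} |z−ζ|^s · |f^{(s)}(z)| ≤ K_s, where z ranges over points of the radius of D directed from the center of D to ζ, and K_s = (s!/π) max_α ∫_{−π/2}^{π/2} |cos(α + (s+1)φ)| cos^{s−1}φ dφ. -/
open Real Filter Metric
open scoped Real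

noncomputable section

/-- The constant
`K_s = (s!/π) max_{α∈ℝ} ∫_{-π/2}^{π/2} |cos(α + (s+1)φ)| cos^{s-1}φ dφ`. -/
def Kconst (s : ℕ) : ℝ :=
  ((s.factorial : ℝ) / π) *
    ⨆ α : ℝ, ∫ t in (-(π / 2))..(π / 2),
      |Real.cos (α + ((s : ℝ) + 1) * t)| * Real.cos t ^ (s - 1)


lemma iteratedDeriv_affine_aux (f : ℂ → ℂ) (c a : ℂ) (n : ℕ) :
    iteratedDeriv n (fun u => f (c + a * u)) = fun u => a ^ n * iteratedDeriv n f (c + a * u) := by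
  induction n with
  | zero => simp
  | succ n ih =>
    rw [iteratedDeriv_succ, ih]
    funext u
    rw [deriv_const_mul_field, iteratedDeriv_succ]
    have := deriv_comp_mul_left a (fun v => iteratedDeriv n f (c + v)) u
    rw [this, deriv_comp_const_add]
    simp only [smul_eq_mul]
    ring

lemma cauchy_deriv_aux (ρ : ℝ) (hρ : 1 < ρ) (z : ℂ) (hz : z ∈ ball (0 : ℂ) 1) (n : ℕ) :
    ∀ f : ℂ → ℂ, DifferentiableOn ℂ f (ball 0 ρ) →
    (∮ w in C(0, 1), ((w - z) ^ (n + 1))⁻¹ * f w) =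
      2 * π * Complex.I / (n.factorial : ℂ) * iteratedDeriv n f z := by
  have hsub : closedBall (0 : ℂ) 1 ⊆ ball 0 ρ := closedBall_subset_ball hρ
  have hne : ∀ w ∈ sphere (0 : ℂ) 1, w - z ≠ 0 := by
    intro w hw h
    rw [sub_eq_zero] at h
    subst h
    simp at hw hz
    linarith
  induction n with
  | zero =>
    intro f hf
    have := (hf.mono hsub).circleIntegral_sub_inv_smul hz
    simpa using this
  | succ n ih =>
    intro f hf
    have hf' := hf.deriv isOpen_ball
    have h1 := ih _ hf'
    rw [iteratedDeriv_succ']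
    have hi1 : CircleIntegrable (fun w => ((w - z) ^ (n + 1))⁻¹ * deriv f w) 0 1 := by
      apply ContinuousOn.circleIntegrable zero_le_one
      refine ContinuousOn.mul (ContinuousOn.inv₀ (by fun_prop) ?_)
        (hf'.continuousOn.mono (sphere_subset_closedBall.trans hsub))
      exact fun w hw => pow_ne_zero _ (hne w hw)
    have hi2 : CircleIntegrable (fun w => ((n : ℂ) + 1) * (((w - z) ^ (n + 1 + 1))⁻¹ * f w)) 0 1 := by
      apply ContinuousOn.circleIntegrable zero_le_one
      refine continuousOn_const.mul (ContinuousOn.mul (ContinuousOn.inv₀ (by fun_prop) ?_)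
        (hf.continuousOn.mono (sphere_subset_closedBall.trans hsub)))
      exact fun w hw => pow_ne_zero _ (hne w hw)
    have h2 : (∮ w in C(0, 1), (((w - z) ^ (n + 1))⁻¹ * deriv f w -
        ((n : ℂ) + 1) * (((w - z) ^ (n + 1 + 1))⁻¹ * f w))) = 0 := by
      apply circleIntegral.integral_eq_zero_of_hasDerivWithinAt
        (f := fun w => ((w - z) ^ (n + 1))⁻¹ * f w) zero_le_one
      intro w hw
      have hw' := hne w hw
      have hfd : HasDerivAt f (deriv f w) w :=
        (hf.differentiableAt (isOpen_ball.mem_nhds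
          (hsub (sphere_subset_closedBall hw)))).hasDerivAt
      have hp : HasDerivAt (fun w : ℂ => (w - z) ^ (n + 1)) (((n + 1 : ℕ) : ℂ) * (w - z) ^ n * 1) w := by
        simpa using ((hasDerivAt_id w).sub_const z).fun_pow (n + 1)
      have := (hp.fun_inv (pow_ne_zero _ hw')).mul hfd
      refine HasDerivAt.hasDerivWithinAt (this.congr_deriv ?_)
      push_cast
      field_simp
      ring
    rw [circleIntegral.integral_sub hi1 hi2, circleIntegral.integral_const_mul, h1] at h2
    have hn : (n : ℂ) + 1 ≠ 0 := by exact_mod_cast Nat.succ_ne_zero n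
    have hn' : (n.factorial : ℂ) ≠ 0 := by exact_mod_cast Nat.factorial_ne_zero n
    rw [sub_eq_zero] at h2
    rw [Nat.factorial_succ]
    push_cast
    apply mul_left_cancel₀ hn
    rw [← h2]
    field_simp

lemma anti_aux (ρ : ℝ) (hρ : 1 < ρ) (x : ℝ) (hx0 : 0 ≤ x) (hx1 : x < 1) (s : ℕ)
    (f : ℂ → ℂ) (hf : DifferentiableOn ℂ f (ball 0 ρ)) :
    (∮ w in C(0, 1), f w * w ^ s * ((1 - x * w) ^ (s + 2))⁻¹) = 0 := by
  apply DiffContOnCl.circleIntegral_eq_zero zero_le_one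
  have hsub : closedBall (0 : ℂ) 1 ⊆ ball 0 ρ := closedBall_subset_ball hρ
  apply DifferentiableOn.diffContOnCl
  rw [closure_ball _ one_ne_zero]
  refine ((hf.mono hsub).mul (by fun_prop)).mul (DifferentiableOn.inv (by fun_prop) ?_)
  intro w hw
  apply pow_ne_zero
  intro h
  have h1 : (x : ℂ) * w = 1 := (sub_eq_zero.1 h).symm
  have h2 := congrArg norm h1
  simp only [norm_mul, Complex.norm_real, norm_one, Real.norm_eq_abs, abs_of_nonneg hx0] at h2
  have : ‖w‖ ≤ 1 := by simpa using hw
  nlinarith [norm_nonneg w]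

/-- kernel -/
def kerAux (s : ℕ) (x θ : ℝ) : ℂ :=
  Complex.exp (θ * Complex.I) * ((Complex.exp (θ * Complex.I) - x) ^ (s + 1))⁻¹

lemma exp_sub_ne (x : ℝ) (hx0 : 0 ≤ x) (hx1 : x < 1) (θ : ℝ) :
    Complex.exp (θ * Complex.I) - x ≠ 0 := by
  intro h
  have := congrArg norm (sub_eq_zero.1 h)
  rw [Complex.norm_exp_ofReal_mul_I, Complex.norm_real, Real.norm_eq_abs, abs_of_nonneg hx0] at this
  linarith

lemma kerAux_cont (s : ℕ) (x : ℝ) (hx0 : 0 ≤ x) (hx1 : x < 1) : Continuous (kerAux s x) := by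
  unfold kerAux
  refine Continuous.mul (by fun_prop) (Continuous.inv₀ (by fun_prop) ?_)
  exact fun θ => pow_ne_zero _ (exp_sub_ne x hx0 hx1 θ)

lemma repr_aux (ρ : ℝ) (hρ : 1 < ρ) (x : ℝ) (hx0 : 0 ≤ x) (hx1 : x < 1) (s : ℕ) (hs : 1 ≤ s)
    (f : ℂ → ℂ) (hf : DifferentiableOn ℂ f (ball 0 ρ)) :
    iteratedDeriv s f x = ((s.factorial / π : ℝ) : ℂ) *
      ∫ θ in (-π)..π, ((f (Complex.exp (θ * Complex.I))).re : ℂ) * kerAux s x θ := by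
  obtain ⟨s, rfl⟩ : ∃ m, s = m + 1 := ⟨s - 1, by omega⟩
  have hsub : closedBall (0 : ℂ) 1 ⊆ ball 0 ρ := closedBall_subset_ball hρ
  have hfc : Continuous (fun θ : ℝ => f (Complex.exp (θ * Complex.I))) := by
    apply hf.continuousOn.comp_continuous (by fun_prop)
    intro θ
    simp [Complex.norm_exp_ofReal_mul_I]; linarith
  have hkc := kerAux_cont (s + 1) x hx0 hx1
  have h1 := cauchy_deriv_aux ρ hρ (x : ℂ) (by simp [abs_of_nonneg hx0, hx1]) (s + 1) f hf
  have h2 := anti_aux ρ hρ x hx0 hx1 s f hf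
  have e1 : (∮ w in C(0, 1), ((w - x) ^ (s + 1 + 1))⁻¹ * f w) =
      Complex.I * ∫ θ in (0 : ℝ)..(2 * π), f (Complex.exp (θ * Complex.I)) * kerAux (s + 1) x θ := by
    rw [circleIntegral, ← intervalIntegral.integral_const_mul]
    congr 1; funext θ
    simp [circleMap, kerAux, deriv_circleMap]
    ring
  have e2 : (∮ w in C(0, 1), f w * w ^ s * ((1 - x * w) ^ (s + 2))⁻¹) =
      Complex.I * (starRingEnd ℂ) (∫ θ in (0 : ℝ)..(2 * π),
        (starRingEnd ℂ) (f (Complex.exp (θ * Complex.I))) * kerAux (s + 1) x θ) := by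
    rw [circleIntegral, ← intervalIntegral.intervalIntegral_conj,
      ← intervalIntegral.integral_const_mul]
    congr 1; funext θ
    have hE : (starRingEnd ℂ) (Complex.exp (θ * Complex.I)) = (Complex.exp (θ * Complex.I))⁻¹ := by
      rw [← Complex.exp_conj, ← Complex.exp_neg]; simp
    have hne : Complex.exp (θ * Complex.I) ≠ 0 := Complex.exp_ne_zero _
    have hne2 : (Complex.exp (θ * Complex.I))⁻¹ - x ≠ 0 := by
      rw [← hE]
      have := (map_ne_zero (starRingEnd ℂ)).2 (exp_sub_ne x hx0 hx1 θ)
      simpa using this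
    simp only [circleMap, kerAux, deriv_circleMap, map_mul, map_inv₀, map_pow, map_sub, hE,
      Complex.conj_ofReal, Complex.conj_conj, smul_eq_mul, zero_add, Complex.ofReal_one, one_mul]
    set E := Complex.exp (θ * Complex.I)
    have : 1 - x * E = E * (E⁻¹ - x) := by field_simp
    rw [this, mul_pow]
    field_simp
    ring
  rw [e2] at h2
  have h2' : (∫ θ in (0 : ℝ)..(2 * π),
        (starRingEnd ℂ) (f (Complex.exp (θ * Complex.I))) * kerAux (s + 1) x θ) = 0 := by
    simpa using h2
  rw [e1] at h1
  have h3 : (∫ θ in (-π)..π, ((f (Complex.exp (θ * Complex.I))).re : ℂ) * kerAux (s + 1) x θ) =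
      ∫ θ in (0:ℝ)..(2 * π), ((f (Complex.exp (θ * Complex.I))).re : ℂ) * kerAux (s + 1) x θ := by
    have hp : Function.Periodic (fun θ : ℝ =>
        ((f (Complex.exp (θ * Complex.I))).re : ℂ) * kerAux (s + 1) x θ) (2 * π) := by
      intro θ
      have : Complex.exp (((θ + 2 * π : ℝ) : ℂ) * Complex.I) = Complex.exp (θ * Complex.I) := by
        push_cast
        rw [add_mul, Complex.exp_add, Complex.exp_two_pi_mul_I, mul_one]
      simp only [kerAux, this]
    have := hp.intervalIntegral_add_eq (-π) 0
    rw [zero_add, show -π + 2 * π = π by ring] at this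
    exact this
  have h4 : (∫ θ in (0:ℝ)..(2 * π), ((f (Complex.exp (θ * Complex.I))).re : ℂ) * kerAux (s + 1) x θ)
      = 1 / 2 * ∫ θ in (0:ℝ)..(2 * π), f (Complex.exp (θ * Complex.I)) * kerAux (s + 1) x θ := by
    have : (∫ θ in (0:ℝ)..(2 * π), ((f (Complex.exp (θ * Complex.I))).re : ℂ) * kerAux (s + 1) x θ)
      = ∫ θ in (0:ℝ)..(2 * π), (1 / 2 * (f (Complex.exp (θ * Complex.I)) * kerAux (s + 1) x θ) +
        1 / 2 * ((starRingEnd ℂ) (f (Complex.exp (θ * Complex.I))) * kerAux (s + 1) x θ)) := by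
      congr 1; funext θ
      rw [Complex.re_eq_add_conj]
      ring
    rw [this, intervalIntegral.integral_add, intervalIntegral.integral_const_mul,
      intervalIntegral.integral_const_mul, h2']
    · simp
    · exact (continuous_const.mul (hfc.mul hkc)).intervalIntegrable _ _
    · exact (continuous_const.mul ((Complex.continuous_conj.comp hfc).mul hkc)).intervalIntegrable _ _
  rw [h3, h4]
  have hpi : (π : ℂ) ≠ 0 := by exact_mod_cast pi_ne_zero
  have hn' : ((s + 1).factorial : ℂ) ≠ 0 := by exact_mod_cast Nat.factorial_ne_zero _
  have h5 : (∫ θ in (0:ℝ)..(2 * π), f (Complex.exp (θ * Complex.I)) * kerAux (s + 1) x θ) =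
      2 * π / ((s + 1).factorial : ℂ) * iteratedDeriv (s + 1) f x := by
    apply mul_left_cancel₀ Complex.I_ne_zero
    rw [h1]; ring
  rw [h5]
  push_cast
  field_simp

lemma bound_aux (ρ : ℝ) (hρ : 1 < ρ) (x : ℝ) (hx0 : 0 ≤ x) (hx1 : x < 1) (s : ℕ) (hs : 1 ≤ s)
    (f : ℂ → ℂ) (hf : DifferentiableOn ℂ f (ball 0 ρ)) (hre : ∀ w ∈ ball (0 : ℂ) ρ, |(f w).re| ≤ 1) :
    ∃ α : ℝ, ‖iteratedDeriv s f x‖ ≤ s.factorial / π *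
      ∫ θ in (-π)..π, |(Complex.exp (α * Complex.I) * kerAux s x θ).re| := by
  have hkc := kerAux_cont s x hx0 hx1
  have hmem : ∀ θ : ℝ, Complex.exp (θ * Complex.I) ∈ ball (0 : ℂ) ρ := by
    intro θ
    simp [Complex.norm_exp_ofReal_mul_I]; linarith
  have hfc : Continuous (fun θ : ℝ => f (Complex.exp (θ * Complex.I))) :=
    hf.continuousOn.comp_continuous (by fun_prop) hmem
  have hA := repr_aux ρ hρ x hx0 hx1 s hs f hf
  set A := iteratedDeriv s f x
  refine ⟨-A.arg, ?_⟩
  have h1 : (‖A‖ : ℂ) = Complex.exp (((-A.arg : ℝ) : ℂ) * Complex.I) * A := by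
    conv_rhs => rw [← Complex.norm_mul_exp_arg_mul_I A]
    rw [mul_left_comm, ← Complex.exp_add]
    simp
  set u := Complex.exp (((-A.arg : ℝ) : ℂ) * Complex.I)
  have h2 : ‖A‖ = (u * A).re := by rw [← h1]; simp
  have h3 : u * A = ((s.factorial / π : ℝ) : ℂ) *
      ∫ θ in (-π)..π, ((f (Complex.exp (θ * Complex.I))).re : ℂ) * (u * kerAux s x θ) := by
    rw [hA, mul_left_comm, ← intervalIntegral.integral_const_mul]
    congr 2; funext θ; ring
  have hc : Continuous (fun θ : ℝ => ((f (Complex.exp (θ * Complex.I))).re : ℂ) * (u * kerAux s x θ)) :=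
    (Complex.continuous_ofReal.comp (Complex.continuous_re.comp hfc)).mul (continuous_const.mul hkc)
  rw [h2, h3, Complex.re_ofReal_mul]
  have hpos : 0 ≤ (s.factorial : ℝ) / π := by positivity
  refine mul_le_mul_of_nonneg_left ?_ hpos
  have h4 : (∫ θ in (-π)..π, ((f (Complex.exp (θ * Complex.I))).re : ℂ) * (u * kerAux s x θ)).re
     = ∫ θ in (-π)..π, (((f (Complex.exp (θ * Complex.I))).re : ℂ) * (u * kerAux s x θ)).re := by
    have := Complex.reCLM.intervalIntegral_comp_comm (hc.intervalIntegrable (μ := MeasureTheory.volume) (-π) π)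
    simpa using this.symm
  rw [h4]
  apply intervalIntegral.integral_mono_on (by linarith [pi_pos])
  · exact (Complex.continuous_re.comp hc).intervalIntegrable _ _
  · exact (Complex.continuous_re.comp (continuous_const.mul hkc)).abs.intervalIntegrable _ _
  · intro θ _
    rw [Complex.re_ofReal_mul]
    refine (le_abs_self _).trans ?_
    rw [abs_mul]
    exact mul_le_of_le_one_left (abs_nonneg _) (hre _ (hmem θ))

def hAux (s : ℕ) (d y : ℝ) : ℂ := (d : ℂ) ^ (s + 1) * kerAux s (1 - d) (d * y)

def hZero (s : ℕ) (y : ℝ) : ℂ := ((1 + y * Complex.I) ^ (s + 1))⁻¹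

lemma one_add_mul_I_ne (y : ℝ) : (1 + y * Complex.I : ℂ) ≠ 0 := by
  intro h
  have := congrArg Complex.re h
  simp at this

lemma hZero_cont (s : ℕ) : Continuous (hZero s) := by
  unfold hZero
  refine Continuous.inv₀ (by fun_prop) ?_
  exact fun y => pow_ne_zero _ (one_add_mul_I_ne y)

lemma hAux_eq (s : ℕ) (d y : ℝ) (hd : d ≠ 0) : hAux s d y =
    Complex.exp ((d * y : ℝ) * Complex.I) *
      (((1 + (d : ℂ)⁻¹ * (Complex.exp ((d * y : ℝ) * Complex.I) - 1)) ^ (s + 1)))⁻¹ := by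
  have hd' : (d : ℂ) ≠ 0 := by exact_mod_cast hd
  have h : Complex.exp ((d * y : ℝ) * Complex.I) - ((1 - d : ℝ) : ℂ) =
      d * (1 + (d : ℂ)⁻¹ * (Complex.exp ((d * y : ℝ) * Complex.I) - 1)) := by
    field_simp; push_cast; ring
  unfold hAux kerAux
  rw [h, mul_pow, mul_inv]
  field_simp

lemma hAux_tendsto (s : ℕ) (y : ℝ) :
    Tendsto (fun d : ℝ => hAux s d y) (nhdsWithin 0 (Set.Ioi 0)) (nhds (hZero s y)) := by
  have hder : HasDerivAt (fun d : ℝ => Complex.exp ((d * y : ℝ) * Complex.I)) (y * Complex.I) 0 := by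
    have h1 : HasDerivAt (fun d : ℝ => ((d * y : ℝ) : ℂ) * Complex.I) (y * Complex.I) 0 := by
      have := ((hasDerivAt_id (0 : ℝ)).mul_const y).ofReal_comp.mul_const Complex.I
      simpa using this
    have := h1.cexp
    simpa using this
  have h2 := (hasDerivAt_iff_tendsto_slope_zero.1 hder).mono_left
    (nhdsWithin_mono 0 (fun x (hx : x ∈ Set.Ioi (0 : ℝ)) => ne_of_gt hx) :
      nhdsWithin (0 : ℝ) (Set.Ioi 0) ≤ _)
  have h3 : Tendsto (fun d : ℝ => Complex.exp ((d * y : ℝ) * Complex.I))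
      (nhdsWithin 0 (Set.Ioi 0)) (nhds 1) := by
    have : Continuous (fun d : ℝ => Complex.exp ((d * y : ℝ) * Complex.I)) := by fun_prop
    have := (this.tendsto 0).mono_left (nhdsWithin_le_nhds (s := Set.Ioi 0))
    simpa using this
  have h4 := h3.mul ((((tendsto_const_nhds (x := (1 : ℂ))).add h2).pow (s + 1)).inv₀
    (pow_ne_zero _ (one_add_mul_I_ne y)))
  rw [one_mul] at h4
  refine h4.congr' ?_
  filter_upwards [self_mem_nhdsWithin] with d hd
  rw [hAux_eq s d y (ne_of_gt hd)]
  simp [Complex.real_smul]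

lemma hAux_bound (s : ℕ) (hs : 1 ≤ s) (d y : ℝ) (hd : 0 < d) (hd2 : d ≤ 1 / 2)
    (hy : |d * y| ≤ π) : ‖hAux s d y‖ ≤ 5 * (1 + y ^ 2)⁻¹ := by
  rw [hAux_eq s d y hd.ne', norm_mul, Complex.norm_exp_ofReal_mul_I, one_mul, norm_inv, norm_pow]
  set q := ‖1 + (d : ℂ)⁻¹ * (Complex.exp ((d * y : ℝ) * Complex.I) - 1)‖ with hq
  have hq2 : q ^ 2 = 1 + d⁻¹ ^ 2 * (2 * (1 - d) * (1 - Real.cos (d * y))) := by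
    rw [hq, ← Complex.normSq_eq_norm_sq, Complex.normSq_apply, ← Complex.ofReal_inv]
    simp only [Complex.add_re, Complex.add_im, Complex.one_re, Complex.one_im,
      Complex.re_ofReal_mul, Complex.im_ofReal_mul, Complex.sub_re, Complex.sub_im,
      Complex.exp_ofReal_mul_I_re, Complex.exp_ofReal_mul_I_im]
    have h1 := Real.sin_sq_add_cos_sq (d * y)
    field_simp
    nlinarith
  have hcos := Real.cos_le_one_sub_mul_cos_sq hy
  have hc2 : 2 / 10 * (d * y) ^ 2 ≤ 1 - Real.cos (d * y) := by
    have : (2 : ℝ) / 10 ≤ 2 / π ^ 2 := by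
      apply div_le_div_of_nonneg_left (by norm_num) (by positivity)
      nlinarith [Real.pi_lt_d2, Real.pi_pos]
    nlinarith [sq_nonneg (d * y)]
  have hc3 : 2 / 10 * (d * y) ^ 2 ≤ 2 * (1 - d) * (1 - Real.cos (d * y)) := by
    nlinarith [sq_nonneg (d * y), Real.cos_le_one (d * y)]
  have hc4 : 2 / 10 * y ^ 2 ≤ d⁻¹ ^ 2 * (2 * (1 - d) * (1 - Real.cos (d * y))) := by
    have := mul_le_mul_of_nonneg_left hc3 (sq_nonneg d⁻¹)
    have e : d⁻¹ ^ 2 * (2 / 10 * (d * y) ^ 2) = 2 / 10 * y ^ 2 := by field_simp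
    linarith
  have hq0 : 0 ≤ q := norm_nonneg _
  have hq1 : 1 ≤ q := by nlinarith [sq_nonneg y]
  have h5 : q ^ 2 ≤ q ^ (s + 1) := pow_le_pow_right₀ hq1 (by omega)
  have h6 : (1 + y ^ 2) / 5 ≤ q ^ (s + 1) := by nlinarith [sq_nonneg y]
  calc (q ^ (s + 1))⁻¹ ≤ ((1 + y ^ 2) / 5)⁻¹ := inv_anti₀ (by positivity) h6
    _ = 5 * (1 + y ^ 2)⁻¹ := by rw [inv_div]; ring

lemma hZero_bound (s : ℕ) (hs : 1 ≤ s) (y : ℝ) : ‖hZero s y‖ ≤ 5 * (1 + y ^ 2)⁻¹ := by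
  unfold hZero
  rw [norm_inv, norm_pow]
  set q := ‖(1 + y * Complex.I : ℂ)‖ with hq
  have hq2 : q ^ 2 = 1 + y ^ 2 := by
    rw [hq, ← Complex.normSq_eq_norm_sq, Complex.normSq_apply]
    simp; ring
  have hq0 : 0 ≤ q := norm_nonneg _
  have hq1 : 1 ≤ q := by nlinarith [sq_nonneg y]
  have h5 : q ^ 2 ≤ q ^ (s + 1) := pow_le_pow_right₀ hq1 (by omega)
  have h7 : (1 + y ^ 2)⁻¹ ≥ 0 := by positivity
  calc (q ^ (s + 1))⁻¹ ≤ (1 + y ^ 2)⁻¹ := inv_anti₀ (by positivity) (by linarith)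
    _ ≤ 5 * (1 + y ^ 2)⁻¹ := by linarith

def indAux (s : ℕ) (d y : ℝ) : ℂ := (Set.Ioc (-(π / d)) (π / d)).indicator (hAux s d) y

lemma hAux_cont (s : ℕ) (d : ℝ) (hd : 0 < d) (hd2 : d ≤ 1 / 2) : Continuous (hAux s d) := by
  unfold hAux
  exact continuous_const.mul ((kerAux_cont s (1 - d) (by linarith) (by linarith)).comp (by fun_prop))

lemma indAux_bound (s : ℕ) (hs : 1 ≤ s) (d y : ℝ) (hd : 0 < d) (hd2 : d ≤ 1 / 2) :
    ‖indAux s d y‖ ≤ 5 * (1 + y ^ 2)⁻¹ := by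
  unfold indAux
  by_cases hy : y ∈ Set.Ioc (-(π / d)) (π / d)
  · rw [Set.indicator_of_mem hy]
    apply hAux_bound s hs d y hd hd2
    rw [abs_mul, abs_of_pos hd, mul_comm, ← le_div_iff₀ hd]
    exact abs_le.2 ⟨hy.1.le, hy.2⟩
  · rw [Set.indicator_of_notMem hy, norm_zero]
    positivity

lemma indAux_meas (s : ℕ) (d : ℝ) (hd : 0 < d) (hd2 : d ≤ 1 / 2) :
    MeasureTheory.AEStronglyMeasurable (indAux s d) MeasureTheory.volume :=
  ((hAux_cont s d hd hd2).aestronglyMeasurable).indicator measurableSet_Ioc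

lemma dom_integrable : MeasureTheory.Integrable (fun y : ℝ => 5 * (1 + y ^ 2)⁻¹) :=
  integrable_inv_one_add_sq.const_mul 5

lemma indAux_integrable (s : ℕ) (hs : 1 ≤ s) (d : ℝ) (hd : 0 < d) (hd2 : d ≤ 1 / 2) :
    MeasureTheory.Integrable (indAux s d) :=
  dom_integrable.mono' (indAux_meas s d hd hd2)
    (Eventually.of_forall fun y => indAux_bound s hs d y hd hd2)

lemma hZero_integrable (s : ℕ) (hs : 1 ≤ s) : MeasureTheory.Integrable (hZero s) :=
  dom_integrable.mono' (hZero_cont s).aestronglyMeasurable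
    (Eventually.of_forall fun y => hZero_bound s hs y)

lemma dct_aux (s : ℕ) (hs : 1 ≤ s) :
    Tendsto (fun d : ℝ => ∫ y, ‖indAux s d y - hZero s y‖) (nhdsWithin 0 (Set.Ioi 0)) (nhds 0) := by
  have hev : ∀ᶠ d : ℝ in nhdsWithin 0 (Set.Ioi 0), 0 < d ∧ d ≤ 1 / 2 := by
    filter_upwards [Ioc_mem_nhdsGT (show (0 : ℝ) < 1 / 2 by norm_num)] with d hd
    exact hd
  have h0 : (0 : ℝ) = ∫ _y : ℝ, (0 : ℝ) := by simp
  suffices this : Tendsto (fun d : ℝ => ∫ y, ‖indAux s d y - hZero s y‖)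
      (nhdsWithin 0 (Set.Ioi 0)) (nhds (∫ _y : ℝ, (0 : ℝ))) by
    rwa [← h0] at this
  apply MeasureTheory.tendsto_integral_filter_of_dominated_convergence
    (fun y : ℝ => 5 * (1 + y ^ 2)⁻¹ + 5 * (1 + y ^ 2)⁻¹)
  · filter_upwards [hev] with d hd
    exact ((indAux_meas s d hd.1 hd.2).sub (hZero_cont s).aestronglyMeasurable).norm
  · filter_upwards [hev] with d hd
    refine Eventually.of_forall fun y => ?_
    rw [norm_norm]
    exact (norm_sub_le _ _).trans (add_le_add (indAux_bound s hs d y hd.1 hd.2) (hZero_bound s hs y))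
  · exact dom_integrable.add dom_integrable
  · refine Eventually.of_forall fun y => ?_
    have h1 : Tendsto (fun d : ℝ => indAux s d y) (nhdsWithin 0 (Set.Ioi 0)) (nhds (hZero s y)) := by
      refine (hAux_tendsto s y).congr' ?_
      have hpos : 0 < π / (|y| + 1) := by positivity
      filter_upwards [Ioc_mem_nhdsGT hpos] with d hd
      unfold indAux
      rw [Set.indicator_of_mem]
      have h2 : |y| < π / d := by
        rw [lt_div_iff₀ hd.1]
        have := (le_div_iff₀ (by positivity)).1 hd.2
        nlinarith [hd.1, abs_nonneg y]
      exact ⟨(abs_lt.1 h2).1, (abs_lt.1 h2).2.le⟩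
    have := (h1.sub_const (hZero s y)).norm
    simpa using this

lemma subst_aux (s : ℕ) (d : ℝ) (hd : 0 < d) (u : ℂ) :
    d ^ s * ∫ θ in (-π)..π, |(u * kerAux s (1 - d) θ).re| = ∫ y, |(u * indAux s d y).re| := by
  have h1 : (fun y => |(u * indAux s d y).re|) =
      (Set.Ioc (-(π / d)) (π / d)).indicator (fun y => |(u * hAux s d y).re|) := by
    funext y
    unfold indAux
    by_cases hy : y ∈ Set.Ioc (-(π / d)) (π / d)
    · simp [Set.indicator_of_mem hy]
    · simp [Set.indicator_of_notMem hy]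
  have hle : -(π / d) ≤ π / d := by
    have : 0 < π / d := by positivity
    linarith
  rw [h1, MeasureTheory.integral_indicator measurableSet_Ioc,
    ← intervalIntegral.integral_of_le hle]
  have h2 := intervalIntegral.mul_integral_comp_mul_left
    (f := fun θ => |(u * kerAux s (1 - d) θ).re|) (a := -(π / d)) (b := π / d) (c := d)
  rw [show d * -(π / d) = -π by field_simp, show d * (π / d) = π by field_simp] at h2
  rw [← h2, ← mul_assoc, ← pow_succ, ← intervalIntegral.integral_const_mul]
  congr 1; funext y
  unfold hAux
  rw [show u * ((d : ℂ) ^ (s + 1) * kerAux s (1 - d) (d * y)) =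
    ((d ^ (s + 1) : ℝ) : ℂ) * (u * kerAux s (1 - d) (d * y)) by push_cast; ring,
    Complex.re_ofReal_mul, abs_mul, abs_of_nonneg (show (0 : ℝ) ≤ d ^ (s + 1) by positivity)]

lemma hZero_int (s : ℕ) (hs : 1 ≤ s) (α : ℝ) :
    ∫ y, |(Complex.exp (α * Complex.I) * hZero s y).re| =
    ∫ t in (-(π / 2))..(π / 2),
      |Real.cos (-α + ((s : ℝ) + 1) * t)| * Real.cos t ^ (s - 1) := by
  have h := MeasureTheory.integral_image_eq_integral_abs_deriv_smul (s := Set.univ) (f := Real.arctan)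
    (f' := fun y => 1 / (1 + y ^ 2)) MeasurableSet.univ
    (fun x _ => (Real.hasDerivAt_arctan x).hasDerivWithinAt) Real.arctan_injective.injOn
    (fun t => |Real.cos (-α + ((s : ℝ) + 1) * t)| * Real.cos t ^ (s - 1))
  rw [Set.image_univ, Real.range_arctan, MeasureTheory.setIntegral_univ] at h
  rw [intervalIntegral.integral_of_le (by linarith [pi_pos]), MeasureTheory.integral_Ioc_eq_integral_Ioo, h]
  congr 1; funext y
  have hq : 0 < 1 + y ^ 2 := by positivity
  have hc := Real.cos_arctan_pos y
  have hcs : Real.cos (Real.arctan y) ^ 2 = 1 / (1 + y ^ 2) := Real.cos_sq_arctan y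
  have hyt : Real.sin (Real.arctan y) = y * Real.cos (Real.arctan y) := by
    rw [Real.sin_arctan, Real.cos_arctan]; ring
  rw [abs_of_pos (show 0 < 1 / (1 + y ^ 2) by positivity), ← hcs]
  set t := Real.arctan y
  have h1 : (Real.cos t : ℂ) * (1 + y * Complex.I) = Complex.exp (t * Complex.I) := by
    rw [Complex.exp_mul_I, ← Complex.ofReal_cos, ← Complex.ofReal_sin, hyt]
    push_cast; ring
  have hc' : (Real.cos t : ℂ) ≠ 0 := by exact_mod_cast hc.ne'
  have h2 : hZero s y = ((Real.cos t ^ (s + 1) : ℝ) : ℂ) * Complex.exp (-((s + 1) * t : ℝ) * Complex.I) := by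
    unfold hZero
    have : (1 + y * Complex.I : ℂ) = Complex.exp (t * Complex.I) * (Real.cos t : ℂ)⁻¹ := by
      rw [← h1]; field_simp
    rw [this, mul_pow, mul_inv, inv_pow, inv_inv, ← Complex.exp_nat_mul, ← Complex.exp_neg, mul_comm]
    push_cast
    congr 2
    ring
  rw [h2, mul_left_comm, Complex.re_ofReal_mul, ← Complex.exp_add, abs_mul,
    abs_of_pos (show 0 < Real.cos t ^ (s + 1) by positivity)]
  have h3 : (α * Complex.I + -(((s : ℝ) + 1) * t : ℝ) * Complex.I : ℂ) =
      ((-(-α + ((s : ℝ) + 1) * t) : ℝ) : ℂ) * Complex.I := by push_cast; ring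
  rw [h3, Complex.exp_ofReal_mul_I_re, Real.cos_neg, smul_eq_mul]
  obtain ⟨m, rfl⟩ : ∃ m, s = m + 1 := ⟨s - 1, by omega⟩
  simp only [Nat.add_sub_cancel]
  ring

lemma bdd_aux (s : ℕ) : BddAbove (Set.range fun α : ℝ => ∫ t in (-(π / 2))..(π / 2),
      |Real.cos (α + ((s : ℝ) + 1) * t)| * Real.cos t ^ (s - 1)) := by
  refine ⟨1 * |π / 2 - -(π / 2)|, ?_⟩
  rintro _ ⟨α, rfl⟩
  refine (le_abs_self _).trans ?_
  rw [← Real.norm_eq_abs]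
  apply intervalIntegral.norm_integral_le_of_norm_le_const
  intro t _
  rw [norm_mul, norm_pow, Real.norm_eq_abs, Real.norm_eq_abs, abs_abs]
  exact mul_le_one₀ (Real.abs_cos_le_one _) (by positivity)
    (pow_le_one₀ (abs_nonneg _) (Real.abs_cos_le_one _))

lemma disk_aux (s : ℕ) (hs : 1 ≤ s) (ε : ℝ) (hε : 0 < ε) :
    ∃ δ > 0, δ ≤ 1 / 2 ∧ ∀ d : ℝ, 0 < d → d < δ → ∀ ρ : ℝ, 1 < ρ → ∀ f : ℂ → ℂ,
      DifferentiableOn ℂ f (ball 0 ρ) → (∀ w ∈ ball (0 : ℂ) ρ, |(f w).re| ≤ 1) →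
      d ^ s * ‖iteratedDeriv s f ((1 - d : ℝ) : ℂ)‖ ≤ Kconst s + ε := by
  have hC : 0 < (s.factorial : ℝ) / π := by positivity
  have h1 := (dct_aux s hs).eventually (gt_mem_nhds (show 0 < ε / ((s.factorial : ℝ) / π) by positivity))
  obtain ⟨δ, hδ, h2⟩ := mem_nhdsGT_iff_exists_Ioo_subset.1 h1
  have hδ' : 0 < δ := hδ
  refine ⟨min δ (1 / 2), by positivity, min_le_right _ _, ?_⟩
  intro d hd hdδ ρ hρ f hf hre
  have hd2 : d ≤ 1 / 2 := (hdδ.trans_le (min_le_right _ _)).le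
  have h3 : ∫ y, ‖indAux s d y - hZero s y‖ < ε / ((s.factorial : ℝ) / π) :=
    h2 ⟨hd, hdδ.trans_le (min_le_left _ _)⟩
  obtain ⟨α, hα⟩ := bound_aux ρ hρ (1 - d) (by linarith) (by linarith) s hs f hf hre
  set u := Complex.exp (α * Complex.I) with hu
  have hnu : ‖u‖ = 1 := Complex.norm_exp_ofReal_mul_I α
  have hiA := indAux_integrable s hs d hd hd2
  have hiZ := hZero_integrable s hs
  have h4 : ∫ y, |(u * indAux s d y).re| ≤
      (∫ y, |(u * hZero s y).re|) + ∫ y, ‖indAux s d y - hZero s y‖ := by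
    have i1 : MeasureTheory.Integrable (fun y => |(u * hZero s y).re|) :=
      (hiZ.const_mul u).re.abs
    have i2 : MeasureTheory.Integrable (fun y => ‖indAux s d y - hZero s y‖) :=
      (hiA.sub hiZ).norm
    have i3 : MeasureTheory.Integrable (fun y => |(u * indAux s d y).re|) :=
      (hiA.const_mul u).re.abs
    rw [← MeasureTheory.integral_add i1 i2]
    apply MeasureTheory.integral_mono i3 (i1.add i2)
    intro y
    have e : u * indAux s d y = u * hZero s y + u * (indAux s d y - hZero s y) := by ring
    change |(u * indAux s d y).re| ≤ |(u * hZero s y).re| + ‖indAux s d y - hZero s y‖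
    rw [e, Complex.add_re]
    refine (abs_add_le _ _).trans (add_le_add_right ?_ _)
    refine (Complex.abs_re_le_norm _).trans ?_
    rw [norm_mul, hnu, one_mul]
  have h5 : ∫ y, |(u * hZero s y).re| ≤ ⨆ α : ℝ, ∫ t in (-(π / 2))..(π / 2),
      |Real.cos (α + ((s : ℝ) + 1) * t)| * Real.cos t ^ (s - 1) := by
    rw [hu, hZero_int s hs α]
    exact le_ciSup (bdd_aux s) (-α)
  calc d ^ s * ‖iteratedDeriv s f ((1 - d : ℝ) : ℂ)‖
      ≤ d ^ s * (s.factorial / π * ∫ θ in (-π)..π, |(u * kerAux s (1 - d) θ).re|) :=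
        mul_le_mul_of_nonneg_left hα (by positivity)
    _ = s.factorial / π * ∫ y, |(u * indAux s d y).re| := by
        rw [← subst_aux s d hd u]; ring
    _ ≤ s.factorial / π * ((⨆ α : ℝ, ∫ t in (-(π / 2))..(π / 2),
      |Real.cos (α + ((s : ℝ) + 1) * t)| * Real.cos t ^ (s - 1)) + ε / ((s.factorial : ℝ) / π)) := by
        apply mul_le_mul_of_nonneg_left _ hC.le
        linarith
    _ = Kconst s + ε := by
        rw [mul_add, mul_div_cancel₀ _ hC.ne']; rfl

/-- Let `Ω ⊂ ℂ` be a domain and suppose `ζ ∈ ∂Ω` is touched by an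
interior disk `D = ball c R ⊆ Ω`. Then for every `s ≥ 1`, along the radius
`z_t = c + t(ζ - c)`, `limsup_{z→ζ} sup_{f ∈ ℜ(Ω)} |z-ζ|^s |f^{(s)}(z)| ≤ K_s`,
where `ℜ(Ω)` is the set of holomorphic functions on `Ω` with `sup_Ω |Re f| ≤ 1`:
for every `ε > 0` there is `δ > 0` such that for all `t ∈ (1-δ, 1)` and all
`f ∈ ℜ(Ω)`, `|z_t - ζ|^s |f^{(s)}(z_t)| ≤ K_s + ε`. -/
theorem limsup_derivative_holomorphic_interior_disk
    (Ω : Set ℂ) (hΩo : IsOpen Ω) (hΩc : IsConnected Ω)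
    (c ζ : ℂ) (R : ℝ) (hR : 0 < R)
    (hdisk : Metric.ball c R ⊆ Ω) (hζs : ζ ∈ Metric.sphere c R) (hζ : ζ ∈ frontier Ω)
    (s : ℕ) (hs : 1 ≤ s) (ε : ℝ) (hε : 0 < ε) :
    ∃ δ > 0, ∀ t : ℝ, 1 - δ < t → t < 1 →
      ∀ f : ℂ → ℂ, DifferentiableOn ℂ f Ω → (∀ w ∈ Ω, |(f w).re| ≤ 1) →
        dist (c + t • (ζ - c)) ζ ^ s * ‖iteratedDeriv s f (c + t • (ζ - c))‖ ≤
          Kconst s + ε := by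
  obtain ⟨δ, hδ, hδ2, H⟩ := disk_aux s hs ε hε
  refine ⟨δ, hδ, ?_⟩
  intro t ht1 ht2 f hf hre
  have ht0 : 0 < t := by linarith
  have hna : ‖ζ - c‖ = R := by simpa [dist_eq_norm] using hζs
  set a := ζ - c with ha
  have hdist : dist (c + t • a) ζ = (1 - t) * R := by
    rw [dist_eq_norm]
    have : c + t • a - ζ = -(((1 - t : ℝ) : ℂ) * a) := by
      rw [Complex.real_smul, ha]; push_cast; ring
    rw [this, norm_neg, norm_mul, hna, Complex.norm_real, Real.norm_eq_abs,
      abs_of_pos (by linarith)]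
  rw [hdist]
  have key : ∀ r : ℝ, t < r → r < 1 →
      ((r - t) * R) ^ s * ‖iteratedDeriv s f (c + t • a)‖ ≤ Kconst s + ε := by
    intro r hr1 hr2
    have hr0 : 0 < r := by linarith
    have htr : t / r < 1 := (div_lt_one hr0).2 hr1
    have htr2 : t ≤ t / r := by
      rw [le_div_iff₀ hr0]; nlinarith
    have hmem : ∀ u ∈ ball (0 : ℂ) (1 / r), c + (r * a) * u ∈ Ω := by
      intro u hu
      apply hdisk
      have hu' : ‖u‖ < 1 / r := by simpa using hu
      rw [lt_div_iff₀ hr0] at hu'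
      rw [mem_ball, dist_eq_norm, add_sub_cancel_left, norm_mul, norm_mul, hna, Complex.norm_real,
        Real.norm_eq_abs, abs_of_pos hr0]
      nlinarith
    have h := H (1 - t / r) (by linarith) (by linarith) (1 / r) ((one_lt_div hr0).2 hr2)
      (fun u => f (c + (r * a) * u))
      (hf.comp (by fun_prop) hmem) (fun w hw => hre _ (hmem w hw))
    rw [iteratedDeriv_affine_aux] at h
    have hr' : (r : ℂ) ≠ 0 := by exact_mod_cast hr0.ne'
    have e : c + (r * a) * ((1 - (1 - t / r) : ℝ) : ℂ) = c + t • a := by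
      rw [Complex.real_smul]; push_cast; field_simp; ring
    beta_reduce at h
    rw [e, norm_mul, norm_pow, norm_mul, hna, Complex.norm_real, Real.norm_eq_abs,
      abs_of_pos hr0, ← mul_assoc, ← mul_pow] at h
    have e2 : (1 - t / r) * (r * R) = (r - t) * R := by field_simp
    rwa [e2] at h
  have hcont : Continuous (fun r : ℝ => ((r - t) * R) ^ s * ‖iteratedDeriv s f (c + t • a)‖) := by
    fun_prop
  refine le_of_tendsto ((hcont.tendsto 1).mono_left (nhdsWithin_le_nhds (s := Set.Iio 1))) ?_
  filter_upwards [Ioo_mem_nhdsLT ht2] with r hr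
  exact key r hr.1 hr.2
end
end
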